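/- arXiv:1710.08353 — 10 statements merged into one kernel-verified Lean document; each statement's English description precedes it below -/
import Mathlib

section
/- Let k ≥ 2 be a natural number and let S be a k-automatic subset of ℕ. Then S forms an asymptotic additive basis for ℕ (i.e., there exists j such that every sufficiently large natural number is a sum of at most j elements of S) if and only if both of the following hold: (1) S is not sparse; (2) gcd(S) = 1. -/
/-- `n` can be written as a sum of at least one and at most `N` elements of `S`
(repetitions allowed). -/
def SumOfAtMost (S : Set ℕ) (N n : ℕ) : Prop :=
  ∃ l : List ℕ, l ≠ [] ∧ l.length ≤ N ∧ (∀ x ∈ l, x ∈ S) ∧ l.sum = n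

/-- `π_S(x) = #{n ≤ x : n ∈ S}`. -/
noncomputable def piCount (S : Set ℕ) (x : ℕ) : ℕ :=
  Set.ncard {n | n ∈ S ∧ n ≤ x}

/-- `S` is sparse if `π_S(x) = O((log x)^d)` for some natural number `d`. -/
def IsSparse (S : Set ℕ) : Prop :=
  ∃ d : ℕ, ∃ C : ℝ, 0 < C ∧ ∃ x0 : ℕ, ∀ x : ℕ, x0 ≤ x →
    (piCount S x : ℝ) ≤ C * (Real.log x) ^ d

/-- `S ⊆ ℕ` is `k`-automatic: some DFA over the alphabet `{0, …, k-1}` accepts exactly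
the base-`k` expansions (least-significant digit first, without leading zeros)
of the elements of `S`. -/
def IsKAutomatic (k : ℕ) (S : Set ℕ) : Prop :=
  ∃ (m : ℕ) (M : DFA (Fin k) (Fin m)),
    ∀ w : List (Fin k), w ∈ M.accepts ↔ ∃ s ∈ S, w.map Fin.val = Nat.digits k s

namespace AutoBasis

theorem som_add {S : Set ℕ} {a b x y : ℕ} (h1 : SumOfAtMost S a x) (h2 : SumOfAtMost S b y) :
    SumOfAtMost S (a + b) (x + y) := by
  obtain ⟨l1, f1, f2, h3, h4⟩ := h1
  obtain ⟨l2, g1, g2, g3, g4⟩ := h2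
  refine ⟨l1 ++ l2, by simp [f1], by simp; omega, ?_, by simp [h4, g4]⟩
  intro z hz
  rcases List.mem_append.1 hz with h | h
  · exact h3 z h
  · exact g3 z h

theorem som_mono {S : Set ℕ} {a b x : ℕ} (h1 : SumOfAtMost S a x) (h : a ≤ b) :
    SumOfAtMost S b x := by
  obtain ⟨l1, h1, h2, h3, h4⟩ := h1
  exact ⟨l1, h1, h2.trans h, h3, h4⟩

/-! ### Forward direction -/

theorem sum_bound {S : Set ℕ} {j M : ℕ} (h : ∀ n : ℕ, M ≤ n → SumOfAtMost S j n) (x : ℕ) :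
    x + 1 - M ≤ (piCount S x + 1) ^ j := by
  classical
  letI : AddMonoid (Finset ℕ) := Finset.addMonoid
  have hfin : {n | n ∈ S ∧ n ≤ x}.Finite := (Set.finite_Iic x).subset (fun n hn => hn.2)
  let A : Finset ℕ := insert 0 hfin.toFinset
  have hA : A.card ≤ piCount S x + 1 := by
    refine (Finset.card_insert_le _ _).trans ?_
    rw [piCount, Set.ncard_eq_toFinset_card _ hfin]
  have hl : ∀ l : List ℕ, (∀ y ∈ l, y ∈ A) → l.sum ∈ l.length • A := by
    intro l
    induction l with
    | nil => intro _; simp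
    | cons a l ih =>
      intro hl
      rw [List.length_cons, succ_nsmul', List.sum_cons]
      exact Finset.add_mem_add (hl a (by simp)) (ih fun y hy => hl y (by simp [hy]))
  have hsub : Finset.Icc M x ⊆ j • A := by
    intro n hn
    rw [Finset.mem_Icc] at hn
    obtain ⟨l, -, h2, h3, h4⟩ := h n hn.1
    have := hl l (fun y hy => by
      have : y ≤ l.sum := List.le_sum_of_mem hy
      simp only [A, Finset.mem_insert, Set.Finite.mem_toFinset]
      exact Or.inr ⟨h3 y hy, by omega⟩)
    rw [h4] at this
    exact Finset.nsmul_subset_nsmul_right (by simp [A]) h2 this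
  calc x + 1 - M = (Finset.Icc M x).card := by simp
    _ ≤ (j • A).card := Finset.card_le_card hsub
    _ ≤ A.card ^ j := Finset.card_nsmul_le
    _ ≤ _ := Nat.pow_le_pow_left hA j

theorem not_sparse_of_basis {S : Set ℕ} {j M : ℕ} (h : ∀ n : ℕ, M ≤ n → SumOfAtMost S j n) :
    ¬ IsSparse S := by
  rintro ⟨d, C, hC, x0, hx⟩
  have hlit := (Real.isLittleO_pow_log_id_atTop (n := d * j)).comp_tendsto
    (tendsto_natCast_atTop_atTop (R := ℝ))
  have hpos : (0 : ℝ) < 1 / (2 * (C + 1) ^ j) := by positivity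
  have hev := hlit.bound hpos
  obtain ⟨N, hN⟩ := Filter.eventually_atTop.1 hev
  let x := max (max N x0) (2 * M + 3)
  have h1 := hN x (by simp [x])
  have h2 := hx x (by simp [x])
  have h3 := sum_bound h x
  have hxM : 2 * M + 3 ≤ x := by simp [x]
  have hlog : 1 ≤ Real.log x := by
    rw [Real.le_log_iff_exp_le (by exact_mod_cast (by omega : 0 < x))]
    have : (3 : ℝ) ≤ x := by exact_mod_cast (by omega : 3 ≤ x)
    linarith [Real.exp_one_lt_d9]
  have h3' : (x : ℝ) + 1 - M ≤ ((piCount S x : ℝ) + 1) ^ j := by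
    have : x + 1 ≤ (piCount S x + 1) ^ j + M := by omega
    have : (x : ℝ) + 1 ≤ ((piCount S x : ℝ) + 1) ^ j + M := by exact_mod_cast this
    linarith
  have h4 : ((piCount S x : ℝ) + 1) ^ j ≤ (C + 1) ^ j * (Real.log x) ^ (d * j) := by
    rw [pow_mul, ← mul_pow]
    gcongr
    have : 1 ≤ Real.log x ^ d := one_le_pow₀ hlog
    nlinarith
  simp only [Function.comp, id, Real.norm_eq_abs] at h1
  rw [abs_of_nonneg (by positivity), abs_of_nonneg (by positivity)] at h1
  have h5 : (C + 1) ^ j * (Real.log x) ^ (d * j) ≤ x / 2 := by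
    calc _ ≤ (C + 1) ^ j * (1 / (2 * (C + 1) ^ j) * x) := by gcongr
      _ = x / 2 := by field_simp
  have : (2 * M + 3 : ℝ) ≤ x := by exact_mod_cast hxM
  linarith

/-! ### Structure of non-sparse automatic sets -/

section dfa

variable {k m : ℕ} (M : DFA (Fin k) (Fin m))

def lastVisit (w : List (Fin k)) (q : Fin m) : ℕ :=
  Nat.findGreatest (fun t => M.eval (w.take t) = q) w.length

theorem le_lastVisit (w : List (Fin k)) (t : ℕ) (ht : t ≤ w.length) :
    t ≤ lastVisit M w (M.eval (w.take t)) :=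
  Nat.le_findGreatest ht rfl

theorem lastVisit_spec (w : List (Fin k)) (t : ℕ) (ht : t ≤ w.length) :
    M.eval (w.take (lastVisit M w (M.eval (w.take t)))) = M.eval (w.take t) :=
  Nat.findGreatest_spec (P := fun s => M.eval (w.take s) = M.eval (w.take t)) ht rfl

theorem lastVisit_le (w : List (Fin k)) (q : Fin m) : lastVisit M w q ≤ w.length :=
  Nat.findGreatest_le _

/-- The language contains `u{x,y}*v` with `x ≠ y` of the same length. -/
def HasFork : Prop := ∃ (q : Fin m) (u x y v : List (Fin k)), x ≠ y ∧ x.length = y.length ∧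
  M.eval u = q ∧ M.evalFrom q x = q ∧ M.evalFrom q y = q ∧ M.evalFrom q v ∈ M.accept

theorem evalFrom_segment (w : List (Fin k)) (t L : ℕ) (h : t ≤ L) :
    M.evalFrom (M.eval (w.take t)) ((w.take L).drop t) = M.eval (w.take L) := by
  unfold DFA.eval
  rw [← DFA.evalFrom_of_append]
  congr 1
  conv_rhs => rw [← List.take_append_drop t (w.take L)]
  rw [List.take_take, min_eq_left h]

theorem word_ext (hM : ¬ HasFork M) (w w' : List (Fin k)) (hw : w ∈ M.accepts)
    (hl : ∀ q, lastVisit M w q = lastVisit M w' q)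
    (ha : ∀ q, w[lastVisit M w q]? = w'[lastVisit M w' q]?) : w = w' := by
  have key : ∀ t, w.take t = w'.take t := by
    intro t
    induction t with
    | zero => simp
    | succ t ih =>
      rw [List.take_add_one, List.take_add_one, ih]
      congr 2
      have hlen := congrArg List.length ih
      simp only [List.length_take] at hlen
      by_cases ht : t ≤ w.length ∧ t ≤ w'.length
      · obtain ⟨ht, ht'⟩ := ht
        have e1 := le_lastVisit M w t ht
        have e1' := le_lastVisit M w' t ht'
        have e2 := lastVisit_spec M w t ht
        have e2' := lastVisit_spec M w' t ht'
        rw [← ih] at e1' e2'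
        have hq := hl (M.eval (w.take t))
        have haq := ha (M.eval (w.take t))
        have hle := lastVisit_le M w (M.eval (w.take t))
        have hle' := lastVisit_le M w' (M.eval (w.take t))
        rw [← hq] at e2' haq hle' e1'
        generalize hL : lastVisit M w (M.eval (w.take t)) = L at *
        rcases eq_or_lt_of_le e1 with h | h
        · rw [h]; exact haq
        · have hxy : (w.take L).drop t = (w'.take L).drop t := by
            by_contra hne
            apply hM
            refine ⟨M.eval (w.take t), w.take t, (w.take L).drop t, (w'.take L).drop t, w.drop L,
              hne, ?_, rfl, ?_, ?_, ?_⟩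
            · simp; omega
            · rw [evalFrom_segment M w t L e1, e2]
            · have := evalFrom_segment M w' t L e1
              rw [← ih] at this
              rw [this, e2']
            · rw [← e2]
              unfold DFA.eval
              rw [← DFA.evalFrom_of_append, List.take_append_drop]
              exact hw
          have := congrArg (fun l => l[0]?) hxy
          simpa [List.getElem?_take, h] using this
      · rw [List.getElem?_eq_none (by omega), List.getElem?_eq_none (by omega)]
  have h1 := key (max w.length w'.length)
  rwa [List.take_of_length_le (le_max_left _ _), List.take_of_length_le (le_max_right _ _)] at h1

end dfa

theorem exists_word {k : ℕ} (hk : 2 ≤ k) (s : ℕ) :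
    ∃ w : List (Fin k), w.map Fin.val = Nat.digits k s := by
  have : NeZero k := ⟨by omega⟩
  refine ⟨(Nat.digits k s).map (Fin.ofNat k), ?_⟩
  rw [List.map_map]
  conv_rhs => rw [← List.map_id (Nat.digits k s)]
  apply List.map_congr_left
  intro a ha
  simp [Nat.mod_eq_of_lt (Nat.digits_lt_base (by omega) ha)]

theorem piCount_le {k m : ℕ} (hk : 2 ≤ k) {S : Set ℕ} (M : DFA (Fin k) (Fin m))
    (hS : ∀ w : List (Fin k), w ∈ M.accepts ↔ ∃ s ∈ S, w.map Fin.val = Nat.digits k s)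
    (hM : ¬ HasFork M) (x : ℕ) :
    piCount S x ≤ ((Nat.log 2 x + 2) * (k + 1)) ^ m := by
  classical
  choose W hW using fun s => exists_word hk s
  set n := Nat.log 2 x + 1 with hn
  have hlen : ∀ s ≤ x, (W s).length ≤ n := by
    intro s hs
    have : (W s).length = (Nat.digits k s).length := by rw [← hW, List.length_map]
    rw [this]
    rcases Nat.eq_zero_or_pos s with rfl | h0
    · simp
    rw [Nat.length_digits k s (by omega) (by omega)]
    have := (Nat.log_anti_left (n := s) (by omega) hk).trans (Nat.log_mono_right (b := 2) hs)
    omega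
  let F : ℕ → Fin m → Fin (n + 1) × Option (Fin k) := fun s q =>
    (Fin.ofNat (n + 1) (lastVisit M (W s) q), (W s)[lastVisit M (W s) q]?)
  have hinj : Set.InjOn F {s | s ∈ S ∧ s ≤ x} := by
    intro s hs s' hs' hF
    have : W s = W s' := by
      have hl : ∀ q, lastVisit M (W s) q = lastVisit M (W s') q := by
        intro q
        have := congrArg (fun z => (z.1 : ℕ)) (congrFun hF q)
        simp only [F, Fin.val_ofNat] at this
        rwa [Nat.mod_eq_of_lt, Nat.mod_eq_of_lt] at this
        · have := lastVisit_le M (W s') q; have := hlen s' hs'.2; omega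
        · have := lastVisit_le M (W s) q; have := hlen s hs.2; omega
      apply word_ext M hM _ _ ((hS _).2 ⟨s, hs.1, hW s⟩) hl
      intro q
      exact congrArg (fun z => z.2) (congrFun hF q)
    apply Nat.digits_inj_iff (b := k) |>.1
    rw [← hW, ← hW, this]
  have := Set.ncard_le_ncard_of_injOn F (t := Set.univ) (fun _ _ => Set.mem_univ _) hinj
    Set.finite_univ
  rw [Set.ncard_univ, Nat.card_eq_fintype_card] at this
  simpa [piCount, hn] using this

theorem fork_of_not_sparse {k m : ℕ} (hk : 2 ≤ k) {S : Set ℕ} (M : DFA (Fin k) (Fin m))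
    (hS : ∀ w : List (Fin k), w ∈ M.accepts ↔ ∃ s ∈ S, w.map Fin.val = Nat.digits k s)
    (hsp : ¬ IsSparse S) : HasFork M := by
  by_contra hM
  apply hsp
  refine ⟨m, (4 * (k + 1)) ^ m, by positivity, 3, fun x hx => ?_⟩
  have hx3 : (3 : ℝ) ≤ x := by exact_mod_cast hx
  have hlog : 1 ≤ Real.log x := by
    rw [Real.le_log_iff_exp_le (by linarith)]
    linarith [Real.exp_one_lt_d9]
  have h1 : (piCount S x : ℝ) ≤ (((Nat.log 2 x : ℝ) + 2) * (k + 1)) ^ m := by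
    exact_mod_cast piCount_le hk M hS hM x
  refine h1.trans ?_
  rw [← mul_pow]
  have h2 : (Nat.log 2 x : ℝ) ≤ 2 * Real.log x := by
    have h3 : (2 : ℝ) ^ (Nat.log 2 x) ≤ x := by
      exact_mod_cast Nat.pow_log_le_self 2 (by omega)
    have h4 := Real.log_le_log (by positivity) h3
    rw [Real.log_pow] at h4
    have := Real.log_two_gt_d9
    have h5 : (0 : ℝ) ≤ Nat.log 2 x := by positivity
    nlinarith
  have h6 : (Nat.log 2 x : ℝ) + 2 ≤ 4 * Real.log x := by linarith
  calc _ ≤ (4 * Real.log x * (k + 1)) ^ m := by gcongr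
    _ = _ := by ring

/-! ### Cantor-like subsets -/

def beta (K : ℕ) : List Bool → ℕ
  | [] => 0
  | b :: l => b.toNat + K * beta K l

theorem fork_cantor_aux {k m : ℕ} (hk : 2 ≤ k) {S : Set ℕ} (M : DFA (Fin k) (Fin m))
    (hS : ∀ w : List (Fin k), w ∈ M.accepts ↔ ∃ s ∈ S, w.map Fin.val = Nat.digits k s)
    (q : Fin m) (u x y v : List (Fin k))
    (hlt : Nat.ofDigits k (x.map Fin.val) < Nat.ofDigits k (y.map Fin.val))
    (hlen : x.length = y.length)
    (hu : M.eval u = q) (hx : M.evalFrom q x = q) (hy : M.evalFrom q y = q)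
    (hv : M.evalFrom q v ∈ M.accept) :
    ∃ (K c C : ℕ) (P : ℕ → ℕ), 2 ≤ K ∧ 0 < c ∧ (∀ n, P n ≤ C * K ^ n) ∧
      ∀ bs : List Bool, P bs.length + c * beta K bs ∈ S := by
  have hmem : ∀ w ∈ M.accepts, Nat.ofDigits k (w.map Fin.val) ∈ S := by
    intro w hw
    obtain ⟨s, hs, h⟩ := (hS w).1 hw
    rwa [h, Nat.ofDigits_digits]
  let word : List Bool → List (Fin k) := fun bs => bs.flatMap (fun b => if b then y else x)
  have hloop : ∀ bs, M.evalFrom q (word bs) = q := by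
    intro bs
    induction bs with
    | nil => simp [word]
    | cons b bs ih =>
      simp only [word, List.flatMap_cons] at ih ⊢
      rw [DFA.evalFrom_of_append]
      cases b <;> simp [hx, hy, ih]
  have hacc : ∀ bs, u ++ (word bs ++ v) ∈ M.accepts := by
    intro bs
    rw [DFA.mem_accepts]
    unfold DFA.eval at hu ⊢
    rw [DFA.evalFrom_of_append, DFA.evalFrom_of_append, hu, hloop]
    exact hv
  set X := Nat.ofDigits k (x.map Fin.val) with hX
  set Y := Nat.ofDigits k (y.map Fin.val) with hY
  set V := Nat.ofDigits k (v.map Fin.val) with hV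
  set U := Nat.ofDigits k (u.map Fin.val) with hU
  set K := k ^ x.length with hK
  have hxl : x.length ≠ 0 := by
    intro h
    have h2 : y.length = 0 := by omega
    rw [List.length_eq_zero_iff] at h h2
    simp [hX, hY, h, h2] at hlt
  have hK2 : 2 ≤ K := hk.trans (Nat.le_self_pow hxl k)
  let Q : ℕ → ℕ := fun n => Nat.rec V (fun _ r => X + K * r) n
  have hQs : ∀ n, Q (n + 1) = X + K * Q n := fun n => rfl
  have hQb : ∀ n, Q n + X ≤ (V + X) * K ^ n := by
    intro n
    induction n with
    | zero => simp [Q]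
    | succ n ih =>
      rw [hQs, pow_succ]
      nlinarith [Nat.mul_le_mul_right K ih, Nat.mul_le_mul_left X hK2]
  have hval : ∀ bs, Nat.ofDigits k ((word bs ++ v).map Fin.val)
      = Q bs.length + (Y - X) * beta K bs := by
    intro bs
    induction bs with
    | nil => simp [word, Q, beta, hV]
    | cons b bs ih =>
      have e : word (b :: bs) ++ v = (if b then y else x) ++ (word bs ++ v) := by
        simp [word]
      rw [e, List.map_append, Nat.ofDigits_append, ih, List.length_cons, hQs, beta]
      obtain ⟨D, hD⟩ := Nat.exists_eq_add_of_le hlt.le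
      rw [hD, Nat.add_sub_cancel_left]
      cases b
      · simp only [Bool.false_eq_true, if_false, List.length_map, ← hK, ← hX, Bool.toNat_false]
        ring
      · simp only [if_true, List.length_map, ← hlen, ← hK, ← hY, Bool.toNat_true, hD]
        ring
  refine ⟨K, k ^ u.length * (Y - X), U + k ^ u.length * (V + X),
    fun n => U + k ^ u.length * Q n, hK2, ?_, ?_, ?_⟩
  · exact Nat.mul_pos (by positivity) (by omega)
  · intro n
    have h1 : 1 ≤ K ^ n := Nat.one_le_pow _ _ (by omega)
    have h2 : Q n ≤ (V + X) * K ^ n := by have := hQb n; omega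
    have h3 := Nat.mul_le_mul_left (k ^ u.length) h2
    have h4 := Nat.mul_le_mul_left U h1
    simp only
    nlinarith
  · intro bs
    have := hmem _ (hacc bs)
    rw [List.map_append, Nat.ofDigits_append, hval, List.length_map, ← hU] at this
    convert this using 1
    ring

theorem fork_cantor {k m : ℕ} (hk : 2 ≤ k) {S : Set ℕ} (M : DFA (Fin k) (Fin m))
    (hS : ∀ w : List (Fin k), w ∈ M.accepts ↔ ∃ s ∈ S, w.map Fin.val = Nat.digits k s)
    (hM : HasFork M) :
    ∃ (K c C : ℕ) (P : ℕ → ℕ), 2 ≤ K ∧ 0 < c ∧ (∀ n, P n ≤ C * K ^ n) ∧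
      ∀ bs : List Bool, P bs.length + c * beta K bs ∈ S := by
  obtain ⟨q, u, x, y, v, hne, hlen, hu, hx, hy, hv⟩ := hM
  rcases lt_trichotomy (Nat.ofDigits k (x.map Fin.val)) (Nat.ofDigits k (y.map Fin.val))
    with h | h | h
  · exact fork_cantor_aux hk M hS q u x y v h hlen hu hx hy hv
  · exfalso
    apply hne
    have := Nat.ofDigits_inj_of_len_eq (b := k) (by omega) (by simpa using hlen)
      (by simp) (by simp) h
    exact List.map_injective_iff.2 Fin.val_injective this
  · exact fork_cantor_aux hk M hS q u y x v h hlen.symm hu hy hx hv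

theorem digit_split {K : ℕ} (hK : 2 ≤ K) : ∀ n m, m < K ^ n → ∃ f : ℕ → List Bool,
    (∀ i, (f i).length = n) ∧ ∑ i ∈ Finset.range (K - 1), beta K (f i) = m := by
  intro n
  induction n with
  | zero =>
    intro m hm
    refine ⟨fun _ => [], by simp, ?_⟩
    simp at hm
    simp [beta, hm]
  | succ n ih =>
    intro m hm
    obtain ⟨f, hf, hs⟩ := ih (m / K) (by
      rw [Nat.div_lt_iff_lt_mul (by omega)]; rwa [pow_succ] at hm)
    refine ⟨fun i => decide (i < m % K) :: f i, by simp [hf], ?_⟩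
    simp only [beta, Finset.sum_add_distrib, ← Finset.mul_sum, hs]
    have hmod : m % K < K := Nat.mod_lt _ (by omega)
    have : ∑ i ∈ Finset.range (K - 1), (decide (i < m % K)).toNat = m % K := by
      have e : ∀ i, (decide (i < m % K)).toNat = if i < m % K then 1 else 0 := by
        intro i; split_ifs with h <;> simp [h]
      simp only [e]
      rw [← Finset.card_filter]
      have : Finset.filter (fun i => i < m % K) (Finset.range (K - 1)) = Finset.range (m % K) := by
        ext i; simp; omega
      rw [this, Finset.card_range]
    rw [this, Nat.mod_add_div]

theorem block {S : Set ℕ} {K c : ℕ} {P : ℕ → ℕ} (hK : 2 ≤ K)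
    (h : ∀ bs : List Bool, P bs.length + c * beta K bs ∈ S) (n m : ℕ) (hm : m < K ^ n) :
    SumOfAtMost S (K - 1) ((K - 1) * P n + c * m) := by
  obtain ⟨f, hf, hs⟩ := digit_split hK n m hm
  refine ⟨(List.range (K - 1)).map (fun i => P n + c * beta K (f i)), ?_, by simp, ?_, ?_⟩
  · simp; omega
  · intro z hz
    obtain ⟨i, -, rfl⟩ := List.mem_map.1 hz
    have := h (f i)
    rwa [hf] at this
  · have : ((List.range (K - 1)).map (fun i => P n + c * beta K (f i))).sum
        = ∑ i ∈ Finset.range (K - 1), (P n + c * beta K (f i)) := rfl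
    rw [this, Finset.sum_add_distrib, ← Finset.mul_sum, hs]
    simp

theorem blocks {S : Set ℕ} {R B c J : ℕ}
    (h : ∀ m ≤ J, SumOfAtMost S R (B + c * m)) (r : ℕ) :
    ∀ m ≤ (r + 1) * J, SumOfAtMost S ((r + 1) * R) ((r + 1) * B + c * m) := by
  induction r with
  | zero => simpa using h
  | succ r ih =>
    intro m hm
    have hm' : m ≤ (r + 1) * J + J := by linarith
    have h1 := ih (m - min m J) (by omega)
    have h2 := h (min m J) (by omega)
    have h3 := som_add h1 h2
    have e : m = (m - min m J) + min m J := by omega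
    convert h3 using 1
    · ring
    · conv_lhs => rw [e]
      ring

theorem syndetic {S : Set ℕ} {K c C : ℕ} {P : ℕ → ℕ} (hK : 2 ≤ K) (hc : 0 < c)
    (hP : ∀ n, P n ≤ C * K ^ n)
    (h : ∀ bs : List Bool, P bs.length + c * beta K bs ∈ S) :
    ∃ R N0, ∀ N ≥ N0, ∃ s e, N = s + e ∧ e < c ∧ SumOfAtMost S R s := by
  let C' := (K - 1) * C
  let T := 2 * C' * (C' + c) + 1
  refine ⟨(2 * T * K + 1) * (K - 1), T * K, fun N hN => ?_⟩
  have hT : 0 < T := Nat.succ_pos _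
  -- choose the level
  obtain ⟨n, hn1, hn2, hn3⟩ : ∃ n, 1 ≤ n ∧ T * K ^ n ≤ N ∧ N < T * K ^ (n + 1) := by
    have hq : N / T ≠ 0 := by
      have : K ≤ N / T := (Nat.le_div_iff_mul_le hT).2 (by linarith)
      omega
    refine ⟨Nat.log K (N / T), ?_, ?_, ?_⟩
    · apply Nat.le_log_of_pow_le (by omega)
      rw [pow_one]
      exact (Nat.le_div_iff_mul_le hT).2 (by linarith)
    · have := Nat.pow_log_le_self K hq
      have := (Nat.le_div_iff_mul_le hT).1 this
      linarith
    · have := Nat.lt_pow_succ_log_self (b := K) (by omega) (N / T)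
      rw [Nat.div_lt_iff_lt_mul hT] at this
      rw [mul_comm]; exact this
  obtain ⟨J, hJ⟩ : ∃ J, K ^ n = J + 1 :=
    ⟨K ^ n - 1, by have := Nat.one_le_pow n K (by omega); omega⟩
  have hKn : 2 ≤ K ^ n := hK.trans (Nat.le_self_pow (by omega) K)
  have hJ1 : 1 ≤ J := by omega
  have hJ2 : K ^ n ≤ 2 * J := by omega
  set B := (K - 1) * P n with hB
  have hBC : B ≤ C' * K ^ n := by
    have := Nat.mul_le_mul_left (K - 1) (hP n)
    simp only [C', hB]; linarith
  have hbl : ∀ m ≤ J, SumOfAtMost S (K - 1) (B + c * m) := fun m hm =>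
    block hK h n m (by omega)
  set U := B + c * J with hU
  have hUJ : J ≤ U := by nlinarith
  have hU0 : 0 < U := by omega
  set r := N / U with hr
  have hr1 : r * U ≤ N := Nat.div_mul_le_self N U
  have hr2 : N < (r + 1) * U := by
    rw [← Nat.div_lt_iff_lt_mul hU0]; omega
  have hUK : U ≤ (C' + c) * K ^ n := by
    have : c * J ≤ c * K ^ n := Nat.mul_le_mul_left c (by omega)
    rw [hU]; linarith
  have hr3 : 2 * C' ≤ r := by
    rw [hr, Nat.le_div_iff_mul_le hU0]
    calc 2 * C' * U ≤ 2 * C' * ((C' + c) * K ^ n) := Nat.mul_le_mul_left _ hUK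
      _ ≤ T * K ^ n := by simp only [T]; nlinarith
      _ ≤ N := hn2
  have hr4 : r ≤ 2 * T * K := by
    rw [hr]
    apply Nat.div_le_of_le_mul
    have h1 : T * K ^ (n + 1) ≤ T * K * (2 * U) := by
      rw [pow_succ, mul_comm (K ^ n) K, ← mul_assoc]
      exact Nat.mul_le_mul_left _ (by omega)
    linarith
  have hrB : (r + 1) * B ≤ N := by
    have h1 : B ≤ r * (c * J) := by
      calc B ≤ C' * K ^ n := hBC
        _ ≤ C' * (2 * J) := Nat.mul_le_mul_left _ hJ2
        _ = 2 * C' * J := by ring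
        _ ≤ r * J := Nat.mul_le_mul_right _ hr3
        _ ≤ r * (c * J) := Nat.mul_le_mul_left _ (Nat.le_mul_of_pos_left _ hc)
    rw [hU] at hr1
    linarith
  obtain ⟨Z, hZ⟩ := Nat.exists_eq_add_of_le hrB
  have hZ2 : Z / c ≤ (r + 1) * J := by
    apply Nat.div_le_of_le_mul
    rw [hU] at hr2
    linarith
  refine ⟨(r + 1) * B + c * (Z / c), Z % c, ?_, Nat.mod_lt _ hc, ?_⟩
  · have := Nat.div_add_mod Z c
    omega
  · exact som_mono (blocks hbl r _ hZ2) (Nat.mul_le_mul_right _ (by omega))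

theorem basis_of_syndetic {S : Set ℕ} (hg : ∀ d : ℕ, (∀ n ∈ S, d ∣ n) → d = 1) {c R N0 : ℕ}
    (h : ∀ N ≥ N0, ∃ s e, N = s + e ∧ e < c ∧ SumOfAtMost S R s) :
    ∃ j M : ℕ, ∀ n : ℕ, M ≤ n → SumOfAtMost S j n := by
  obtain ⟨L, hL⟩ := Nat.exists_mem_closure_of_ge S
  have hgcd : Nat.setGcd S = 1 := hg _ fun n hn => Nat.setGcd_dvd_of_mem hn
  have hrep : ∀ m, L + 1 ≤ m → ∃ j, SumOfAtMost S j m := by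
    intro m hm
    obtain ⟨l, hl, hs⟩ := AddSubmonoid.exists_list_of_mem_closure
      (hL m (by omega) (by rw [hgcd]; exact one_dvd m))
    refine ⟨l.length, l, ?_, le_rfl, hl, hs⟩
    rintro rfl
    simp at hs
    omega
  choose! f hf using hrep
  refine ⟨R + ∑ e ∈ Finset.range c, f (L + 1 + e), N0 + (L + 1), fun n hn => ?_⟩
  obtain ⟨s, e, h1, h2, h3⟩ := h (n - (L + 1)) (by omega)
  have h4 := hf (L + 1 + e) (by omega)
  have h5 : f (L + 1 + e) ≤ ∑ e ∈ Finset.range c, f (L + 1 + e) :=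
    Finset.single_le_sum (f := fun e => f (L + 1 + e)) (fun _ _ => Nat.zero_le _)
      (Finset.mem_range.2 h2)
  have h6 := som_add h3 (som_mono h4 h5)
  have e : n = s + (L + 1 + e) := by omega
  rwa [← e] at h6

end AutoBasis

/-- A `k`-automatic set `S` is an asymptotic additive basis for `ℕ` if and only if
`S` is not sparse and `gcd(S) = 1`. -/
theorem automatic_asymptotic_additive_basis_iff
    (k : ℕ) (hk : 2 ≤ k) (S : Set ℕ) (hS : IsKAutomatic k S) :
    (∃ j M : ℕ, ∀ n : ℕ, M ≤ n → SumOfAtMost S j n) ↔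
      (¬ IsSparse S ∧ ∀ d : ℕ, (∀ n ∈ S, d ∣ n) → d = 1) := by
  constructor
  · rintro ⟨j, M, h⟩
    refine ⟨AutoBasis.not_sparse_of_basis h, fun d hd => ?_⟩
    have hdv : ∀ n, M ≤ n → d ∣ n := by
      intro n hn
      obtain ⟨l, -, -, h3, h4⟩ := h n hn
      rw [← h4]
      exact List.dvd_sum fun x hx => hd x (h3 x hx)
    have h1 := hdv M le_rfl
    have h2 := hdv (M + 1) (by omega)
    exact Nat.dvd_one.1 ((Nat.dvd_add_right h1).1 h2)
  · rintro ⟨hsp, hg⟩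
    obtain ⟨m, M, hM⟩ := hS
    obtain ⟨K, c, C, P, hK, hc, hP, h⟩ :=
      AutoBasis.fork_cantor hk M hM (AutoBasis.fork_of_not_sparse hk M hM hsp)
    obtain ⟨R, N0, hR⟩ := AutoBasis.syndetic hK hc hP h
    exact AutoBasis.basis_of_syndetic hg hR
end

section
/- Let k ≥ 2 be a natural number and let S be a non-sparse k-automatic subset of ℕ with gcd(S) = 1, and suppose a deterministic finite automaton with m states accepts the language of base-k expansions of the elements of S. Then every natural number n ≥ 3·k^{16m+5} can be expressed as a sum of at most 5·k^{16m+3} elements of S. -/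
namespace AutBasis

/-- Value of a word (least significant digit first). -/
def val {k : ℕ} (w : List (Fin k)) : ℕ := Nat.ofDigits k (w.map Fin.val)

theorem val_append {k : ℕ} (x y : List (Fin k)) :
    val (x ++ y) = val x + k ^ x.length * val y := by
  simp [val, Nat.ofDigits_append]

theorem val_lt {k : ℕ} (hk : 2 ≤ k) (w : List (Fin k)) : val w < k ^ w.length := by
  have := @Nat.ofDigits_lt_base_pow_length k (w.map Fin.val) (by omega) (by
    intro x hx
    simp only [List.mem_map] at hx
    obtain ⟨a, _, rfl⟩ := hx
    exact a.2)
  simpa [val] using this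

theorem val_mem {k m : ℕ} {S : Set ℕ} {M : DFA (Fin k) (Fin m)}
    (hM : ∀ w : List (Fin k), w ∈ M.accepts ↔ ∃ s ∈ S, w.map Fin.val = Nat.digits k s)
    {w : List (Fin k)} (hw : w ∈ M.accepts) :
    val w ∈ S ∧ w.map Fin.val = Nat.digits k (val w) := by
  obtain ⟨s, hs, h⟩ := (hM w).1 hw
  have : val w = s := by rw [val, h, Nat.ofDigits_digits]
  rw [this]
  exact ⟨hs, h⟩

theorem exists_word {k m : ℕ} (hk : 2 ≤ k) {S : Set ℕ} {M : DFA (Fin k) (Fin m)}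
    (hM : ∀ w : List (Fin k), w ∈ M.accepts ↔ ∃ s ∈ S, w.map Fin.val = Nat.digits k s)
    {s : ℕ} (hs : s ∈ S) : ∃ w ∈ M.accepts, w.map Fin.val = Nat.digits k s ∧ val w = s := by
  have h1 : ∃ w : List (Fin k), w.map Fin.val = Nat.digits k s := by
    have h2 : ∀ d ∈ Nat.digits k s, d < k := fun d hd => Nat.digits_lt_base (by omega) hd
    generalize Nat.digits k s = l at h2
    induction l with
    | nil => exact ⟨[], rfl⟩
    | cons a l ih =>
      obtain ⟨w, hw⟩ := ih (fun d hd => h2 d (by simp [hd]))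
      exact ⟨⟨a, h2 a (by simp)⟩ :: w, by simp [hw]⟩
  obtain ⟨w, hw⟩ := h1
  exact ⟨w, (hM w).2 ⟨s, hs, hw⟩, hw, by rw [val, hw, Nat.ofDigits_digits]⟩

theorem short_path {k m : ℕ} (M : DFA (Fin k) (Fin m)) (q : Fin m) (w : List (Fin k)) :
    ∃ w' : List (Fin k), w'.length < m ∧ M.evalFrom q w' = M.evalFrom q w := by
  induction h : w.length using Nat.strong_induction_on generalizing w with
  | _ n ih =>
    by_cases hn : w.length < m
    · exact ⟨w, hn, rfl⟩
    · obtain ⟨q', a, b, c, hx, hl, hb, h1, h2, h3⟩ :=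
        M.evalFrom_split (x := w) (s := q) (t := M.evalFrom q w) (by simpa using hn) rfl
      have hb' : 0 < b.length := List.length_pos_iff.2 hb
      obtain ⟨w', hw', he⟩ := ih (a ++ c).length (by
        subst h; rw [hx]; simp; omega) (a ++ c) rfl
      exact ⟨w', hw', by rw [he, DFA.evalFrom_of_append, h1, h3]⟩

/-- The key two dimensional linear algebra step. -/
theorem lin_step {F : Type*} [Field F] (k0 x0 k1 x1 k2 x2 T k' z : F)
    (h12k : k2 = k1 * k') (h12x : x2 = x1 + k1 * z)
    (y ky : F) (hk1 : k1 = k0 * ky) (hx1 : x1 = x0 + k0 * y)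
    (h0 : x0 + k0 * T = 0) (h1 : x1 + k1 * T = 0)
    (h2 : x0 + k0 * (z + k' * T) = 0) :
    x2 + k2 * T = 0 := by
  by_cases hd : k0 * x1 - k1 * x0 = 0
  · by_cases hk0 : k0 = 0
    · subst hk0; simp at h0; subst hk1 hx1 h0 h12k h12x; simp
    · have : k0 * (x2 + k2 * T) = 0 := by
        subst h12k h12x
        linear_combination k1 * h2 + hd
      exact (mul_eq_zero.1 this).resolve_left hk0
  · have : (k0 * x1 - k1 * x0) * (x2 + k2 * T) = 0 := by
      linear_combination (-(k1 * x2 - k2 * x1)) * h0 + (k0 * x2 - k2 * x0) * h1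
    exact (mul_eq_zero.1 this).resolve_left hd

theorem three_split {k m : ℕ} (M : DFA (Fin k) (Fin m)) (w : List (Fin k))
    (hw : 2 * m ≤ w.length) :
    ∃ x y z t : List (Fin k), ∃ q : Fin m, w = x ++ y ++ z ++ t ∧ y ≠ [] ∧ z ≠ [] ∧
      M.evalFrom M.start x = q ∧ M.evalFrom q y = q ∧ M.evalFrom q z = q := by
  obtain ⟨q, -, hq⟩ := Finset.exists_lt_card_fiber_of_mul_lt_card_of_maps_to
    (s := Finset.range (w.length + 1)) (t := (Finset.univ : Finset (Fin m))) (n := 2)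
    (f := fun i => M.evalFrom M.start (w.take i)) (by simp) (by simp; omega)
  obtain ⟨i, j, l, hi, hj, hl, hij, hjl⟩ : ∃ i j l : ℕ,
      M.evalFrom M.start (w.take i) = q ∧ M.evalFrom M.start (w.take j) = q ∧
      (M.evalFrom M.start (w.take l) = q ∧ l ≤ w.length) ∧ i < j ∧ j < l := by
    obtain ⟨a, b, c, ha, hb, hc, hab, hac, hbc⟩ := Finset.two_lt_card_iff.1 hq
    simp only [Finset.mem_filter, Finset.mem_range] at ha hb hc
    obtain ⟨ha1, ha2⟩ := ha
    obtain ⟨hb1, hb2⟩ := hb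
    obtain ⟨hc1, hc2⟩ := hc
    rcases lt_or_gt_of_ne hab with h1 | h1 <;> rcases lt_or_gt_of_ne hac with h2 | h2 <;>
      rcases lt_or_gt_of_ne hbc with h3 | h3
    · exact ⟨a, b, c, ha2, hb2, ⟨hc2, by omega⟩, h1, h3⟩
    · exact ⟨a, c, b, ha2, hc2, ⟨hb2, by omega⟩, h2, h3⟩
    · omega
    · exact ⟨c, a, b, hc2, ha2, ⟨hb2, by omega⟩, h2, h1⟩
    · exact ⟨b, a, c, hb2, ha2, ⟨hc2, by omega⟩, h1, h2⟩
    · omega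
    · exact ⟨b, c, a, hb2, hc2, ⟨ha2, by omega⟩, h3, h2⟩
    · exact ⟨c, b, a, hc2, hb2, ⟨ha2, by omega⟩, h3, h1⟩
  have e1 : w.take j = w.take i ++ (w.take j).drop i := by
    conv_lhs => rw [← List.take_append_drop i (w.take j)]
    rw [List.take_take, min_eq_left hij.le]
  have e2 : w.take l = w.take j ++ (w.take l).drop j := by
    conv_lhs => rw [← List.take_append_drop j (w.take l)]
    rw [List.take_take, min_eq_left hjl.le]
  refine ⟨w.take i, (w.take j).drop i, (w.take l).drop j, w.drop l, q, ?_, ?_, ?_, hi, ?_, ?_⟩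
  · rw [← e1, ← e2, List.take_append_drop]
  · intro h
    have := congrArg List.length h
    simp at this; omega
  · intro h
    have := congrArg List.length h
    simp at this; omega
  · rw [e1, DFA.evalFrom_of_append, hi] at hj; exact hj
  · rw [e2, DFA.evalFrom_of_append, hj] at hl; exact hl.1

theorem prime_dvd_all {k m : ℕ} (M : DFA (Fin k) (Fin m)) (p : ℕ) (hp : p.Prime)
    (h : ∀ w ∈ M.accepts, w.length < 2 * m → p ∣ val w) : ∀ w ∈ M.accepts, p ∣ val w := by
  intro w
  induction hn : w.length using Nat.strong_induction_on generalizing w with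
  | _ n ih =>
    intro hw
    by_cases hl : w.length < 2 * m
    · exact h w hw hl
    obtain ⟨x, y, z, t, q, hx, hy, hz, h1, h2, h3⟩ := three_split M w (by omega)
    have hy' : 0 < y.length := List.length_pos_iff.2 hy
    have hz' : 0 < z.length := List.length_pos_iff.2 hz
    have hlen : n = x.length + y.length + z.length + t.length := by
      rw [← hn, hx]; simp; omega
    have hacc : M.evalFrom q t ∈ M.accept := by
      rw [DFA.mem_accepts, DFA.eval, hx] at hw
      simpa [DFA.evalFrom_of_append, h1, h2, h3] using hw
    have a0 := ih (x ++ t).length (by simp; omega) (x ++ t) rfl (by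
      rw [DFA.mem_accepts, DFA.eval]; simpa [DFA.evalFrom_of_append, h1, h2, h3] using hacc)
    have a1 := ih (x ++ y ++ t).length (by simp; omega) (x ++ y ++ t) rfl (by
      rw [DFA.mem_accepts, DFA.eval]; simpa [DFA.evalFrom_of_append, h1, h2, h3] using hacc)
    have a2 := ih (x ++ z ++ t).length (by simp; omega) (x ++ z ++ t) rfl (by
      rw [DFA.mem_accepts, DFA.eval]; simpa [DFA.evalFrom_of_append, h1, h2, h3] using hacc)
    have : Fact p.Prime := ⟨hp⟩
    rw [hx]
    rw [← ZMod.natCast_eq_zero_iff] at a0 a1 a2 ⊢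
    simp only [val_append, List.length_append, pow_add] at a0 a1 a2 ⊢
    push_cast at a0 a1 a2 ⊢
    have := lin_step (F := ZMod p) ((k : ZMod p) ^ x.length) (val x)
      ((k : ZMod p) ^ x.length * (k : ZMod p) ^ y.length)
      (val x + (k : ZMod p) ^ x.length * val y) _ _ (val t) ((k : ZMod p) ^ z.length) (val z)
      rfl rfl (val y) ((k : ZMod p) ^ y.length) rfl rfl a0 a1
      (by linear_combination a2)
    linear_combination this

theorem short_gcd {k m : ℕ} (hk : 2 ≤ k) {S : Set ℕ} {M : DFA (Fin k) (Fin m)}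
    (hgcd : ∀ d : ℕ, (∀ n ∈ S, d ∣ n) → d = 1)
    (hM : ∀ w : List (Fin k), w ∈ M.accepts ↔ ∃ s ∈ S, w.map Fin.val = Nat.digits k s)
    (d : ℕ) (hd : ∀ n ∈ S, n < k ^ (2 * m) → d ∣ n) : d = 1 := by
  by_contra hne
  obtain ⟨p, hp, hpd⟩ := Nat.exists_prime_and_dvd hne
  refine hp.one_lt.ne' (hgcd p ?_)
  intro s hs
  obtain ⟨w, hw, _, rfl⟩ := exists_word hk hM hs
  refine prime_dvd_all M p hp ?_ w hw
  intro w' hw' hl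
  refine hpd.trans (hd _ (val_mem hM hw').1 ((val_lt hk w').trans ?_))
  exact Nat.pow_lt_pow_right (by omega) hl

theorem residue_list (T : Set ℕ) (E : ℕ) (hE : 0 < E)
    (hT : ∀ d : ℕ, (∀ n ∈ T, d ∣ n) → d = 1) (n : ℕ) :
    ∃ l : List ℕ, (∀ x ∈ l, x ∈ T) ∧ l.length ≤ E ∧ l.sum ≡ n [MOD E] := by
  have hex : ∃ l : List ℕ, (∀ x ∈ l, x ∈ T) ∧ (l.sum : ℤ) ≡ (n : ℤ) [ZMOD E] := by
    let H : AddSubgroup ℤ :=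
      { carrier := {z | ∃ l : List ℕ, (∀ x ∈ l, x ∈ T) ∧ (l.sum : ℤ) ≡ z [ZMOD E]}
        zero_mem' := ⟨[], by simp, by simp [Int.ModEq.refl]⟩
        add_mem' := by
          rintro a b ⟨l, hl, ha⟩ ⟨l', hl', hb⟩
          refine ⟨l ++ l', ?_, ?_⟩
          · intro x hx
            rcases List.mem_append.1 hx with h | h
            · exact hl x h
            · exact hl' x h
          · rw [List.sum_append, Nat.cast_add]; exact ha.add hb
        neg_mem' := by
          rintro a ⟨l, hl, ha⟩
          refine ⟨(List.replicate (E - 1) l).flatten, ?_, ?_⟩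
          · intro x hx
            obtain ⟨l', h1, h2⟩ := List.mem_flatten.1 hx
            rw [List.eq_of_mem_replicate h1] at h2
            exact hl x h2
          · have : ((List.replicate (E - 1) l).flatten.sum : ℤ) = ((E : ℤ) - 1) * l.sum := by
              rw [List.sum_flatten]
              simp [Nat.cast_sub (show 1 ≤ E from hE)]
            rw [this]
            have h2 := (ha.mul_left ((E : ℤ) - 1))
            refine h2.trans ?_
            rw [Int.modEq_iff_dvd]
            exact ⟨-a, by ring⟩ }
    obtain ⟨g, hg⟩ := Int.subgroup_cyclic H
    have h1 : g.natAbs = 1 := by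
      apply hT
      intro t ht
      have : (t : ℤ) ∈ H := ⟨[t], by simpa using ht, by simp [Int.ModEq.refl]⟩
      rw [hg, AddSubgroup.mem_closure_singleton] at this
      obtain ⟨z, hz⟩ := this
      have : g ∣ (t : ℤ) := ⟨z, by rw [← hz]; simp [mul_comm]⟩
      exact Int.natAbs_dvd_natAbs.2 this |>.trans (by simp)
    have : (n : ℤ) ∈ H := by
      rw [hg, AddSubgroup.mem_closure_singleton]
      rcases Int.natAbs_eq g with h | h
      · exact ⟨n, by rw [h, h1]; simp⟩
      · exact ⟨-n, by rw [h, h1]; simp⟩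
    exact this
  obtain ⟨l, hl, hs⟩ := hex
  rw [Int.natCast_modEq_iff] at hs
  induction hN : l.length using Nat.strong_induction_on generalizing l with
  | _ N ih =>
    by_cases hle : l.length ≤ E
    · exact ⟨l, hl, hle, hs⟩
    obtain ⟨i0, hi0, j0, hj0, hij0, he0⟩ := Finset.exists_ne_map_eq_of_card_lt_of_maps_to
      (s := Finset.range (l.length + 1)) (t := Finset.range E)
      (f := fun i => (l.take i).sum % E) (by simp; omega)
      (by intro i _; simpa using Nat.mod_lt _ hE)
    simp only [Finset.mem_range] at hi0 hj0
    obtain ⟨i, j, hj, hlt, he⟩ : ∃ i j : ℕ, j < l.length + 1 ∧ i < j ∧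
        (l.take i).sum % E = (l.take j).sum % E := by
      rcases lt_or_gt_of_ne hij0 with h | h
      · exact ⟨i0, j0, hj0, h, he0⟩
      · exact ⟨j0, i0, hi0, h, he0.symm⟩
    refine ih (l.take i ++ l.drop j).length (by simp; omega) _ ?_ ?_ rfl
    · intro x hx
      rcases List.mem_append.1 hx with h | h
      · exact hl x (List.mem_of_mem_take h)
      · exact hl x (List.mem_of_mem_drop h)
    · refine Nat.ModEq.trans ?_ hs
      conv_rhs => rw [← List.take_append_drop j l]
      rw [List.sum_append, List.sum_append]
      exact Nat.ModEq.add_right _ he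

/-- Last time at which the run on `w` visits `q`. -/
def lastT {k m : ℕ} (M : DFA (Fin k) (Fin m)) (w : List (Fin k)) (q : Fin m) : ℕ :=
  ((Finset.range (w.length + 1)).filter (fun t => M.evalFrom M.start (w.take t) = q)).sup id

theorem lastT_le {k m : ℕ} (M : DFA (Fin k) (Fin m)) (w : List (Fin k)) (q : Fin m) :
    lastT M w q ≤ w.length := by
  unfold lastT
  refine Finset.sup_le ?_
  intro t ht
  simp only [Finset.mem_filter, Finset.mem_range] at ht
  simp; omega

theorem lastT_spec {k m : ℕ} (M : DFA (Fin k) (Fin m)) (w : List (Fin k)) (q : Fin m) (t : ℕ)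
    (ht : t ≤ w.length) (hq : M.evalFrom M.start (w.take t) = q) :
    t ≤ lastT M w q ∧ M.evalFrom M.start (w.take (lastT M w q)) = q := by
  have hmem : t ∈ (Finset.range (w.length + 1)).filter
      (fun t => M.evalFrom M.start (w.take t) = q) := by
    simp [hq]; omega
  refine ⟨Finset.le_sup (f := id) hmem, ?_⟩
  obtain ⟨s, hs, he⟩ := Finset.exists_mem_eq_sup _ ⟨t, hmem⟩ id
  have : lastT M w q = s := he
  rw [this]
  simp only [Finset.mem_filter] at hs
  exact hs.2

theorem loop_of_lt {k m : ℕ} (M : DFA (Fin k) (Fin m)) (w : List (Fin k)) (t T : ℕ)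
    (htl : t < w.length) (htT : t < T)
    (h : M.evalFrom M.start (w.take T) = M.evalFrom M.start (w.take t)) :
    ∃ x, M.evalFrom (M.step (M.evalFrom M.start (w.take t)) w[t]) x
      = M.evalFrom M.start (w.take t) := by
  refine ⟨(w.take T).drop (t + 1), ?_⟩
  conv_rhs => rw [← h]
  conv_rhs => rw [← List.take_append_drop (t + 1) (w.take T)]
  rw [List.take_take, min_eq_left (by omega), DFA.evalFrom_of_append,
    List.take_succ_eq_append_getElem htl, DFA.evalFrom_append_singleton]

theorem code_inj {k m : ℕ} (M : DFA (Fin k) (Fin m))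
    (hno : ∀ (u v x y : List (Fin k)) (c d : Fin k),
      M.evalFrom (M.evalFrom M.start u) v ∈ M.accept →
      M.evalFrom (M.step (M.evalFrom M.start u) c) x = M.evalFrom M.start u →
      M.evalFrom (M.step (M.evalFrom M.start u) d) y = M.evalFrom M.start u → c = d)
    (w w' : List (Fin k)) (hw : w ∈ M.accepts)
    (hlen : w.length = w'.length) (hT : ∀ q, lastT M w q = lastT M w' q)
    (hL : ∀ q, w[lastT M w q]? = w'[lastT M w' q]?) : w = w' := by
  have key : ∀ t, t ≤ w.length → w.take t = w'.take t := by
    intro t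
    induction t with
    | zero => simp
    | succ t ih =>
      intro ht
      have ih := ih (by omega)
      rw [List.take_succ_eq_append_getElem (show t < w.length by omega),
        List.take_succ_eq_append_getElem (show t < w'.length by omega), ih]
      congr 2
      set q := M.evalFrom M.start (w.take t) with hq
      have s1 := lastT_spec M w q t (by omega) rfl
      have s2 := lastT_spec M w' q t (by omega) (by rw [hq, ih])
      rcases eq_or_lt_of_le s1.1 with h | h
      · have := hL q
        rw [← hT q, ← h] at this
        rw [List.getElem?_eq_getElem (by omega), List.getElem?_eq_getElem (by omega)] at this
        simpa using this
      · obtain ⟨x, hx⟩ := loop_of_lt M w t _ (by omega) h (s1.2.trans hq)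
        obtain ⟨y, hy⟩ := loop_of_lt M w' t (lastT M w' q) (by omega) (by rw [← hT q]; exact h)
          (s2.2.trans (by rw [hq, ih]))
        rw [← ih] at hy
        refine hno (w.take t) (w.drop t) x y _ _ ?_ hx hy
        rw [← DFA.evalFrom_of_append, List.take_append_drop]
        exact hw
  have := key w.length le_rfl
  rw [List.take_length, hlen, List.take_length] at this
  exact this

theorem count_le {k m : ℕ} (hk : 2 ≤ k) {S : Set ℕ} {M : DFA (Fin k) (Fin m)}
    (hM : ∀ w : List (Fin k), w ∈ M.accepts ↔ ∃ s ∈ S, w.map Fin.val = Nat.digits k s)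
    (hno : ∀ (u v x y : List (Fin k)) (c d : Fin k),
      M.evalFrom (M.evalFrom M.start u) v ∈ M.accept →
      M.evalFrom (M.step (M.evalFrom M.start u) c) x = M.evalFrom M.start u →
      M.evalFrom (M.step (M.evalFrom M.start u) d) y = M.evalFrom M.start u → c = d)
    (x N : ℕ) (hx : x < k ^ N) :
    piCount S x ≤ (N + 1) * ((N + 1) * (k + 1)) ^ m := by
  classical
  have hex : ∀ s : ℕ, ∃ w : List (Fin k), s ∈ S →
      w ∈ M.accepts ∧ w.map Fin.val = Nat.digits k s ∧ val w = s := by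
    intro s
    by_cases hs : s ∈ S
    · obtain ⟨w, h⟩ := exists_word hk hM hs
      exact ⟨w, fun _ => h⟩
    · exact ⟨[], fun h => absurd h hs⟩
  choose W hW using hex
  let c : ℕ → Fin (N + 1) := fun a => ⟨min a N, by omega⟩
  have hc : ∀ a b, a ≤ N → b ≤ N → c a = c b → a = b := by
    intro a b ha hb h
    have := congrArg Fin.val h
    simp only [c] at this
    omega
  let g : ℕ → Fin (N + 1) × (Fin m → Fin (N + 1) × Option (Fin k)) := fun s =>
    (c (W s).length, fun q => (c (lastT M (W s) q), (W s)[lastT M (W s) q]?))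
  have hlen : ∀ s ∈ S, s ≤ x → (W s).length ≤ N := by
    intro s hs hsx
    have h1 := congrArg List.length (hW s hs).2.1
    rw [List.length_map] at h1
    rw [h1, Nat.digits_length_le_iff (by omega)]
    omega
  have h := Set.ncard_le_ncard_of_injOn (s := {n | n ∈ S ∧ n ≤ x}) (t := Set.univ) g
    (fun _ _ => Set.mem_univ _) (by
      rintro s ⟨hs, hsx⟩ s' ⟨hs', hsx'⟩ he
      have l1 := hlen s hs hsx
      have l2 := hlen s' hs' hsx'
      have e1 := congrArg Prod.fst he
      have e2 := congrArg Prod.snd he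
      have : W s = W s' := by
        refine code_inj M hno _ _ (hW s hs).1 (hc _ _ l1 l2 e1) ?_ ?_
        · intro q
          exact hc _ _ ((lastT_le _ _ _).trans l1) ((lastT_le _ _ _).trans l2)
            (congrArg Prod.fst (congrFun e2 q))
        · intro q
          exact congrArg Prod.snd (congrFun e2 q)
      rw [← (hW s hs).2.2, ← (hW s' hs').2.2, this]) (Set.finite_univ)
  rw [Set.ncard_univ, Nat.card_eq_fintype_card] at h
  unfold piCount
  simpa using h

theorem exists_branch {k m : ℕ} (hk : 2 ≤ k) {S : Set ℕ} (hns : ¬ IsSparse S)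
    {M : DFA (Fin k) (Fin m)}
    (hM : ∀ w : List (Fin k), w ∈ M.accepts ↔ ∃ s ∈ S, w.map Fin.val = Nat.digits k s) :
    ∃ (u v x y : List (Fin k)) (c d : Fin k),
      M.evalFrom (M.evalFrom M.start u) v ∈ M.accept ∧
      M.evalFrom (M.step (M.evalFrom M.start u) c) x = M.evalFrom M.start u ∧
      M.evalFrom (M.step (M.evalFrom M.start u) d) y = M.evalFrom M.start u ∧ c ≠ d := by
  by_contra hcon
  push Not at hcon
  apply hns
  refine ⟨m + 1, 4 * (4 * (k + 1)) ^ m, by positivity, 3, ?_⟩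
  intro x hx
  have h := count_le hk hM hcon x (Nat.log k x + 1) (Nat.lt_pow_succ_log_self (by omega) x)
  have hx' : (3 : ℝ) ≤ x := by exact_mod_cast hx
  have hlog1 : 1 ≤ Real.log x := by
    rw [Real.le_log_iff_exp_le (by linarith)]
    exact (Real.exp_one_lt_d9.le.trans (by norm_num)).trans hx'
  have hlog2 : (Nat.log k x : ℝ) ≤ 2 * Real.log x := by
    have h1 : 2 ^ Nat.log k x ≤ x :=
      (Nat.pow_le_pow_left hk _).trans (Nat.pow_log_le_self k (by omega))
    have h2 : ((2 : ℝ) ^ Nat.log k x) ≤ x := by exact_mod_cast h1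
    have h3 := Real.log_le_log (by positivity) h2
    rw [Real.log_pow] at h3
    have := Real.log_two_gt_d9
    have h4 : (0 : ℝ) ≤ Nat.log k x := by positivity
    nlinarith
  have hN : ((Nat.log k x + 1 + 1 : ℕ) : ℝ) ≤ 4 * Real.log x := by
    push_cast; linarith
  have h' : (piCount S x : ℝ) ≤ ((Nat.log k x + 1 + 1 : ℕ) : ℝ) *
      (((Nat.log k x + 1 + 1 : ℕ) : ℝ) * (k + 1)) ^ m := by exact_mod_cast h
  refine h'.trans ?_
  calc _ ≤ (4 * Real.log x) * ((4 * Real.log x) * (k + 1)) ^ m := by gcongr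
    _ = _ := by simp only [mul_pow, pow_succ]; ring

theorem exists_loops {k m : ℕ} (hk : 2 ≤ k) {S : Set ℕ} (hns : ¬ IsSparse S)
    {M : DFA (Fin k) (Fin m)}
    (hM : ∀ w : List (Fin k), w ∈ M.accepts ↔ ∃ s ∈ S, w.map Fin.val = Nat.digits k s) :
    ∃ (q : Fin m) (u v a b : List (Fin k)), M.evalFrom M.start u = q ∧
      M.evalFrom q v ∈ M.accept ∧ M.evalFrom q a = q ∧ M.evalFrom q b = q ∧
      u.length < m ∧ v.length < m ∧ a.length = b.length ∧ 0 < b.length ∧ b.length ≤ 2 * m ∧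
      val b < val a := by
  obtain ⟨u, v, x, y, c, d, h1, h2, h3, hcd⟩ := exists_branch hk hns hM
  set q := M.evalFrom M.start u with hq
  obtain ⟨u', hu', hu⟩ := short_path M M.start u
  obtain ⟨v', hv', hv⟩ := short_path M q v
  obtain ⟨x', hx', hx⟩ := short_path M (M.step q c) x
  obtain ⟨y', hy', hy⟩ := short_path M (M.step q d) y
  rw [h2] at hx
  rw [h3] at hy
  rw [← hv] at h1
  have hne : val ((c :: x') ++ (d :: y')) ≠ val ((d :: y') ++ (c :: x')) := by
    intro h
    have h := congrArg (· % k) h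
    simp only [val, List.cons_append, List.map_cons, Nat.ofDigits_cons,
      Nat.add_mul_mod_self_left, Nat.mod_eq_of_lt c.2, Nat.mod_eq_of_lt d.2] at h
    exact hcd (Fin.ext (by simpa [Nat.mod_eq_of_lt] using h))
  have la : M.evalFrom q ((c :: x') ++ (d :: y')) = q := by
    rw [DFA.evalFrom_of_append, DFA.evalFrom_cons M q, hx, DFA.evalFrom_cons, hy]
  have lb : M.evalFrom q ((d :: y') ++ (c :: x')) = q := by
    rw [DFA.evalFrom_of_append, DFA.evalFrom_cons M q, hy, DFA.evalFrom_cons, hx]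
  rcases lt_or_gt_of_ne hne with h | h
  · refine ⟨q, u', v', _, _, hu, h1, lb, la, hu', hv', ?_, ?_, ?_, h⟩ <;> simp <;> omega
  · refine ⟨q, u', v', _, _, hu, h1, la, lb, hu', hv', ?_, ?_, ?_, h⟩ <;> simp <;> omega

/-- `b` repeated `n` times. -/
def rep {k : ℕ} (b : List (Fin k)) : ℕ → List (Fin k)
  | 0 => []
  | n + 1 => b ++ rep b n

theorem rep_length {k : ℕ} (b : List (Fin k)) (n : ℕ) : (rep b n).length = b.length * n := by
  induction n with
  | zero => simp [rep]
  | succ n ih => simp [rep, ih]; ring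

theorem rep_loop {k m : ℕ} (M : DFA (Fin k) (Fin m)) (q : Fin m) (b : List (Fin k))
    (hb : M.evalFrom q b = q) (n : ℕ) : M.evalFrom q (rep b n) = q := by
  induction n with
  | zero => simp [rep]
  | succ n ih => rw [rep, DFA.evalFrom_of_append, hb, ih]

theorem sum_ind (R j : ℕ) (h : j ≤ R) (A B : ℕ) (hAB : B ≤ A) :
    ∑ i : Fin R, (if (i : ℕ) < j then A else B) = R * B + (A - B) * j := by
  rw [Fin.sum_univ_eq_sum_range (fun i => if i < j then A else B)]
  rw [← Finset.sum_range_add_sum_Ico _ h]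
  rw [Finset.sum_congr rfl (g := fun _ => A) (by intro i hi; simp at hi; simp [hi])]
  rw [Finset.sum_congr (s₁ := Finset.Ico j R) rfl (g := fun _ => B)
    (by intro i hi; simp at hi; simp; omega)]
  simp
  obtain ⟨D, rfl⟩ := Nat.exists_eq_add_of_le hAB
  obtain ⟨r, rfl⟩ := Nat.exists_eq_add_of_le h
  simp
  ring

theorem loop_sum {k m : ℕ} (hk : 2 ≤ k) (M : DFA (Fin k) (Fin m)) (q : Fin m)
    (a b : List (Fin k)) (ha : M.evalFrom q a = q) (hb : M.evalFrom q b = q)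
    (hab : a.length = b.length) (hlt : val b < val a) (n : ℕ) :
    ∀ j, j < (k ^ b.length) ^ n → ∃ f : Fin (k ^ b.length - 1) → List (Fin k),
      (∀ i, (f i).length = b.length * n ∧ M.evalFrom q (f i) = q) ∧
      ∑ i, val (f i) = (k ^ b.length - 1) * val (rep b n) + (val a - val b) * j := by
  have hK : 0 < k ^ b.length := by positivity
  generalize hKK : k ^ b.length = K at *
  induction n with
  | zero =>
    intro j hj
    refine ⟨fun _ => [], by simp, ?_⟩
    have : j = 0 := by simpa using hj
    subst this
    simp [val, rep]
  | succ n ih =>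
    intro j hj
    obtain ⟨f, hf, hs⟩ := ih (j / K) (by
      rw [Nat.div_lt_iff_lt_mul hK]; rwa [pow_succ] at hj)
    have hmod : j % K ≤ K - 1 := by have := Nat.mod_lt j hK; omega
    refine ⟨fun i => (if (i : ℕ) < j % K then a else b) ++ f i, ?_, ?_⟩
    · intro i
      obtain ⟨h1, h2⟩ := hf i
      beta_reduce
      split_ifs
      · refine ⟨by rw [List.length_append, h1, hab]; ring, ?_⟩
        rw [DFA.evalFrom_of_append, ha, h2]
      · refine ⟨by rw [List.length_append, h1]; ring, ?_⟩
        rw [DFA.evalFrom_of_append, hb, h2]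
    · have : ∀ i : Fin (K - 1), val ((if (i : ℕ) < j % K then a else b) ++ f i) =
          (if (i : ℕ) < j % K then val a else val b) + K * val (f i) := by
        intro i
        split_ifs
        · rw [val_append, hab, hKK]
        · rw [val_append, hKK]
      rw [Finset.sum_congr rfl (fun i _ => this i), Finset.sum_add_distrib, ← Finset.mul_sum, hs,
        sum_ind _ _ hmod _ _ hlt.le, rep, val_append, hKK]
      conv_rhs => rw [← Nat.mod_add_div j K]
      ring

/-- `n` is a sum of exactly `N` elements of `S`. -/
def ExactSum (S : Set ℕ) (N n : ℕ) : Prop :=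
  ∃ l : List ℕ, l.length = N ∧ (∀ x ∈ l, x ∈ S) ∧ l.sum = n

theorem ExactSum.add {S : Set ℕ} {N n N' n' : ℕ} (h : ExactSum S N n) (h' : ExactSum S N' n') :
    ExactSum S (N + N') (n + n') := by
  obtain ⟨l, h1, h2, h3⟩ := h
  obtain ⟨l', h1', h2', h3'⟩ := h'
  refine ⟨l ++ l', by simp [h1, h1'], ?_, by simp [h3, h3']⟩
  intro x hx
  rcases List.mem_append.1 hx with h | h
  · exact h2 x h
  · exact h2' x h

theorem exact_base {k m : ℕ} (hk : 2 ≤ k) {S : Set ℕ} (M : DFA (Fin k) (Fin m))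
    (hM : ∀ w : List (Fin k), w ∈ M.accepts ↔ ∃ s ∈ S, w.map Fin.val = Nat.digits k s)
    (q : Fin m) (u v a b : List (Fin k)) (hu : M.evalFrom M.start u = q)
    (hv : M.evalFrom q v ∈ M.accept)
    (ha : M.evalFrom q a = q) (hb : M.evalFrom q b = q)
    (hab : a.length = b.length) (hlt : val b < val a) (n : ℕ)
    (j : ℕ) (hj : j < (k ^ b.length) ^ n) :
    ExactSum S (k ^ b.length - 1) ((k ^ b.length - 1) * val (u ++ rep b n ++ v) +
      k ^ u.length * (val a - val b) * j) := by
  obtain ⟨f, hf, hs⟩ := loop_sum hk M q a b ha hb hab hlt n j hj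
  refine ⟨List.ofFn (fun i => val (u ++ f i ++ v)), by simp, ?_, ?_⟩
  · intro x hx
    obtain ⟨i, rfl⟩ := (List.mem_ofFn' _ _).1 hx
    refine (val_mem hM ?_).1
    rw [DFA.mem_accepts, DFA.eval, DFA.evalFrom_of_append, DFA.evalFrom_of_append, hu, (hf i).2]
    exact hv
  · rw [List.sum_ofFn]
    simp only [val_append, List.length_append, (hf _).1, rep_length]
    rw [Finset.sum_add_distrib, Finset.sum_add_distrib, ← Finset.mul_sum, hs]
    simp
    ring

theorem exact_mul {S : Set ℕ} {R c E X : ℕ}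
    (h : ∀ j ≤ X, ExactSum S R (R * c + E * j)) (t : ℕ) :
    ∀ j ≤ t * X, ExactSum S (R * t) (R * t * c + E * j) := by
  induction t with
  | zero =>
    intro j hj
    have : j = 0 := by simpa using hj
    subst this
    exact ⟨[], by simp, by simp, by simp⟩
  | succ t ih =>
    intro j hj
    have h1 := h (min j X) (min_le_right _ _)
    have h2 := ih (j - min j X) (by
      rw [add_mul] at hj
      rcases le_total j X with h | h
      · rw [min_eq_left h]; simp
      · rw [min_eq_right h]; omega)
    have := h2.add h1
    rw [show R * (t + 1) = R * t + R by ring]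
    convert this using 1
    obtain ⟨z, hz⟩ := Nat.exists_eq_add_of_le (min_le_left j X)
    have e : j - min j X = z := by omega
    rw [e]
    nth_rewrite 1 [hz]
    ring

/-- The covering of all large multiples of `E`. -/
theorem cover {S : Set ℕ} {R E W K k : ℕ} (c : ℕ → ℕ) (hR : 0 < R) (hE : 0 < E) (hK : 2 ≤ K)
    (hW : 0 < W)
    (hbase : ∀ n, ∀ j ≤ K ^ n - 1, ExactSum S R (R * c n + E * j))
    (hup : ∀ n, c n < W * K ^ n) (hlow : ∀ n, 1 ≤ n → W * K ^ n ≤ k * c n)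
    (y : ℕ) (hy : R * (2 * R * W) * c 1 ≤ y) :
    ∃ N, 0 < N ∧ N ≤ R * E * (k * K * (2 * R * W)) ∧ ExactSum S N (E * y) := by
  set τ0 := 2 * R * W with hτ0
  have hτpos : 0 < τ0 := by positivity
  have hcpos : ∀ n, 1 ≤ n → 0 < c n := by
    intro n hn
    have h1 := hlow n hn
    have h2 : 0 < W * K ^ n := by positivity
    rcases Nat.eq_zero_or_pos (c n) with h0 | h0
    · rw [h0] at h1; omega
    · exact h0
  -- the largest level
  obtain ⟨n, hn1, hn2, hn3⟩ : ∃ n, 1 ≤ n ∧ R * τ0 * c n ≤ y ∧ y < R * τ0 * c (n + 1) := by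
    have hunb : ∃ n, y < R * τ0 * c (n + 1) := by
      refine ⟨k * (y + 1), ?_⟩
      have h1 := hlow (k * (y + 1) + 1) (by omega)
      have h2 : k * (y + 1) < K ^ (k * (y + 1) + 1) :=
        (Nat.lt_pow_self (by omega)).trans (Nat.pow_lt_pow_right (by omega) (by omega))
      have h3 : k * (y + 1) < k * c (k * (y + 1) + 1) :=
        h2.trans_le ((Nat.le_mul_of_pos_left _ hW).trans h1)
      have h4 := Nat.lt_of_mul_lt_mul_left h3
      have h5 : c (k * (y + 1) + 1) ≤ R * τ0 * c (k * (y + 1) + 1) :=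
        Nat.le_mul_of_pos_left _ (by positivity)
      omega
    classical
    have hs := Nat.find_spec hunb
    have hmin := fun j => Nat.find_min hunb (m := j)
    set n0 := Nat.find hunb with hn0
    rcases Nat.eq_zero_or_pos n0 with h0 | h0
    · rw [h0] at hs; simp only [zero_add] at hs; omega
    · have := hmin (n0 - 1) (by omega)
      rw [Nat.sub_add_cancel h0] at this
      exact ⟨n0, h0, by omega, hs⟩
  have hc := hcpos n hn1
  have hRc : 0 < R * c n := by positivity
  set τ := y / (R * c n) with hτ
  have ht0 : τ0 ≤ τ := by
    rw [hτ, Nat.le_div_iff_mul_le hRc]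
    calc _ = R * τ0 * c n := by ring
      _ ≤ y := hn2
  have ht1 : τ < k * K * τ0 := by
    rw [hτ, Nat.div_lt_iff_lt_mul hRc]
    refine hn3.trans_le ?_
    calc R * τ0 * c (n + 1) ≤ R * τ0 * (W * K ^ (n + 1)) :=
          Nat.mul_le_mul_left _ (hup (n + 1)).le
      _ = R * τ0 * K * (W * K ^ n) := by ring
      _ ≤ R * τ0 * K * (k * c n) := Nat.mul_le_mul_left _ (hlow n hn1)
      _ = _ := by ring
  have hj : y % (R * c n) ≤ (E * τ) * (K ^ n - 1) := by
    have h1 : y % (R * c n) < R * c n := Nat.mod_lt _ hRc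
    have hKn : 2 ≤ K ^ n := hK.trans (Nat.le_self_pow (by omega) K)
    calc y % (R * c n) ≤ R * c n := h1.le
      _ ≤ R * (W * K ^ n) := Nat.mul_le_mul_left _ (hup n).le
      _ ≤ R * (W * (2 * (K ^ n - 1))) := by
          apply Nat.mul_le_mul_left; apply Nat.mul_le_mul_left; omega
      _ = τ0 * (K ^ n - 1) := by rw [hτ0]; ring
      _ ≤ (E * τ) * (K ^ n - 1) := by
          apply Nat.mul_le_mul_right
          exact ht0.trans (Nat.le_mul_of_pos_left _ hE)
  have hfin := exact_mul (hbase n) (E * τ) _ hj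
  have hτp : 0 < τ := by omega
  refine ⟨R * (E * τ), by positivity, ?_, ?_⟩
  · rw [← mul_assoc]; exact Nat.mul_le_mul_left _ ht1.le
  · convert hfin using 1
    have := Nat.div_add_mod y (R * c n)
    rw [← hτ] at this
    nth_rewrite 1 [← this]
    ring

end AutBasis

/-- If `S` is a non-sparse `k`-automatic set with `gcd(S) = 1`, accepted (via base-`k`
expansions) by a DFA with `m` states, then every `n ≥ 3·k^(16m+5)` is a sum of at most
`5·k^(16m+3)` elements of `S`. -/
theorem automatic_additive_basis_explicit_bounds
    (k m : ℕ) (hk : 2 ≤ k) (S : Set ℕ)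
    (hns : ¬ IsSparse S)
    (hgcd : ∀ d : ℕ, (∀ n ∈ S, d ∣ n) → d = 1)
    (M : DFA (Fin k) (Fin m))
    (hM : ∀ w : List (Fin k), w ∈ M.accepts ↔ ∃ s ∈ S, w.map Fin.val = Nat.digits k s) :
    ∀ n : ℕ, 3 * k ^ (16 * m + 5) ≤ n → SumOfAtMost S (5 * k ^ (16 * m + 3)) n := by
  intro n hn
  obtain ⟨q, u, v, a, b, hu, hv, ha, hb, hul, hvl, hab, hb0, hbl, hlt⟩ :=
    AutBasis.exists_loops hk hns hM
  have hk1 : 1 ≤ k := by omega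
  have hK2 : 2 ≤ k ^ b.length := hk.trans (Nat.le_self_pow (by omega) k)
  have hEpos : 0 < k ^ u.length * (AutBasis.val a - AutBasis.val b) := by
    have : 0 < AutBasis.val a - AutBasis.val b := by omega
    positivity
  have hbase := fun n j hj =>
    AutBasis.exact_base hk M hM q u v a b hu hv ha hb hab hlt n j hj
  set X := k ^ m with hX
  have hX1 : 1 ≤ X := Nat.one_le_pow _ _ (by omega)
  have hKX : k ^ b.length ≤ X ^ 2 := by
    rw [hX, ← pow_mul, mul_comm m 2]; exact Nat.pow_le_pow_right hk1 hbl
  have hWX : k ^ (u.length + v.length) ≤ X ^ 2 := by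
    rw [hX, ← pow_mul]; exact Nat.pow_le_pow_right hk1 (by omega)
  have hEX : k ^ u.length * (AutBasis.val a - AutBasis.val b) ≤ X ^ 3 := by
    have h1 : k ^ u.length ≤ X := Nat.pow_le_pow_right hk1 hul.le
    have h2 : AutBasis.val a - AutBasis.val b ≤ X ^ 2 := by
      have := AutBasis.val_lt hk a
      rw [hab] at this
      omega
    calc _ ≤ X * X ^ 2 := Nat.mul_le_mul h1 h2
      _ = X ^ 3 := by ring
  set E := k ^ u.length * (AutBasis.val a - AutBasis.val b) with hE
  set c : ℕ → ℕ := fun n => AutBasis.val (u ++ AutBasis.rep b n ++ v) with hc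
  have hlenc : ∀ n, k ^ (u ++ AutBasis.rep b n ++ v).length =
      k ^ (u.length + v.length) * (k ^ b.length) ^ n := by
    intro n
    simp only [List.length_append, AutBasis.rep_length]
    rw [← pow_mul, ← pow_add]
    congr 1
    ring
  have hup : ∀ n, c n < k ^ (u.length + v.length) * (k ^ b.length) ^ n := by
    intro n
    rw [← hlenc n]
    exact AutBasis.val_lt hk _
  have hlow : ∀ n, 1 ≤ n → k ^ (u.length + v.length) * (k ^ b.length) ^ n ≤ k * c n := by
    intro n hn
    rw [← hlenc n]
    have hacc : u ++ AutBasis.rep b n ++ v ∈ M.accepts := by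
      rw [DFA.mem_accepts, DFA.eval, DFA.evalFrom_of_append, DFA.evalFrom_of_append, hu,
        AutBasis.rep_loop M q b hb]
      exact hv
    have h1 := (AutBasis.val_mem hM hacc).2
    have hl := congrArg List.length h1
    rw [List.length_map] at hl
    have hne : AutBasis.val (u ++ AutBasis.rep b n ++ v) ≠ 0 := by
      intro h0
      rw [h0] at hl
      simp only [List.length_append, AutBasis.rep_length, Nat.digits_zero, List.length_nil] at hl
      have : 0 < b.length * n := by positivity
      omega
    have h2 := Nat.base_pow_length_digits_le k _ (by omega) hne
    rw [← hl] at h2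
    exact h2
  set K := k ^ b.length with hK
  set W := k ^ (u.length + v.length) with hW
  have hWpos : 0 < W := by positivity
  obtain ⟨l, hlT, hlE, hlmod⟩ := AutBasis.residue_list {s | s ∈ S ∧ s < k ^ (2 * m)} E hEpos
    (fun d hd => AutBasis.short_gcd hk hgcd hM d (fun n h1 h2 => hd n ⟨h1, h2⟩)) n
  have hsum : l.sum ≤ X ^ 5 := by
    have h1 := List.sum_le_card_nsmul l (X ^ 2) (by
      intro x hx
      have := (hlT x hx).2
      rw [mul_comm, pow_mul] at this
      exact this.le)
    calc l.sum ≤ l.length * X ^ 2 := by simpa using h1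
      _ ≤ X ^ 3 * X ^ 2 := Nat.mul_le_mul_right _ (hlE.trans hEX)
      _ = X ^ 5 := by ring
  have hRX : K - 1 ≤ X ^ 2 := by omega
  have hc1 : c 1 ≤ X ^ 4 := by
    calc c 1 ≤ W * K ^ 1 := (hup 1).le
      _ ≤ X ^ 2 * (X ^ 2) ^ 1 := by gcongr
      _ = X ^ 4 := by ring
  have hy0 : E * ((K - 1) * (2 * (K - 1) * W) * c 1) ≤ 2 * X ^ 13 := by
    calc _ ≤ X ^ 3 * (X ^ 2 * (2 * X ^ 2 * X ^ 2) * X ^ 4) := by gcongr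
      _ = _ := by ring
  have hpow16 : X ^ 13 ≤ k ^ (16 * m + 5) := by
    rw [hX, ← pow_mul]; exact Nat.pow_le_pow_right hk1 (by omega)
  have hX5 : X ^ 5 ≤ X ^ 13 := Nat.pow_le_pow_right hX1 (by norm_num)
  have hln : l.sum ≤ n := by omega
  obtain ⟨y, hy⟩ := (Nat.modEq_iff_dvd' hln).1 hlmod
  have hyy : (K - 1) * (2 * (K - 1) * W) * c 1 ≤ y := by
    refine Nat.le_of_mul_le_mul_left ?_ hEpos
    rw [← hy]
    omega
  obtain ⟨N, hN0, hN, l', hl'1, hl'2, hl'3⟩ := AutBasis.cover (S := S) (R := K - 1) (E := E)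
    (W := W) (K := K) (k := k) c (by omega) hEpos hK2 hWpos
    (fun n j hj => hbase n j (by
      have : 0 < K ^ n := by positivity
      omega)) hup hlow y hyy
  refine ⟨l' ++ l, ?_, ?_, ?_, ?_⟩
  · intro h
    have := congrArg List.length h
    simp at this
    simp [this.1] at hl'1
    omega
  · rw [List.length_append, hl'1]
    have h1 : N ≤ 2 * (k * X ^ 11) := by
      refine hN.trans ?_
      calc _ ≤ X ^ 2 * X ^ 3 * (k * X ^ 2 * (2 * X ^ 2 * X ^ 2)) := by gcongr
        _ = _ := by ring
    have h2 : k * X ^ 11 ≤ k ^ (16 * m + 3) := by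
      rw [hX, ← pow_mul, ← pow_succ']; exact Nat.pow_le_pow_right hk1 (by omega)
    have h3 : X ^ 3 ≤ k ^ (16 * m + 3) := by
      rw [hX, ← pow_mul]; exact Nat.pow_le_pow_right hk1 (by omega)
    omega
  · intro x hx
    rcases List.mem_append.1 hx with h | h
    · exact hl'2 x h
    · exact (hlT x h).1
  · rw [List.sum_append, hl'3, ← hy]
    omega
end

section
/- Let k ≥ 2 and m ≥ 2 be integers, and let S be the set of all natural numbers whose base-k expansion has exactly j digits for some j ≥ 0 with j ≡ −1 (mod m). Then for each natural number d ≥ 1, the number k^{md−2} − 1 cannot be expressed as a sum of fewer than k^{m−2} elements of S. -/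
/-- The set of natural numbers whose base-`k` expansion has exactly `j` digits for some
`j ≡ -1 (mod m)`, i.e. `m ∣ j + 1` where `j` is the number of base-`k` digits. -/
def DigitLengthSet (k m : ℕ) : Set ℕ :=
  {n : ℕ | m ∣ (Nat.digits k n).length + 1}

/-- For each `d ≥ 1`, the number `k^(md-2) - 1` cannot be expressed as a sum of fewer
than `k^(m-2)` elements of `DigitLengthSet k m`. -/
theorem digit_length_set_not_small_sum
    (k m : ℕ) (hk : 2 ≤ k) (hm : 2 ≤ m) :
    ∀ d : ℕ, 1 ≤ d →
      ¬ ∃ l : List ℕ, l ≠ [] ∧ l.length < k ^ (m - 2) ∧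
          (∀ x ∈ l, x ∈ DigitLengthSet k m) ∧ l.sum = k ^ (m * d - 2) - 1 := by
  rintro d hd ⟨l, hne, hlen, hS, hsum⟩
  obtain ⟨n, rfl⟩ := Nat.exists_eq_add_of_le' hm
  obtain ⟨e, rfl⟩ := Nat.exists_eq_add_of_le' hd
  have hexp : (n + 2) * (e + 1) - 2 = n + (n + 2) * e := by
    rw [Nat.mul_succ]; omega
  rw [hexp, pow_add] at hsum
  rw [Nat.add_sub_cancel] at hlen
  have hk0 : 0 < k := by omega
  have hA : 0 < k ^ n := pow_pos hk0 n
  have hB : 0 < k ^ ((n + 2) * e) := pow_pos hk0 _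
  have hAB := Nat.mul_pos hA hB
  have hx : ∀ x ∈ l, x ≤ k ^ ((n + 2) * e) - 1 := by
    intro x hxl
    have h1 : x ≤ l.sum := List.le_sum_of_mem hxl
    obtain ⟨c, hc⟩ := hS x hxl
    have h2 : x < k ^ (n + (n + 2) * e) := by rw [pow_add]; omega
    have h3 : (Nat.digits k x).length ≤ n + (n + 2) * e :=
      (Nat.digits_length_le_iff (by omega) x).2 h2
    have h4 : c < e + 1 := by
      by_contra h
      have := Nat.mul_le_mul_left (n + 2) (not_lt.1 h)
      rw [Nat.mul_succ] at this
      omega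
    have h5 := Nat.mul_le_mul_left (n + 2) (Nat.lt_succ_iff.1 h4)
    have h6 : x < k ^ ((n + 2) * e) :=
      (Nat.digits_length_le_iff (by omega) x).1 (by omega)
    omega
  have h := List.sum_le_card_nsmul l _ hx
  have hl : 0 < l.length := List.length_pos_iff.2 hne
  rw [smul_eq_mul, hsum] at h
  have h7 : l.length * (k ^ ((n + 2) * e) - 1) + l.length = l.length * k ^ ((n + 2) * e) := by
    rw [← Nat.mul_succ, Nat.succ_eq_add_one, Nat.sub_add_cancel hB]
  have h8 := Nat.mul_lt_mul_of_pos_right hlen hB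
  omega
end

section
/- Let L be a regular language over a finite alphabet Σ. Then L has either polynomial growth or exponential growth: either there exists a constant c ≥ 0 such that g_L(n) = O(n^c), or there exists a real number α > 1 such that g_L(n) > α^n for infinitely many n. -/
/-- `g_L(n) = |L ∩ Σ^n|`, the number of words in `L` of length exactly `n`. -/
noncomputable def wordCount {α : Type} (L : Language α) (n : ℕ) : ℕ :=
  Set.ncard {w | w ∈ L ∧ w.length = n}

/-- `h_L(n) = |L ∩ Σ^{≤n}|`, the number of words in `L` of length at most `n`. -/
noncomputable def wordCountLe {α : Type} (L : Language α) (n : ℕ) : ℕ :=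
  Set.ncard {w | w ∈ L ∧ w.length ≤ n}

/-- `L` has polynomial growth: `g_L(n) = O(n^c)` for some constant `c`. -/
def PolyGrowth {α : Type} (L : Language α) : Prop :=
  ∃ c : ℕ, ∃ C : ℝ, 0 < C ∧ ∃ n0 : ℕ, ∀ n : ℕ, n0 ≤ n →
    (wordCount L n : ℝ) ≤ C * (n : ℝ) ^ c

/-- `L` has exponential growth: `g_L(n) > α^n` for some real `α > 1` and
infinitely many `n`. -/
def ExpGrowth {α : Type} (L : Language α) : Prop :=
  ∃ a : ℝ, 1 < a ∧ ∀ N : ℕ, ∃ n : ℕ, N ≤ n ∧ a ^ n < (wordCount L n : ℝ)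

namespace RegGrowth

/-- loops at `q` are determined by their length -/
def Good {α σ : Type} (M : DFA α σ) (q : σ) : Prop :=
  ∀ x y : List α, M.evalFrom q x = q → M.evalFrom q y = q → x.length = y.length → x = y

def P {α σ : Type} (M : DFA α σ) (S : Finset σ) (q : σ) (n : ℕ) : Set (List α) :=
  {w | w.length ≤ n ∧ ∀ p, p <+: w → M.evalFrom q p ∈ S}

theorem last_visit {α σ : Type} (M : DFA α σ) (q : σ) :
    ∀ n : ℕ, ∀ w : List α, w.length ≤ n → ∃ x r, w = x ++ r ∧ M.evalFrom q x = q ∧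
      ∀ p, p <+: r → p ≠ [] → M.evalFrom q p ≠ q := by
  intro n
  induction n with
  | zero =>
    intro w hw
    have : w = [] := List.length_eq_zero_iff.mp (by omega)
    subst this
    refine ⟨[], [], rfl, rfl, ?_⟩
    intro p hp hne
    exact absurd (List.prefix_nil.mp hp) hne
  | succ n ih =>
    intro w hw
    by_cases h : ∃ p, p <+: w ∧ p ≠ [] ∧ M.evalFrom q p = q
    · obtain ⟨p, ⟨t, rfl⟩, hne, hq⟩ := h
      have hpos : 0 < p.length := List.length_pos_iff.mpr hne
      rw [List.length_append] at hw
      obtain ⟨x, r, rfl, hx, hr⟩ := ih t (by omega)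
      refine ⟨p ++ x, r, by simp, ?_, hr⟩
      rw [DFA.evalFrom_of_append, hq, hx]
    · push Not at h
      exact ⟨[], w, rfl, rfl, fun p hp hne => h p hp hne⟩

theorem P_finite {α σ : Type} [Fintype α] (M : DFA α σ) (S : Finset σ) (q : σ) (n : ℕ) :
    (P M S q n).Finite :=
  (List.finite_length_le α n).subset (fun _ hw => hw.1)

theorem P_card {α σ : Type} [Fintype α] [DecidableEq σ] (M : DFA α σ) (n : ℕ) :
    ∀ k : ℕ, ∀ S : Finset σ, S.card = k → (∀ q ∈ S, Good M q) → ∀ q,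
      (P M S q n).ncard ≤ ((n + 1) * (1 + Fintype.card α)) ^ k := by
  intro k
  induction k with
  | zero =>
    intro S hS _ q
    have hS' : S = ∅ := Finset.card_eq_zero.mp hS
    have : P M S q n = ∅ := by
      ext w
      simp only [P, hS', Set.mem_ofPred_eq, Set.mem_empty_iff_false, iff_false]
      rintro ⟨_, h⟩
      exact absurd (h [] List.nil_prefix) (by simp)
    simp [this]
  | succ k ih =>
    intro S hS hgood q
    by_cases hq : q ∈ S
    swap
    · have : P M S q n = ∅ := by
        ext w
        simp only [P, Set.mem_ofPred_eq, Set.mem_empty_iff_false, iff_false]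
        rintro ⟨_, h⟩
        exact hq (h [] List.nil_prefix)
      simp [this]
    set D := (n + 1) * (1 + Fintype.card α) with hD
    have hS1 : (S.erase q).card = k := by rw [Finset.card_erase_of_mem hq]; omega
    have hg1 : ∀ q' ∈ S.erase q, Good M q' := fun q' h => hgood q' (Finset.mem_of_mem_erase h)
    have ih' := ih (S.erase q) hS1 hg1
    let T : Set (List α) := {x | x.length ≤ n ∧ M.evalFrom q x = q}
    have hTfin : T.Finite := (List.finite_length_le α n).subset (fun _ hw => hw.1)
    have hT : T.ncard ≤ n + 1 := by
      have h1 : T.ncard ≤ ((Finset.range (n + 1) : Finset ℕ) : Set ℕ).ncard := by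
        refine Set.ncard_le_ncard_of_injOn List.length ?_ ?_ (Finset.finite_toSet _)
        · intro x hx
          have := hx.1
          simp; omega
        · intro x hx y hy hxy
          exact hgood q hq x y hx.2 hy.2 hxy
      rw [Set.ncard_coe_finset] at h1
      simpa using h1
    let U : Set (List α) := ⋃ a : α, (List.cons a) '' P M (S.erase q) (M.step q a) n
    have hUfin : U.Finite := Set.finite_iUnion fun a => (P_finite M _ _ n).image _
    have hU : U.ncard ≤ Fintype.card α * D ^ k := by
      refine (Set.ncard_iUnion_le_of_fintype _).trans ?_
      refine (Finset.sum_le_card_nsmul _ _ (D ^ k) ?_).trans (by simp)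
      intro a _
      exact (Set.ncard_image_le (P_finite M _ _ n)).trans (ih' _)
    let R : Set (List α) := insert [] U
    have hRfin : R.Finite := hUfin.insert _
    have hDpos : 1 ≤ D ^ k := Nat.one_le_pow _ _ (by positivity)
    have hR : R.ncard ≤ (1 + Fintype.card α) * D ^ k := by
      have := Set.ncard_insert_le ([] : List α) U
      change R.ncard ≤ _ at this
      nlinarith
    have hsub : P M S q n ⊆ (fun z : List α × List α => z.1 ++ z.2) '' (T ×ˢ R) := by
      rintro w ⟨hwl, hw⟩
      obtain ⟨x, r, rfl, hx, hr⟩ := last_visit M q _ w le_rfl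
      rw [List.length_append] at hwl
      refine ⟨(x, r), ⟨⟨by simp; omega, hx⟩, ?_⟩, rfl⟩
      cases r with
      | nil => exact Set.mem_insert _ _
      | cons a r =>
        refine Set.mem_insert_of_mem _ (Set.mem_iUnion.mpr ⟨a, r, ⟨?_, ?_⟩, rfl⟩)
        · simp at hwl; omega
        · intro p hp
          have hp' : a :: p <+: a :: r := (List.prefix_cons_inj a).mpr hp
          rw [Finset.mem_erase]
          constructor
          · have := hr (a :: p) hp' (by simp)
            simpa [DFA.evalFrom_cons] using this
          · have := hw (x ++ a :: p) ((List.prefix_append_right_inj x).mpr hp')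
            rw [DFA.evalFrom_of_append, hx] at this
            simpa [DFA.evalFrom_cons] using this
    calc (P M S q n).ncard
        ≤ ((fun z : List α × List α => z.1 ++ z.2) '' (T ×ˢ R)).ncard :=
          Set.ncard_le_ncard hsub ((hTfin.prod hRfin).image _)
      _ ≤ (T ×ˢ R).ncard := Set.ncard_image_le (hTfin.prod hRfin)
      _ = T.ncard * R.ncard := Set.ncard_prod
      _ ≤ (n + 1) * ((1 + Fintype.card α) * D ^ k) := Nat.mul_le_mul hT hR
      _ = D ^ (k + 1) := by rw [hD]; ring

/-- the word obtained from a bit string -/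
def blk {α : Type} (x y : List α) (b : List Bool) : List α :=
  b.flatMap (fun c => if c then x else y)

theorem blk_length {α : Type} (x y : List α) (hxy : x.length = y.length) (b : List Bool) :
    (blk x y b).length = b.length * x.length := by
  induction b with
  | nil => simp [blk]
  | cons c b ih =>
    simp only [blk] at ih ⊢
    cases c <;> simp [ih, hxy] <;> ring

theorem blk_inj {α : Type} (x y : List α) (hxy : x.length = y.length) (hne : x ≠ y) :
    ∀ b c : List Bool, b.length = c.length → blk x y b = blk x y c → b = c := by
  intro b
  induction b with
  | nil => intro c hc _; exact (List.length_eq_zero_iff.mp hc.symm).symm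
  | cons d b ih =>
    intro c hc h
    cases c with
    | nil => simp at hc
    | cons e c =>
      simp only [blk, List.flatMap_cons] at h
      obtain ⟨h1, h2⟩ := List.append_inj h (by cases d <;> cases e <;> simp [hxy])
      have h3 := ih c (by simpa using hc) h2
      have h4 : d = e := by
        cases d <;> cases e <;> simp_all
      rw [h3, h4]

theorem blk_eval {α σ : Type} (M : DFA α σ) (q : σ) (x y : List α)
    (hx : M.evalFrom q x = q) (hy : M.evalFrom q y = q) (b : List Bool) :
    M.evalFrom q (blk x y b) = q := by
  induction b with
  | nil => simp [blk]
  | cons c b ih =>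
    simp only [blk] at ih ⊢
    rw [List.flatMap_cons, DFA.evalFrom_of_append]
    cases c <;> simp [hx, hy, ih]

theorem exp_case {α σ : Type} [Fintype α] (M : DFA α σ) (q : σ) (u v x y : List α)
    (hu : M.eval u = q) (hv : M.evalFrom q v ∈ M.accept)
    (hx : M.evalFrom q x = q) (hy : M.evalFrom q y = q)
    (hxy : x.length = y.length) (hne : x ≠ y) : ExpGrowth M.accepts := by
  have hm : 0 < x.length := by
    rcases Nat.eq_zero_or_pos x.length with h | h
    · exfalso
      apply hne
      have h' : y.length = 0 := by omega
      rw [List.length_eq_zero_iff.mp h, List.length_eq_zero_iff.mp h']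
    · exact h
  set m := x.length with hmdef
  have ha1 : (1 : ℝ) < (2 : ℝ) ^ ((1 : ℝ) / ((2 * m : ℕ) : ℝ)) :=
    Real.one_lt_rpow (by norm_num) (by positivity)
  have ha2 : ((2 : ℝ) ^ ((1 : ℝ) / ((2 * m : ℕ) : ℝ))) ^ (2 * m) = 2 := by
    rw [one_div]
    exact Real.rpow_inv_natCast_pow (by norm_num) (by omega)
  refine ⟨_, ha1, ?_⟩
  generalize (2 : ℝ) ^ ((1 : ℝ) / ((2 * m : ℕ) : ℝ)) = a at ha1 ha2
  intro N
  set c := u.length + v.length with hc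
  set k := c + N + 1 with hk
  have hkm : k ≤ k * m := Nat.le_mul_of_pos_right _ hm
  refine ⟨c + k * m, by omega, ?_⟩
  have hcount : 2 ^ k ≤ wordCount M.accepts (c + k * m) := by
    have h1 : (Set.univ : Set (List.Vector Bool k)).ncard ≤ wordCount M.accepts (c + k * m) := by
      unfold wordCount
      refine Set.ncard_le_ncard_of_injOn (fun b => u ++ (blk x y b.1 ++ v)) ?_ ?_ ?_
      · intro b _
        refine ⟨?_, ?_⟩
        · rw [DFA.mem_accepts, DFA.eval, DFA.evalFrom_of_append, DFA.evalFrom_of_append]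
          have : M.evalFrom M.start u = q := hu
          rw [this, blk_eval M q x y hx hy]
          exact hv
        · simp only [List.length_append, blk_length x y hxy, b.2, ← hmdef]
          omega
      · intro b _ d _ h
        have h' := List.append_cancel_right (List.append_cancel_left h)
        exact Subtype.ext (blk_inj x y hxy hne _ _ (b.2.trans d.2.symm) h')
      · exact (List.finite_length_eq α _).subset (fun _ hw => hw.2)
    rw [Set.ncard_univ, Nat.card_eq_fintype_card, card_vector, Fintype.card_bool] at h1
    exact h1
  calc a ^ (c + k * m) < a ^ (2 * m * k) := pow_lt_pow_right₀ ha1 (by nlinarith)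
    _ = 2 ^ k := by rw [pow_mul, ha2]
    _ ≤ _ := by exact_mod_cast hcount

theorem poly_case {α σ : Type} [Fintype α] [Fintype σ] (M : DFA α σ)
    (h : ∀ q u v, M.eval u = q → M.evalFrom q v ∈ M.accept → Good M q) :
    PolyGrowth M.accepts := by
  classical
  let S : Finset σ := Finset.univ.filter
    (fun q => ∃ u v, M.eval u = q ∧ M.evalFrom q v ∈ M.accept)
  have hS : ∀ q ∈ S, Good M q := by
    intro q hq
    obtain ⟨u, v, hu, hv⟩ := (Finset.mem_filter.mp hq).2
    exact h q u v hu hv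
  refine ⟨S.card, ((2 * (1 + Fintype.card α) : ℕ) : ℝ) ^ S.card, by positivity, 1, ?_⟩
  intro n hn
  have h1 : wordCount M.accepts n ≤ ((n + 1) * (1 + Fintype.card α)) ^ S.card := by
    refine le_trans ?_ (P_card M n S.card S rfl hS M.start)
    refine Set.ncard_le_ncard ?_ (P_finite M _ _ n)
    rintro w ⟨hw, hl⟩
    refine ⟨hl.le, ?_⟩
    rintro p ⟨t, rfl⟩
    refine Finset.mem_filter.mpr ⟨Finset.mem_univ _, p, t, rfl, ?_⟩
    rw [DFA.mem_accepts, DFA.eval, DFA.evalFrom_of_append] at hw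
    exact hw
  have h2 : wordCount M.accepts n ≤ (2 * (1 + Fintype.card α)) ^ S.card * n ^ S.card := by
    refine h1.trans ?_
    rw [← mul_pow]
    apply Nat.pow_le_pow_left
    nlinarith
  exact_mod_cast h2

end RegGrowth

/-- A regular language has either polynomial or exponential growth. -/
theorem regular_poly_or_exp_growth
    {α : Type} [Fintype α] (L : Language α) (hL : L.IsRegular) :
    PolyGrowth L ∨ ExpGrowth L := by
  obtain ⟨σ, hσ, M, rfl⟩ := hL
  by_cases h : ∀ q u v, M.eval u = q → M.evalFrom q v ∈ M.accept → RegGrowth.Good M q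
  · exact Or.inl (RegGrowth.poly_case M h)
  · right
    unfold RegGrowth.Good at h
    push Not at h
    obtain ⟨q, u, v, hu, hv, x, y, hx, hy, hl, hne⟩ := h
    exact RegGrowth.exp_case M q u v x y hu hv hx hy hl hne
end

section
/- Let L be a regular language over a finite alphabet Σ. The following are equivalent: (a) L has exponential growth; (b) there exists a real number α > 1 such that h_L(n) = Ω(α^n), where h_L(n) = |L ∩ Σ^{≤n}|; (c) there exist words w, x, y, z ∈ Σ^* with xy ≠ yx such that w·{x,y}^*·z ⊆ L; (d) there exist words s, t, u, v ∈ Σ^* with |t| = |u| and t ≠ u such that s·{t,u}^*·v ⊆ L. -/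
open Computability
section Helpers

theorem aux_last_visit {α σ : Type} (M : DFA α σ) (q : σ) :
    ∀ (n : ℕ) (w : List α), w.length ≤ n → ∃ u v, w = u ++ v ∧ M.evalFrom q u = q ∧
      ∀ p, p ≠ [] → p <+: v → M.evalFrom q p ≠ q := by
  intro n
  induction n with
  | zero =>
    intro w hw
    have : w = [] := List.length_eq_zero_iff.mp (by omega)
    subst this
    exact ⟨[], [], rfl, rfl, fun p hp h => absurd (List.prefix_nil.mp h) hp⟩
  | succ n ih =>
    intro w hw
    by_cases h : ∃ p, p ≠ [] ∧ p <+: w ∧ M.evalFrom q p = q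
    · obtain ⟨p, hp, ⟨r, rfl⟩, hq⟩ := h
      have hpl : 0 < p.length := List.length_pos_iff.mpr hp
      rw [List.length_append] at hw
      obtain ⟨u, v, rfl, hu, hv⟩ := ih r (by omega)
      refine ⟨p ++ u, v, by simp, ?_, hv⟩
      rw [DFA.evalFrom_of_append, hq, hu]
    · push Not at h
      exact ⟨[], w, rfl, rfl, h⟩

theorem aux_poly {α σ : Type} [Fintype α] (M : DFA α σ) (n : ℕ)
    (hM : ∀ w q x y z, M.eval w = q → M.evalFrom q x = q → M.evalFrom q y = q →
      M.evalFrom q z ∈ M.accept → x ++ y = y ++ x) :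
    ∀ (s : ℕ) (S : Finset σ), S.card = s → ∀ (q : σ) (w0 : List α), M.eval w0 = q →
      ∃ F : Finset (List α), F.card ≤ ((n + 1) * (Fintype.card α + 1)) ^ s ∧
        ∀ w : List α, w.length ≤ n → M.evalFrom q w ∈ M.accept →
          (∀ p, p <+: w → M.evalFrom q p ∈ S) → w ∈ F := by
  classical
  intro s
  induction s with
  | zero =>
    intro S hS q w0 hw0
    rw [Finset.card_eq_zero] at hS
    subst hS
    refine ⟨∅, by simp, fun w _ _ h => ?_⟩
    simpa using h [] List.nil_prefix
  | succ s ih =>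
    intro S hS q w0 hw0
    by_cases hne : ∃ z, M.evalFrom q z ∈ M.accept
    swap
    · exact ⟨∅, by simp, fun w _ h _ => absurd ⟨w, h⟩ hne⟩
    obtain ⟨z, hz⟩ := hne
    by_cases hqS : q ∈ S
    swap
    · exact ⟨∅, by simp, fun w _ _ h => absurd (h [] List.nil_prefix) hqS⟩
    have hcard : (S.erase q).card = s := by
      rw [Finset.card_erase_of_mem hqS, hS]; rfl
    have hF := fun a : α => ih (S.erase q) hcard (M.step q a) (w0 ++ [a]) (by
      rw [DFA.eval_append_singleton, hw0])
    choose F hFc hFm using hF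
    have hfin : {u : List α | u.length ≤ n ∧ M.evalFrom q u = q}.Finite :=
      (List.finite_length_le α n).subset fun u hu => hu.1
    set G := hfin.toFinset with hG
    have hGc : G.card ≤ n + 1 := by
      have := Finset.card_le_card_of_injOn (s := G) (t := Finset.range (n + 1)) List.length
        (by
          intro u hu
          simp [hG] at hu
          simp; omega)
        (by
          intro u hu v hv huv
          simp [hG] at hu hv
          exact (List.append_inj (hM w0 q u v z hw0 hu.2 hv.2 hz) huv).1)
      simpa using this
    set H : Finset (List α) :=
      {[]} ∪ Finset.univ.biUnion (fun a => (F a).image (List.cons a)) with hH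
    set D := (n + 1) * (Fintype.card α + 1) with hD
    have hHc : H.card ≤ 1 + Fintype.card α * D ^ s := by
      refine (Finset.card_union_le _ _).trans ?_
      refine Nat.add_le_add (by simp) ?_
      exact Finset.card_biUnion_le_card_mul _ _ _ fun a _ => Finset.card_image_le.trans (hFc a)
    refine ⟨Finset.image₂ (· ++ ·) G H, ?_, ?_⟩
    · have hDs : 1 ≤ D ^ s := Nat.one_le_pow _ _ (by positivity)
      calc _ ≤ G.card * H.card := Finset.card_image₂_le _ _ _
        _ ≤ (n + 1) * (1 + Fintype.card α * D ^ s) := Nat.mul_le_mul hGc hHc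
        _ ≤ (n + 1) * (D ^ s + Fintype.card α * D ^ s) := by gcongr
        _ = D ^ (s + 1) := by rw [pow_succ, hD]; ring
    · intro w hw hacc hpre
      obtain ⟨u, v, rfl, hu, hv⟩ := aux_last_visit M q w.length w le_rfl
      rw [List.length_append] at hw
      rw [DFA.evalFrom_of_append, hu] at hacc
      refine Finset.mem_image₂.mpr ⟨u, ?_, v, ?_, rfl⟩
      · simp [hG, hu]; omega
      · cases v with
        | nil => simp [hH]
        | cons a v =>
          simp only [hH, Finset.mem_union, Finset.mem_biUnion, Finset.mem_image]
          right
          refine ⟨a, Finset.mem_univ _, v, hFm a v ?_ hacc ?_, rfl⟩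
          · simp at hw; omega
          · intro p hp
            have h1 : a :: p <+: a :: v := by simpa using hp
            rw [Finset.mem_erase]
            refine ⟨hv (a :: p) (by simp) h1, ?_⟩
            have h2 := hpre (u ++ a :: p) (by simpa using h1)
            rw [DFA.evalFrom_of_append, hu] at h2
            exact h2

theorem aux_finLe {α : Type} [Fintype α] (L : Language α) (n : ℕ) :
    {w | w ∈ L ∧ w.length ≤ n}.Finite :=
  (List.finite_length_le α n).subset fun _ hu => hu.2

theorem aux_finEq {α : Type} [Fintype α] (L : Language α) (n : ℕ) :
    {w | w ∈ L ∧ w.length = n}.Finite :=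
  (List.finite_length_le α n).subset fun _ hu => hu.2.le

theorem aux_count_le {α : Type} [Fintype α] (L : Language α) {m n : ℕ} (h : m ≤ n) :
    wordCount L m ≤ wordCountLe L n :=
  Set.ncard_le_ncard (fun _ hw => ⟨hw.1, hw.2.le.trans h⟩) (aux_finLe L n)

/-- If (c) fails then the growth is polynomial. -/
theorem aux_main {α : Type} [Fintype α] (L : Language α) (hL : L.IsRegular)
    (hc : ¬ ∃ w x y z : List α, x ++ y ≠ y ++ x ∧
        ({w} : Language α) * (({x} : Language α) + {y})∗ * {z} ≤ L) :
    ∃ C s : ℕ, ∀ n, wordCountLe L n ≤ (C * (n + 1)) ^ s := by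
  classical
  obtain ⟨σ, _, M, rfl⟩ := hL
  refine ⟨Fintype.card α + 1, Fintype.card σ, fun n => ?_⟩
  obtain ⟨F, hF, hm⟩ := aux_poly M n (by
    intro w q x y z hw hx hy hz
    by_contra hne
    refine hc ⟨w, x, y, z, hne, ?_⟩
    rintro _ ⟨_, ⟨_, rfl, r, hr, rfl⟩, _, rfl, rfl⟩
    obtain ⟨l, rfl, hl⟩ := Language.mem_kstar.mp hr
    clear hr
    have key : M.evalFrom q l.flatten = q := by
      induction l with
      | nil => rfl
      | cons b l ih =>
        have hb : M.evalFrom q b = q := by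
          rcases hl b (by simp) with h | h
          · rw [show b = x from h]; exact hx
          · rw [show b = y from h]; exact hy
        rw [List.flatten_cons, DFA.evalFrom_of_append, hb]
        exact ih fun y hy => hl y (by simp [hy])
    refine (DFA.mem_accepts M).mpr ?_
    show M.evalFrom M.start ((_ ++ _) ++ _) ∈ _
    rw [DFA.evalFrom_of_append, DFA.evalFrom_of_append]
    change M.evalFrom (M.evalFrom (M.eval _) _) _ ∈ _
    rw [hw, key]
    exact hz) _ Finset.univ rfl M.start [] rfl
  rw [mul_comm, ← Finset.card_univ (α := σ)]
  refine le_trans ?_ hF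
  rw [wordCountLe, ← Set.ncard_coe_finset]
  refine Set.ncard_le_ncard ?_ F.finite_toSet
  intro w hw
  exact hm w hw.2 hw.1 (by simp)

theorem aux_not_exp (C s : ℕ) (a c : ℝ) (ha : 1 < a) (hc : 0 < c) :
    ∃ N : ℕ, ∀ n, N ≤ n → (((C * (n + 1)) ^ s : ℕ) : ℝ) < c * a ^ n := by
  have h := tendsto_pow_const_div_const_pow_of_one_lt s ha
  set B : ℝ := (2 * C + 1) ^ s with hB
  have hB0 : 0 < B := by positivity
  have h2 := h.eventually (gt_mem_nhds (show (0:ℝ) < c / B by positivity))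
  obtain ⟨N, hN⟩ := Filter.eventually_atTop.mp h2
  refine ⟨max N 1, fun n hn => ?_⟩
  have h3 := hN n ((le_max_left _ _).trans hn)
  have hn1 : (1:ℝ) ≤ n := by exact_mod_cast (le_max_right _ _).trans hn
  have hap : 0 < a ^ n := by positivity
  rw [div_lt_div_iff₀ hap hB0] at h3
  refine lt_of_le_of_lt ?_ h3
  rw [hB, ← mul_pow]
  push_cast
  have hC0 : (0:ℝ) ≤ C := by positivity
  refine pow_le_pow_left₀ (by positivity) ?_ s
  nlinarith

theorem aux_finset {α : Type} (K : Language α) (t u : List α) (hl : t.length = u.length)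
    (hne : t ≠ u) (h0 : [] ∈ K) (ht : ∀ w ∈ K, t ++ w ∈ K) (hu : ∀ w ∈ K, u ++ w ∈ K) (k : ℕ) :
    ∃ F : Finset (List α), F.card = 2 ^ k ∧ ∀ w ∈ F, w ∈ K ∧ w.length = k * t.length := by
  classical
  induction k with
  | zero => exact ⟨{[]}, by simp, by simpa using h0⟩
  | succ k ih =>
    obtain ⟨F, hF, hm⟩ := ih
    refine ⟨F.image (t ++ ·) ∪ F.image (u ++ ·), ?_, ?_⟩
    · rw [Finset.card_union_of_disjoint, Finset.card_image_of_injective _ (List.append_right_injective t),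
        Finset.card_image_of_injective _ (List.append_right_injective u), hF, pow_succ]
      · ring
      · rw [Finset.disjoint_left]
        intro w h1 h2
        simp only [Finset.mem_image] at h1 h2
        obtain ⟨x, _, rfl⟩ := h1
        obtain ⟨y, _, h⟩ := h2
        exact hne (List.append_inj h hl.symm).1.symm
    · intro w hw
      simp only [Finset.mem_union, Finset.mem_image] at hw
      rcases hw with ⟨x, hx, rfl⟩ | ⟨x, hx, rfl⟩
      · refine ⟨ht _ (hm x hx).1, ?_⟩
        rw [List.length_append, (hm x hx).2]; ring
      · refine ⟨hu _ (hm x hx).1, ?_⟩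
        rw [List.length_append, (hm x hx).2, ← hl]; ring

theorem aux_lower {α : Type} [Fintype α] (L : Language α) (s t u v : List α)
    (hl : t.length = u.length) (hne : t ≠ u)
    (h : ({s} : Language α) * (({t} : Language α) + {u})∗ * {v} ≤ L) (k : ℕ) :
    2 ^ k ≤ wordCount L (s.length + v.length + k * t.length) := by
  classical
  have hcons : ∀ b ∈ (({t} : Language α) + {u}), ∀ w ∈ (({t} : Language α) + {u})∗,
      b ++ w ∈ (({t} : Language α) + {u})∗ := by
    intro b hb w hw
    rw [Language.mem_kstar] at hw ⊢
    obtain ⟨l, rfl, hl⟩ := hw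
    refine ⟨b :: l, by simp, ?_⟩
    intro y hy
    rcases List.mem_cons.mp hy with rfl | hy
    · exact hb
    · exact hl y hy
  obtain ⟨F, hF, hm⟩ := aux_finset ((({t} : Language α) + {u})∗) t u hl hne
    (Language.nil_mem_kstar _) (hcons t (Or.inl rfl)) (hcons u (Or.inr rfl)) k
  have hinj : Function.Injective (fun w => s ++ w ++ v) := by
    intro x y hxy
    simpa using hxy
  rw [← hF, ← Finset.card_image_of_injective F hinj, ← Set.ncard_coe_finset]
  refine Set.ncard_le_ncard ?_ (aux_finEq L _)
  intro w hw
  simp only [Finset.coe_image, Set.mem_image, Finset.mem_coe] at hw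
  obtain ⟨x, hx, rfl⟩ := hw
  refine ⟨h ⟨s ++ x, ⟨s, rfl, x, (hm x hx).1, rfl⟩, v, rfl, rfl⟩, ?_⟩
  simp only [List.length_append, (hm x hx).2]; ring

theorem aux_root (p : ℕ) (hp : p ≠ 0) : ∃ a : ℝ, 1 < a ∧ a ^ p = 2 := by
  refine ⟨(2:ℝ) ^ ((p:ℝ)⁻¹), ?_, Real.rpow_inv_natCast_pow (by norm_num) hp⟩
  exact Real.one_lt_rpow (by norm_num) (by positivity)

theorem aux_pos {α : Type} {t u : List α} (hl : t.length = u.length) (hne : t ≠ u) :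
    t.length ≠ 0 := by
  intro h
  apply hne
  rw [List.length_eq_zero_iff.mp h, List.length_eq_zero_iff.mp (hl.symm.trans h)]

end Helpers

/-- For a regular language `L`, the following are equivalent:
(a) `L` has exponential growth;
(b) `h_L(n) = Ω(α^n)` for some real `α > 1`;
(c) `w·{x,y}*·z ⊆ L` for some words with `xy ≠ yx`;
(d) `s·{t,u}*·v ⊆ L` for some words with `|t| = |u|` and `t ≠ u`. -/
theorem regular_exp_growth_tfae
    {α : Type} [Fintype α] (L : Language α) (hL : L.IsRegular) :
    (ExpGrowth L ↔
      (∃ a : ℝ, 1 < a ∧ ∃ c : ℝ, 0 < c ∧ ∃ n0 : ℕ, ∀ n : ℕ, n0 ≤ n →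
        c * a ^ n ≤ (wordCountLe L n : ℝ)))
    ∧ (ExpGrowth L ↔
      (∃ w x y z : List α, x ++ y ≠ y ++ x ∧
        ({w} : Language α) * (({x} : Language α) + {y})∗ * {z} ≤ L))
    ∧ (ExpGrowth L ↔
      (∃ s t u v : List α, t.length = u.length ∧ t ≠ u ∧
        ({s} : Language α) * (({t} : Language α) + {u})∗ * {v} ≤ L)) := by
  have hcd : (∃ w x y z : List α, x ++ y ≠ y ++ x ∧
        ({w} : Language α) * (({x} : Language α) + {y})∗ * {z} ≤ L) →
      (∃ s t u v : List α, t.length = u.length ∧ t ≠ u ∧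
        ({s} : Language α) * (({t} : Language α) + {u})∗ * {v} ≤ L) := by
    rintro ⟨w, x, y, z, hne, h⟩
    refine ⟨w, x ++ y, y ++ x, z, by simp [add_comm], hne, le_trans ?_ h⟩
    have h1 : (({x ++ y} : Language α) + {y ++ x}) ≤ (({x} : Language α) + {y})∗ := by
      rintro b (hb | hb)
      · rw [show b = x ++ y from hb]
        refine Language.mem_kstar.mpr ⟨[x, y], by simp, ?_⟩
        intro c hc
        simp only [List.mem_cons, List.not_mem_nil, or_false] at hc
        rcases hc with rfl | rfl
        · exact Or.inl rfl
        · exact Or.inr rfl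
      · rw [show b = y ++ x from hb]
        refine Language.mem_kstar.mpr ⟨[y, x], by simp, ?_⟩
        intro c hc
        simp only [List.mem_cons, List.not_mem_nil, or_false] at hc
        rcases hc with rfl | rfl
        · exact Or.inr rfl
        · exact Or.inl rfl
    have h2 : (({x ++ y} : Language α) + {y ++ x})∗ ≤ (({x} : Language α) + {y})∗ := by
      have := kstar_mono h1
      rwa [kstar_idem] at this
    exact mul_le_mul' (mul_le_mul' le_rfl h2) le_rfl
  have hdc : (∃ s t u v : List α, t.length = u.length ∧ t ≠ u ∧
        ({s} : Language α) * (({t} : Language α) + {u})∗ * {v} ≤ L) →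
      (∃ w x y z : List α, x ++ y ≠ y ++ x ∧
        ({w} : Language α) * (({x} : Language α) + {y})∗ * {z} ≤ L) := by
    rintro ⟨s, t, u, v, hl, hne, h⟩
    exact ⟨s, t, u, v, fun he => hne (List.append_inj he hl).1, h⟩
  have hda : (∃ s t u v : List α, t.length = u.length ∧ t ≠ u ∧
        ({s} : Language α) * (({t} : Language α) + {u})∗ * {v} ≤ L) → ExpGrowth L := by
    rintro ⟨s, t, u, v, hl, hne, h⟩
    have hp := aux_pos hl hne
    obtain ⟨a, ha, hap⟩ := aux_root (2 * t.length) (by omega)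
    refine ⟨a, ha, fun N => ?_⟩
    have hlow := aux_lower L s t u v hl hne h (s.length + v.length + N + 1)
    set C := s.length + v.length with hC
    set m := t.length with hm
    have hk : C + N + 1 ≤ (C + N + 1) * m := Nat.le_mul_of_pos_right _ (by omega)
    refine ⟨C + (C + N + 1) * m, by omega, ?_⟩
    have h2 : (2:ℝ) ^ (C + N + 1) ≤ (wordCount L (C + (C + N + 1) * m) : ℝ) := by
      exact_mod_cast hlow
    refine lt_of_lt_of_le ?_ h2
    rw [← hap, ← pow_mul]
    refine pow_lt_pow_right₀ ha ?_
    have : 2 * m * (C + N + 1) = (C + N + 1) * m + (C + N + 1) * m := by ring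
    omega
  have hdb : (∃ s t u v : List α, t.length = u.length ∧ t ≠ u ∧
        ({s} : Language α) * (({t} : Language α) + {u})∗ * {v} ≤ L) →
      (∃ a : ℝ, 1 < a ∧ ∃ c : ℝ, 0 < c ∧ ∃ n0 : ℕ, ∀ n : ℕ, n0 ≤ n →
        c * a ^ n ≤ (wordCountLe L n : ℝ)) := by
    rintro ⟨s, t, u, v, hl, hne, h⟩
    have hp := aux_pos hl hne
    obtain ⟨a, ha, hap⟩ := aux_root t.length hp
    have hlow := aux_lower L s t u v hl hne h
    set C := s.length + v.length with hC
    set m := t.length with hm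
    refine ⟨a, ha, (a ^ (C + m))⁻¹, by positivity, C, fun n hn => ?_⟩
    have h1 := Nat.div_add_mod (n - C) m
    have h3 := Nat.mod_lt (n - C) (Nat.pos_of_ne_zero hp)
    set k := (n - C) / m with hk
    have h2 : (2:ℝ) ^ k ≤ (wordCountLe L n : ℝ) := by
      have := (hlow k).trans (aux_count_le L (n := n) (by rw [mul_comm k m]; omega))
      exact_mod_cast this
    refine le_trans ?_ h2
    rw [inv_mul_le_iff₀ (by positivity), ← hap, ← pow_mul, ← pow_add]
    exact pow_le_pow_right₀ ha.le (by omega)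
  have hac : ExpGrowth L → (∃ w x y z : List α, x ++ y ≠ y ++ x ∧
        ({w} : Language α) * (({x} : Language α) + {y})∗ * {z} ≤ L) := by
    rintro ⟨a, ha, h⟩
    by_contra hc
    obtain ⟨C, s, hb⟩ := aux_main L hL hc
    obtain ⟨N, hN⟩ := aux_not_exp C s a 1 ha one_pos
    obtain ⟨n, hn, hlt⟩ := h N
    have h1 := hN n hn
    have h2 : (wordCount L n : ℝ) ≤ (((C * (n + 1)) ^ s : ℕ) : ℝ) := by
      exact_mod_cast (aux_count_le L le_rfl).trans (hb n)
    linarith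
  have hbc : (∃ a : ℝ, 1 < a ∧ ∃ c : ℝ, 0 < c ∧ ∃ n0 : ℕ, ∀ n : ℕ, n0 ≤ n →
        c * a ^ n ≤ (wordCountLe L n : ℝ)) →
      (∃ w x y z : List α, x ++ y ≠ y ++ x ∧
        ({w} : Language α) * (({x} : Language α) + {y})∗ * {z} ≤ L) := by
    rintro ⟨a, ha, c, hc0, n0, h⟩
    by_contra hc
    obtain ⟨C, s, hb⟩ := aux_main L hL hc
    obtain ⟨N, hN⟩ := aux_not_exp C s a c ha hc0
    have h1 := hN (max N n0) (le_max_left _ _)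
    have h2 := h (max N n0) (le_max_right _ _)
    have h3 : (wordCountLe L (max N n0) : ℝ) ≤ (((C * (max N n0 + 1)) ^ s : ℕ) : ℝ) := by
      exact_mod_cast hb _
    linarith
  exact ⟨⟨fun h => hdb (hcd (hac h)), fun h => hda (hcd (hbc h))⟩,
    ⟨hac, fun h => hda (hcd h)⟩, ⟨fun h => hcd (hac h), hda⟩⟩
end

section
/- Let L be a language of exponential growth accepted by a deterministic finite automaton with n states. Then there exist words s, t, u, v with |s| < n, |v| < n, |t| = |u| < 3n, and t ≠ u, such that s·{t,u}^*·v ⊆ L. -/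
open Computability
lemma short_path {α σ : Type} [Fintype σ] (M : DFA α σ) (q p : σ) :
    ∀ (N : ℕ) (w : List α), w.length ≤ N → M.evalFrom q w = p →
      ∃ w' : List α, w'.length < Fintype.card σ ∧ M.evalFrom q w' = p := by
  intro N
  induction N with
  | zero =>
    intro w hw h
    have : Nonempty σ := ⟨q⟩
    exact ⟨w, by have := Fintype.card_pos (α := σ); omega, h⟩
  | succ N ih =>
    intro w hw h
    by_cases hlt : w.length < Fintype.card σ
    · exact ⟨w, hlt, h⟩
    · obtain ⟨r, a, b, c, hx, _, hb, h1, h2, h3⟩ := M.evalFrom_split (not_lt.mp hlt) h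
      have hbl : 0 < b.length := List.length_pos_iff.mpr hb
      refine ih (a ++ c) ?_ ?_
      · subst hx; simp at hw ⊢; omega
      · rw [DFA.evalFrom_of_append, h1, h3]

/-- words of length `m` leading from `q` to acceptance -/
def wordsFrom {α σ : Type} (M : DFA α σ) (q : σ) (m : ℕ) : Set (List α) :=
  {w | M.evalFrom q w ∈ M.accept ∧ w.length = m}

/-- states reachable from `q` -/
def reachSet {α σ : Type} (M : DFA α σ) (q : σ) : Set σ :=
  {p | ∃ w, M.evalFrom q w = p}

lemma wordsFrom_finite {α σ : Type} [Fintype α] (M : DFA α σ) (q : σ) (m : ℕ) :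
    (wordsFrom M q m).Finite :=
  (List.finite_length_eq α m).subset fun _ h => h.2

lemma wordsFrom_succ_le {α σ : Type} [Fintype α] (M : DFA α σ) (q : σ) (m : ℕ) :
    (wordsFrom M q (m + 1)).ncard ≤ ∑ a : α, (wordsFrom M (M.step q a) m).ncard := by
  have h : wordsFrom M q (m + 1) ⊆ ⋃ a : α, (List.cons a) '' wordsFrom M (M.step q a) m := by
    rintro w ⟨h1, h2⟩
    cases w with
    | nil => simp at h2
    | cons a w =>
      refine Set.mem_iUnion.mpr ⟨a, w, ⟨?_, ?_⟩, rfl⟩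
      · simpa [DFA.evalFrom_cons] using h1
      · simpa using h2
  have hfin : (⋃ a : α, (List.cons a) '' wordsFrom M (M.step q a) m).Finite :=
    Set.finite_iUnion fun a => (wordsFrom_finite M _ m).image _
  refine (Set.ncard_le_ncard h hfin).trans ((Set.ncard_iUnion_le_of_fintype _).trans ?_)
  exact Finset.sum_le_sum fun a _ => Set.ncard_image_le (wordsFrom_finite M _ m)

lemma reachSet_step {α σ : Type} (M : DFA α σ) (q : σ) (a : α) :
    reachSet M (M.step q a) ⊆ reachSet M q := by
  rintro p ⟨w, hw⟩
  exact ⟨a :: w, by simpa [DFA.evalFrom_cons] using hw⟩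

lemma count_bound {α σ : Type} [Fintype α] [Fintype σ] (M : DFA α σ)
    (H : ∀ q ∈ reachSet M M.start, (∃ v, M.evalFrom q v ∈ M.accept) →
      ∀ a b : α, q ∈ reachSet M (M.step q a) → q ∈ reachSet M (M.step q b) → a = b) :
    ∀ (m : ℕ) (q : σ), q ∈ reachSet M M.start →
      (wordsFrom M q m).ncard ≤ ((Fintype.card α + 1) * (m + 1)) ^ (reachSet M q).ncard := by
  classical
  intro m
  induction m with
  | zero =>
    intro q _
    have h1 : (wordsFrom M q 0).ncard ≤ 1 := by
      have : wordsFrom M q 0 ⊆ {[]} := by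
        rintro w ⟨_, h⟩
        simpa using h
      simpa using Set.ncard_le_ncard this (Set.finite_singleton _)
    exact h1.trans (Nat.one_le_pow _ _ (by positivity))
  | succ m ih =>
    intro q hq
    by_cases hco : ∃ v, M.evalFrom q v ∈ M.accept
    swap
    · have : wordsFrom M q (m + 1) = ∅ := by
        ext w
        simp only [Set.mem_empty_iff_false, iff_false]
        exact fun h => hco ⟨w, h.1⟩
      simp [this]
    have huniq := H q hq hco
    set k := Fintype.card α with hk
    have hqq : q ∈ reachSet M q := ⟨[], rfl⟩
    have hpos : 0 < (reachSet M q).ncard := (Set.ncard_pos (Set.toFinite _)).mpr ⟨q, hqq⟩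
    obtain ⟨r, hr⟩ : ∃ r, (reachSet M q).ncard = r + 1 := ⟨_, (Nat.succ_pred_eq_of_pos hpos).symm⟩
    rw [hr]
    set B := (k + 1) * (m + 1) with hB
    have hBpos : 0 < B := by positivity
    have hstep : ∀ a, M.step q a ∈ reachSet M M.start := by
      intro a
      obtain ⟨w, hw⟩ := hq
      exact ⟨w ++ [a], by rw [DFA.evalFrom_of_append, hw]; simp⟩
    have hterm : ∀ a, (wordsFrom M (M.step q a) m).ncard ≤
        B ^ r + if q ∈ reachSet M (M.step q a) then B ^ (r + 1) else 0 := by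
      intro a
      have h := ih _ (hstep a)
      split_ifs with hc
      · refine h.trans (le_trans (Nat.pow_le_pow_right hBpos ?_) (Nat.le_add_left _ _))
        rw [← hr]
        exact Set.ncard_le_ncard (reachSet_step M q a) (Set.toFinite _)
      · refine h.trans (Nat.pow_le_pow_right hBpos ?_)
        have : (reachSet M (M.step q a)).ncard < (reachSet M q).ncard :=
          Set.ncard_lt_ncard ⟨reachSet_step M q a, fun hs => hc (hs hqq)⟩ (Set.toFinite _)
        omega
    have hsum : (∑ a : α, if q ∈ reachSet M (M.step q a) then B ^ (r + 1) else 0) ≤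
        B ^ (r + 1) := by
      rw [← Finset.sum_filter, Finset.sum_const, smul_eq_mul]
      have : (Finset.univ.filter fun a => q ∈ reachSet M (M.step q a)).card ≤ 1 := by
        rw [Finset.card_le_one]
        intro a ha b hb
        simp only [Finset.mem_filter, Finset.mem_univ, true_and] at ha hb
        exact huniq a b ha hb
      nlinarith [Nat.zero_le (B ^ (r + 1))]
    calc (wordsFrom M q (m + 1)).ncard
        ≤ ∑ a : α, (wordsFrom M (M.step q a) m).ncard := wordsFrom_succ_le M q m
      _ ≤ ∑ a : α, (B ^ r + if q ∈ reachSet M (M.step q a) then B ^ (r + 1) else 0) :=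
          Finset.sum_le_sum fun a _ => hterm a
      _ ≤ k * B ^ r + B ^ (r + 1) := by
          rw [Finset.sum_add_distrib]
          simpa [hk] using hsum
      _ = B ^ r * (B + k) := by ring
      _ ≤ ((k + 1) * (m + 1 + 1)) ^ r * ((k + 1) * (m + 1 + 1)) := by
          refine Nat.mul_le_mul (Nat.pow_le_pow_left ?_ r) ?_
          · exact Nat.mul_le_mul_left _ (by omega)
          · rw [hB]; nlinarith
      _ = _ := (pow_succ _ _).symm

lemma poly_lt_exp (a : ℝ) (ha : 1 < a) (K d : ℕ) :
    ∃ N : ℕ, ∀ m, N ≤ m → ((((K * (m + 1)) ^ d : ℕ)) : ℝ) ≤ a ^ m := by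
  have h := tendsto_pow_const_div_const_pow_of_one_lt d ha
  have h2 := (h.const_mul ((2 * K : ℝ) ^ d))
  rw [mul_zero] at h2
  have h3 := (h2.eventually (gt_mem_nhds one_pos)).and (Filter.eventually_ge_atTop 1)
  obtain ⟨N, hN⟩ := Filter.eventually_atTop.mp h3
  refine ⟨N, fun m hm => ?_⟩
  obtain ⟨h4, h5⟩ := hN m hm
  have hapos : 0 < a ^ m := by positivity
  rw [← mul_div_assoc, div_lt_one hapos, ← mul_pow] at h4
  refine le_trans ?_ h4.le
  push_cast
  have h6 : (1 : ℝ) ≤ m := by exact_mod_cast h5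
  have h7 : (0 : ℝ) ≤ K := by positivity
  refine pow_le_pow_left₀ (by positivity) ?_ d
  nlinarith

lemma evalFrom_kstar {α σ : Type} (M : DFA α σ) (q : σ) (t u : List α)
    (ht : M.evalFrom q t = q) (hu : M.evalFrom q u = q) (w : List α)
    (hw : w ∈ (({t} : Language α) + {u})∗) : M.evalFrom q w = q := by
  obtain ⟨S, rfl, hS⟩ := Language.mem_kstar.mp hw
  clear hw
  induction S with
  | nil => rfl
  | cons x S ih =>
    rw [List.flatten_cons, DFA.evalFrom_of_append]
    have hx : M.evalFrom q x = q := by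
      rcases (Language.mem_add _ _ _).mp (hS x (by simp)) with h | h
      · rw [show x = t from h, ht]
      · rw [show x = u from h, hu]
    rw [hx]
    exact ih fun y hy => hS y (by simp [hy])

/-- If a language of exponential growth is accepted by a DFA with `n` states, then there
are words `s, t, u, v` with `|s| < n`, `|v| < n`, `|t| = |u| < 3n` and `t ≠ u` such that
`s·{t,u}*·v ⊆ L`. -/
theorem exp_growth_short_witnesses
    {α : Type} [Fintype α] {σ : Type} [Fintype σ] (n : ℕ) (hcard : Fintype.card σ = n)
    (M : DFA α σ) (L : Language α) (hacc : M.accepts = L) (hexp : ExpGrowth L) :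
    ∃ s t u v : List α, s.length < n ∧ v.length < n ∧
      t.length = u.length ∧ t.length < 3 * n ∧ t ≠ u ∧
      ({s} : Language α) * (({t} : Language α) + {u})∗ * {v} ≤ L := by
  subst hacc hcard
  by_cases H : ∀ q ∈ reachSet M M.start, (∃ v, M.evalFrom q v ∈ M.accept) →
      ∀ a b : α, q ∈ reachSet M (M.step q a) → q ∈ reachSet M (M.step q b) → a = b
  · exfalso
    obtain ⟨a, ha, hinf⟩ := hexp
    obtain ⟨N, hN⟩ := poly_lt_exp a ha (Fintype.card α + 1) (reachSet M M.start).ncard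
    obtain ⟨m, hm, hlt⟩ := hinf N
    have h1 := count_bound M H m M.start ⟨[], rfl⟩
    have h2 : wordCount M.accepts m = (wordsFrom M M.start m).ncard := rfl
    rw [h2] at hlt
    have h3 : ((wordsFrom M M.start m).ncard : ℝ) ≤ _ := Nat.cast_le.mpr h1
    exact absurd (hlt.trans_le (h3.trans (hN m hm))) (lt_irrefl _)
  · push Not at H
    obtain ⟨q, ⟨s0, hs0⟩, ⟨v0, hv0⟩, a, b, ⟨x0, hx0⟩, ⟨y0, hy0⟩, hab⟩ := H
    obtain ⟨s, hsl, hs⟩ := short_path M _ _ _ s0 le_rfl hs0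
    obtain ⟨v, hvl, hv⟩ := short_path M q _ _ v0 le_rfl rfl
    obtain ⟨x, hxl, hx⟩ := short_path M _ _ _ x0 le_rfl hx0
    obtain ⟨y, hyl, hy⟩ := short_path M _ _ _ y0 le_rfl hy0
    have hax : M.evalFrom q (a :: x) = q := by simpa [DFA.evalFrom_cons] using hx
    have hby : M.evalFrom q (b :: y) = q := by simpa [DFA.evalFrom_cons] using hy
    refine ⟨s, (a :: x) ++ (b :: y), (b :: y) ++ (a :: x), v, hsl, hvl, ?_, ?_, ?_, ?_⟩
    · simp only [List.length_append]; omega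
    · simp only [List.length_append, List.length_cons]; omega
    · intro h
      simp only [List.cons_append, List.cons.injEq] at h
      exact hab h.1
    · intro w hw
      obtain ⟨w1, hw1, v', hv', rfl⟩ := Language.mem_mul.mp hw
      obtain ⟨s', hs', w2, hw2, rfl⟩ := Language.mem_mul.mp hw1
      obtain rfl : s' = s := hs'
      obtain rfl : v' = v := hv'
      change M.evalFrom M.start (s' ++ w2 ++ v') ∈ M.accept
      rw [DFA.evalFrom_of_append, DFA.evalFrom_of_append, hs,
        evalFrom_kstar M q _ _ (by rw [DFA.evalFrom_of_append, hax, hby])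
          (by rw [DFA.evalFrom_of_append, hby, hax]) w2 hw2, hv]
      exact hv0
end

section
/- Let k ≥ 2 be an integer and let S be a k-automatic subset of ℕ. Then S is non-sparse if and only if there exists a real number α > 0 such that π_S(x) = Ω(x^α). -/
/-- The run of `M` on the word from the given state stays in `T` and ends in an accepting state. -/
def AvoidRun {k m : ℕ} (M : DFA (Fin k) (Fin m)) (T : Finset (Fin m)) :
    Fin m → List (Fin k) → Prop
  | q, [] => q ∈ T ∧ q ∈ M.accept
  | q, a :: w => q ∈ T ∧ AvoidRun M T (M.step q a) w

lemma AvoidRun.mem {k m : ℕ} {M : DFA (Fin k) (Fin m)} {T : Finset (Fin m)} {q : Fin m}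
    {w : List (Fin k)} (h : AvoidRun M T q w) : q ∈ T := by
  cases w with
  | nil => exact h.1
  | cons a w => exact h.1

lemma AvoidRun.accept {k m : ℕ} {M : DFA (Fin k) (Fin m)} {T : Finset (Fin m)}
    {w : List (Fin k)} : ∀ {q : Fin m}, AvoidRun M T q w → M.evalFrom q w ∈ M.accept := by
  induction w with
  | nil => intro q h; exact h.2
  | cons a w ih => intro q h; exact ih h.2

lemma avoidRun_univ {k m : ℕ} {M : DFA (Fin k) (Fin m)}
    {w : List (Fin k)} : ∀ {q : Fin m}, M.evalFrom q w ∈ M.accept →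
      AvoidRun M Finset.univ q w := by
  induction w with
  | nil => intro q h; exact ⟨Finset.mem_univ _, h⟩
  | cons a w ih => intro q h; exact ⟨Finset.mem_univ _, ih h⟩

lemma AvoidRun.split {k m : ℕ} {M : DFA (Fin k) (Fin m)} {T : Finset (Fin m)} (q : Fin m)
    {w : List (Fin k)} : ∀ {p : Fin m}, AvoidRun M T p w →
      AvoidRun M (T.erase q) p w ∨ M.evalFrom p w = q ∨
      ∃ w1 a w2, w = w1 ++ a :: w2 ∧ M.evalFrom p w1 = q ∧
        AvoidRun M (T.erase q) (M.step q a) w2 := by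
  induction w with
  | nil =>
    intro p h
    by_cases hp : p = q
    · right; left; simpa using hp
    · left; exact ⟨Finset.mem_erase.2 ⟨hp, h.1⟩, h.2⟩
  | cons b w ih =>
    intro p h
    rcases ih h.2 with h1 | h1 | ⟨w1, a, w2, rfl, h2, h3⟩
    · by_cases hp : p = q
      · subst hp
        right; right
        exact ⟨[], b, w, rfl, rfl, h1⟩
      · left; exact ⟨Finset.mem_erase.2 ⟨hp, h.1⟩, h1⟩
    · right; left; exact h1
    · right; right
      exact ⟨b :: w1, a, w2, rfl, h2, h3⟩

/-- Useful states have at most one loop of each length. -/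
def UniqueLoops {k m : ℕ} (M : DFA (Fin k) (Fin m)) : Prop :=
  ∀ u v w1 w2 : List (Fin k), M.evalFrom (M.eval u) v ∈ M.accept → w1.length = w2.length →
    M.evalFrom (M.eval u) w1 = M.eval u → M.evalFrom (M.eval u) w2 = M.eval u → w1 = w2

lemma cover {k m : ℕ} (hk : 1 ≤ k) {M : DFA (Fin k) (Fin m)} (H : UniqueLoops M) (N : ℕ) :
    ∀ (t : ℕ) (T : Finset (Fin m)), T.card = t → ∀ (u : List (Fin k)) (n : ℕ), n ≤ N →
      ∃ F : Finset (List (Fin k)), F.card ≤ (k * (N + 1)) ^ t ∧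
        ∀ w, w.length = n → AvoidRun M T (M.eval u) w → w ∈ F := by
  intro t
  induction t with
  | zero =>
    intro T hT u n _
    refine ⟨∅, by simp, fun w _ hw => ?_⟩
    have := hw.mem
    rw [Finset.card_eq_zero.1 hT] at this
    simp at this
  | succ t ih =>
    intro T hT u n hn
    by_cases hex : ∃ w, AvoidRun M T (M.eval u) w
    swap
    · refine ⟨∅, by simp, fun w _ hw => (hex ⟨w, hw⟩).elim⟩
    obtain ⟨v, hv⟩ := hex
    have hq := hv.mem
    have hl : ∀ i : ℕ, ∃ l : List (Fin k), ∀ w : List (Fin k), w.length = i →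
        M.evalFrom (M.eval u) w = M.eval u → w = l := by
      intro i
      by_cases h : ∃ w : List (Fin k), w.length = i ∧ M.evalFrom (M.eval u) w = M.eval u
      · obtain ⟨l, h1, h2⟩ := h
        exact ⟨l, fun w hw hw' => H u v w l hv.accept (hw.trans h1.symm) hw' h2⟩
      · exact ⟨[], fun w hw hw' => (h ⟨w, hw, hw'⟩).elim⟩
    choose l hl using hl
    have hG : ∀ (i : ℕ) (a : Fin k), ∃ F : Finset (List (Fin k)), F.card ≤ (k * (N + 1)) ^ t ∧
        ∀ w, w.length = n - 1 - i → AvoidRun M (T.erase (M.eval u)) (M.step (M.eval u) a) w →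
          w ∈ F := by
      intro i a
      have := ih (T.erase (M.eval u)) (by rw [Finset.card_erase_of_mem hq, hT]; rfl)
        (u ++ [a]) (n - 1 - i) (by omega)
      simpa [DFA.eval_append_singleton] using this
    choose G hGc hG using hG
    refine ⟨insert (l n) ((Finset.range n).biUnion fun i => Finset.univ.biUnion fun a =>
      (G i a).image (fun w => l i ++ a :: w)), ?_, ?_⟩
    · refine (Finset.card_insert_le _ _).trans ?_
      have h1 : ((Finset.range n).biUnion fun i => Finset.univ.biUnion fun a =>
          (G i a).image (fun w => l i ++ a :: w)).card ≤ n * (k * (k * (N + 1)) ^ t) := by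
        have := Finset.card_biUnion_le_card_mul (Finset.range n)
          (fun i => Finset.univ.biUnion fun a => (G i a).image (fun w => l i ++ a :: w))
          (k * (k * (N + 1)) ^ t) (fun i _ => by
            have := Finset.card_biUnion_le_card_mul (Finset.univ : Finset (Fin k))
              (fun a => (G i a).image (fun w => l i ++ a :: w)) ((k * (N + 1)) ^ t)
              (fun a _ => Finset.card_image_le.trans (hGc i a))
            simpa using this)
        simpa using this
      have h2 : 1 ≤ k * (k * (N + 1)) ^ t := by
        have : 0 < k * (k * (N + 1)) ^ t := by positivity
        exact this
      calc _ ≤ n * (k * (k * (N + 1)) ^ t) + 1 := by gcongr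
        _ ≤ N * (k * (k * (N + 1)) ^ t) + k * (k * (N + 1)) ^ t := by gcongr
        _ = (k * (N + 1)) ^ (t + 1) := by ring
    · intro w hw hrun
      rcases hrun.split (M.eval u) with h | h | ⟨w1, a, w2, rfl, h2, h3⟩
      · exact absurd h.mem (by simp)
      · rw [hl n w hw h]; simp
      · refine Finset.mem_insert_of_mem ?_
        simp only [List.length_append, List.length_cons] at hw
        simp only [Finset.mem_biUnion, Finset.mem_range, Finset.mem_univ, true_and,
          Finset.mem_image]
        refine ⟨w1.length, by omega, a, w2, hG _ _ _ (by omega) h3, ?_⟩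
        rw [← hl _ w1 rfl h2]

lemma coverAll {k m : ℕ} (hk : 1 ≤ k) {M : DFA (Fin k) (Fin m)} (H : UniqueLoops M) (N : ℕ) :
    ∃ F : Finset (List (Fin k)), F.card ≤ (k * (N + 1)) ^ (m + 1) ∧
      ∀ w, w.length ≤ N → w ∈ M.accepts → w ∈ F := by
  have h := fun (n : ℕ) (hn : n ≤ N) =>
    cover hk H N m Finset.univ (by simp) [] n hn
  choose! F hFc hF using h
  refine ⟨(Finset.range (N + 1)).biUnion F, ?_, ?_⟩
  · have := Finset.card_biUnion_le_card_mul (Finset.range (N + 1)) F ((k * (N + 1)) ^ m)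
      (fun i hi => hFc i (by simpa [Nat.lt_succ_iff] using hi))
    rw [Finset.card_range] at this
    refine this.trans ?_
    rw [pow_succ, mul_comm]
    gcongr
    exact Nat.le_mul_of_pos_left _ hk
  · intro w hw hacc
    rw [Finset.mem_biUnion]
    exact ⟨w.length, by simp; omega, hF _ hw w rfl (avoidRun_univ hacc)⟩

lemma exists_word {k : ℕ} (hk : 2 ≤ k) (s : ℕ) :
    ∃ w : List (Fin k), w.map Fin.val = Nat.digits k s := by
  refine ⟨(Nat.digits k s).pmap (fun d hd => ⟨d, hd⟩)
    (fun d hd => Nat.digits_lt_base (by omega) hd), ?_⟩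
  rw [List.map_pmap]
  simp

lemma sparse_of_uniqueLoops {k m : ℕ} (hk : 2 ≤ k) {S : Set ℕ} {M : DFA (Fin k) (Fin m)}
    (hM : ∀ w : List (Fin k), w ∈ M.accepts ↔ ∃ s ∈ S, w.map Fin.val = Nat.digits k s)
    (H : UniqueLoops M) : IsSparse S := by
  choose W hW using fun s => exists_word hk s
  have hWinj : Function.Injective W := by
    intro s t h
    apply Nat.digits.injective k
    rw [← hW, ← hW, h]
  have key : ∀ x : ℕ, piCount S x ≤ (k * (Nat.log k x + 2)) ^ (m + 1) := by
    intro x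
    obtain ⟨F, hFc, hF⟩ := coverAll (by omega) H (Nat.log k x + 1)
    refine le_trans ?_ hFc
    rw [piCount, ← Set.ncard_coe_finset]
    refine Set.ncard_le_ncard_of_injOn W ?_ hWinj.injOn (Finset.finite_toSet F)
    rintro s ⟨hs, hsx⟩
    refine hF _ ?_ ((hM _).2 ⟨s, hs, hW s⟩)
    have h1 : (W s).length = (Nat.digits k s).length := by rw [← hW, List.length_map]
    rw [h1]
    by_cases h0 : s = 0
    · simp [h0]
    · rw [Nat.digits_len k s (by omega) h0]
      gcongr
  have hlogk : 0 < Real.log k := Real.log_pos (by exact_mod_cast (by omega : 1 < k))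
  have hkR : (0 : ℝ) < k := by exact_mod_cast (by omega : 0 < k)
  refine ⟨m + 1, (k * (1 / Real.log k + 2)) ^ (m + 1), by positivity, 3, fun x hx => ?_⟩
  have hx1 : (1 : ℝ) ≤ Real.log x := by
    rw [Real.le_log_iff_exp_le (by positivity)]
    have : (3 : ℝ) ≤ x := by exact_mod_cast hx
    linarith [Real.exp_one_lt_d9]
  have h1 : (Nat.log k x : ℝ) ≤ Real.log x / Real.log k := by
    rw [le_div_iff₀ hlogk, ← Real.log_pow]
    apply Real.log_le_log (by positivity)
    exact_mod_cast Nat.pow_log_le_self k (by omega)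
  calc (piCount S x : ℝ) ≤ (k * (Nat.log k x + 2)) ^ (m + 1) := by exact_mod_cast key x
    _ ≤ (k * ((1 / Real.log k + 2) * Real.log x)) ^ (m + 1) := by
        gcongr
        rw [add_mul, one_div_mul_eq_div]
        linarith
    _ = _ := by rw [← mul_assoc, mul_pow]

lemma loops_exp {k m : ℕ} {M : DFA (Fin k) (Fin m)} {q : Fin m} {w1 w2 : List (Fin k)}
    (hne : w1 ≠ w2) (hlen : w1.length = w2.length) (h1 : M.evalFrom q w1 = q)
    (h2 : M.evalFrom q w2 = q) (n : ℕ) :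
    ∃ F : Finset (List (Fin k)), F.card = 2 ^ n ∧
      ∀ w ∈ F, w.length = n * w1.length ∧ M.evalFrom q w = q := by
  induction n with
  | zero => exact ⟨{[]}, by simp, by simp⟩
  | succ n ih =>
    obtain ⟨F, hc, hF⟩ := ih
    refine ⟨F.image (w1 ++ ·) ∪ F.image (w2 ++ ·), ?_, ?_⟩
    · rw [Finset.card_union_of_disjoint, Finset.card_image_of_injective _
        (List.append_right_injective w1), Finset.card_image_of_injective _
        (List.append_right_injective w2), hc]
      · ring
      · rw [Finset.disjoint_left]
        intro w hw hw'
        simp only [Finset.mem_image] at hw hw'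
        obtain ⟨a, _, rfl⟩ := hw
        obtain ⟨b, _, hb⟩ := hw'
        exact hne (List.append_inj_left hb hlen.symm).symm
    · intro w hw
      simp only [Finset.mem_union, Finset.mem_image] at hw
      rcases hw with ⟨a, ha, rfl⟩ | ⟨a, ha, rfl⟩
      · refine ⟨?_, ?_⟩
        · rw [List.length_append, (hF a ha).1]; ring
        · rw [DFA.evalFrom_of_append, h1, (hF a ha).2]
      · refine ⟨?_, ?_⟩
        · rw [List.length_append, (hF a ha).1, hlen]; ring
        · rw [DFA.evalFrom_of_append, h2, (hF a ha).2]

lemma growth_of_not_uniqueLoops {k m : ℕ} (hk : 2 ≤ k) {S : Set ℕ} {M : DFA (Fin k) (Fin m)}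
    (hM : ∀ w : List (Fin k), w ∈ M.accepts ↔ ∃ s ∈ S, w.map Fin.val = Nat.digits k s)
    (H : ¬ UniqueLoops M) :
    ∃ a : ℝ, 0 < a ∧ ∃ c : ℝ, 0 < c ∧ ∃ x0 : ℕ, ∀ x : ℕ, x0 ≤ x →
        c * (x : ℝ) ^ a ≤ (piCount S x : ℝ) := by
  unfold UniqueLoops at H
  push Not at H
  obtain ⟨u, v, w1, w2, hv, hlen, h1, h2, hne⟩ := H
  set L := w1.length with hL
  have hLpos : 0 < L := by
    rcases Nat.eq_zero_or_pos L with h0 | h0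
    · exfalso; apply hne
      have e1 : w1 = [] := List.length_eq_zero_iff.1 (by omega)
      have e2 : w2 = [] := List.length_eq_zero_iff.1 (by omega)
      rw [e1, e2]
    · exact h0
  set c0 := u.length + v.length with hc0
  have key : ∀ n x : ℕ, k ^ (c0 + n * L) ≤ x → 2 ^ n ≤ piCount S x := by
    intro n x hx
    obtain ⟨F, hc, hF⟩ := loops_exp hne hlen h1 h2 n
    have hacc : ∀ w ∈ F, ∃ s ∈ S, (u ++ w ++ v).map Fin.val = Nat.digits k s := by
      intro w hw
      rw [← hM, DFA.mem_accepts, DFA.eval, DFA.evalFrom_of_append, DFA.evalFrom_of_append]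
      have := (hF w hw).2
      rw [DFA.eval] at this hv
      rw [this]
      exact hv
    choose! f hfS hf using hacc
    rw [← hc, piCount, ← Set.ncard_coe_finset]
    refine Set.ncard_le_ncard_of_injOn f ?_ ?_ ((Set.finite_Iic x).subset fun n hn => hn.2)
    · intro w hw
      refine ⟨hfS w hw, le_trans ?_ hx⟩
      have h3 : (Nat.digits k (f w)).length = c0 + n * L := by
        rw [← hf w hw, List.length_map, List.length_append, List.length_append, (hF w hw).1, ← hL]
        omega
      rw [← h3]
      exact (Nat.lt_base_pow_length_digits (by omega)).le
    · intro w hw w' hw' he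
      have h3 := hf w hw
      rw [he, ← hf w' hw'] at h3
      have h4 := List.map_injective_iff.2 Fin.val_injective h3
      exact List.append_cancel_left (List.append_cancel_right h4)
  have hkR : (0 : ℝ) < k := by exact_mod_cast (by omega : 0 < k)
  have hk1 : (1 : ℝ) < k := by exact_mod_cast (by omega : 1 < k)
  have hlogk : 0 < Real.log k := Real.log_pos hk1
  have hLR : (0 : ℝ) < L := by exact_mod_cast hLpos
  set a := Real.log 2 / (L * Real.log k) with ha
  have hapos : 0 < a := div_pos (Real.log_pos (by norm_num)) (by positivity)
  have hpow : ((k : ℝ) ^ L) ^ a = 2 := by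
    rw [Real.rpow_def_of_pos (by positivity), Real.log_pow, ha, mul_div_cancel₀ _ (by positivity),
      Real.exp_log (by norm_num)]
  have hK : (0 : ℝ) < ((k : ℝ) ^ (c0 + L)) ^ a := by positivity
  refine ⟨a, hapos, (((k : ℝ) ^ (c0 + L)) ^ a)⁻¹, inv_pos.2 hK, k ^ c0, fun x hx => ?_⟩
  have hx0 : x ≠ 0 := by
    have : 0 < k ^ c0 := by positivity
    omega
  have hlog : c0 ≤ Nat.log k x := Nat.le_log_of_pow_le (by omega) hx
  set n := (Nat.log k x - c0) / L with hn
  have hn1 : n * L ≤ Nat.log k x - c0 := Nat.div_mul_le_self _ _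
  have hn2 : Nat.log k x - c0 < (n + 1) * L := by
    rw [mul_comm]; exact Nat.lt_mul_div_succ _ hLpos
  have hlow : k ^ (c0 + n * L) ≤ x :=
    Nat.pow_le_of_le_log hx0 (by omega)
  have hup : x ≤ k ^ (c0 + L) * (k ^ L) ^ n := by
    rw [← pow_mul, ← pow_add]
    refine (Nat.lt_pow_succ_log_self (b := k) (by omega) x).le.trans ?_
    apply Nat.pow_le_pow_right (by omega)
    have : (n + 1) * L = L * n + L := by ring
    omega
  have hupR : (x : ℝ) ^ a ≤ ((k : ℝ) ^ (c0 + L)) ^ a * 2 ^ n := by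
    calc (x : ℝ) ^ a ≤ ((k : ℝ) ^ (c0 + L) * ((k : ℝ) ^ L) ^ n) ^ a := by
          gcongr
          exact_mod_cast hup
      _ = _ := by
          rw [Real.mul_rpow (by positivity) (by positivity), ← Real.rpow_pow_comm (x := (k : ℝ) ^ L) (by positivity) a n,
            hpow]
  rw [inv_mul_le_iff₀ hK]
  refine hupR.trans ?_
  gcongr
  exact_mod_cast key n x hlow

lemma not_sparse_of_growth {S : Set ℕ}
    (h : ∃ a : ℝ, 0 < a ∧ ∃ c : ℝ, 0 < c ∧ ∃ x0 : ℕ, ∀ x : ℕ, x0 ≤ x →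
        c * (x : ℝ) ^ a ≤ (piCount S x : ℝ)) : ¬ IsSparse S := by
  rintro ⟨d, C, hC, x1, h1⟩
  obtain ⟨a, ha, c, hc, x0, h0⟩ := h
  have ho := (isLittleO_log_rpow_rpow_atTop (d : ℝ) ha).comp_tendsto
    (tendsto_natCast_atTop_atTop (R := ℝ))
  have hb := ho.bound (show 0 < c / (2 * C) by positivity)
  obtain ⟨x, hx, hx0, hx1, hx2⟩ := (hb.and ((Filter.eventually_ge_atTop x0).and
    ((Filter.eventually_ge_atTop x1).and (Filter.eventually_ge_atTop 1)))).exists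
  have hxp : (0 : ℝ) < x := by exact_mod_cast hx2
  have hp : (0 : ℝ) < (x : ℝ) ^ a := by positivity
  simp only [Function.comp, Real.rpow_natCast, Real.norm_eq_abs, abs_of_pos hp] at hx
  have h2 := (le_abs_self _).trans hx
  have h3 := (h0 x hx0).trans (h1 x hx1)
  have h4 : C * Real.log x ^ d ≤ c / 2 * (x : ℝ) ^ a := by
    calc _ ≤ C * (c / (2 * C) * (x : ℝ) ^ a) := by gcongr
      _ = _ := by field_simp
  nlinarith [mul_pos hc hp]

/-- A `k`-automatic set `S` is non-sparse if and only if `π_S(x) = Ω(x^α)` for some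
real `α > 0`. -/
theorem automatic_nonsparse_iff_power_growth
    (k : ℕ) (hk : 2 ≤ k) (S : Set ℕ) (hS : IsKAutomatic k S) :
    ¬ IsSparse S ↔
      ∃ a : ℝ, 0 < a ∧ ∃ c : ℝ, 0 < c ∧ ∃ x0 : ℕ, ∀ x : ℕ, x0 ≤ x →
        c * (x : ℝ) ^ a ≤ (piCount S x : ℝ) := by
  obtain ⟨m, M, hM⟩ := hS
  exact ⟨fun h => growth_of_not_uniqueLoops hk hM fun H => h (sparse_of_uniqueLoops hk hM H),
    not_sparse_of_growth⟩
end

section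
/- Let k ≥ 2 and t ≥ 1 be natural numbers and let u, y, z be words over the alphabet {0,1,…,k−1} with |y| = |z| = s, y ≠ z, and |u| = L. Then every real number γ ∈ [k^{L+s+1}, k^{L+s+1+t}] can be expressed as a sum of at most k^{2L+2s+t+1} elements of C(u;y,z). -/
/-- The value `0.w` in base `k` of a digit word `w = w₁⋯w_r`, i.e.
`Σ_{j=1}^{r} w_j k^{-j}`. -/
noncomputable def digitVal (k : ℕ) (w : List ℕ) : ℝ :=
  ∑ j ∈ Finset.range w.length, (w.getD j 0 : ℝ) * ((k : ℝ)⁻¹) ^ (j + 1)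

/-- `C(u; y, z)`: the set of real numbers whose base-`k` expansion has the form
`0.u w₁ w₂ w₃ ⋯` with each `wᵢ ∈ {y, z}` (where `|y| = |z|`). -/
noncomputable def CantorLike (k : ℕ) (u y z : List ℕ) : Set ℝ :=
  { x : ℝ | ∃ f : ℕ → List ℕ, (∀ i, f i = y ∨ f i = z) ∧
      x = digitVal k u +
        ((k : ℝ)⁻¹) ^ u.length * ∑' i : ℕ, ((k : ℝ)⁻¹) ^ (y.length * i) * digitVal k (f i) }

theorem digitVal_mul_pow (k : ℕ) (hk : 2 ≤ k) (w : List ℕ) :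
    digitVal k w * (k : ℝ) ^ w.length = (Nat.ofDigits k w.reverse : ℕ) := by
  have hk0 : (k : ℝ) ≠ 0 := by positivity
  induction w with
  | nil => simp [digitVal]
  | cons d w ih =>
    have h1 : digitVal k (d :: w) = ((d : ℝ) + digitVal k w) * (k : ℝ)⁻¹ := by
      unfold digitVal
      rw [List.length_cons, Finset.sum_range_succ']
      simp only [List.getD_cons_succ, List.getD_cons_zero]
      rw [add_mul, Finset.sum_mul, add_comm]
      congr 1
      · simp
      · apply Finset.sum_congr rfl
        intro i _
        ring
    rw [h1, List.reverse_cons, Nat.ofDigits_append, List.length_cons]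
    rw [Nat.cast_add, ← ih, List.length_reverse, Nat.ofDigits_singleton, pow_succ]
    push_cast
    field_simp
    ring

theorem digitVal_le (k : ℕ) (hk : 2 ≤ k) (w : List ℕ) (hw : ∀ d ∈ w, d < k) :
    digitVal k w * (k : ℝ) ^ w.length + 1 ≤ (k : ℝ) ^ w.length := by
  rw [digitVal_mul_pow k hk w]
  have := Nat.ofDigits_lt_base_pow_length (b := k) (l := w.reverse) (by omega)
    (by simpa using hw)
  rw [List.length_reverse] at this
  exact_mod_cast this

theorem digitVal_nonneg (k : ℕ) (w : List ℕ) : 0 ≤ digitVal k w := by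
  unfold digitVal
  positivity

/-- Greedy expansion with digits at most `N`. -/
theorem greedy_expansion (q : ℝ) (hq : 2 ≤ q) (N : ℕ) (hN : q - 1 ≤ N) (x : ℝ)
    (hx0 : 0 ≤ x) (hx : x * (q - 1) ≤ N * q) :
    ∃ n : ℕ → ℕ, (∀ i, n i ≤ N) ∧ HasSum (fun i => (q⁻¹) ^ i * (n i : ℝ)) x := by
  have hq0 : 0 < q := by linarith
  let g : ℝ → ℕ := fun r => min N ⌊r⌋₊
  let r : ℕ → ℝ := fun i => Nat.rec x (fun _ r => q * (r - g r)) i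
  have hr0 : r 0 = x := rfl
  have hrs : ∀ i, r (i + 1) = q * (r i - g (r i)) := fun i => rfl
  have hinv : ∀ i, 0 ≤ r i ∧ r i * (q - 1) ≤ N * q := by
    intro i
    induction i with
    | zero => exact ⟨hx0, hx⟩
    | succ i ih =>
      obtain ⟨h0, h1⟩ := ih
      rw [hrs]
      have hfl : (⌊r i⌋₊ : ℝ) ≤ r i := Nat.floor_le h0
      have hfl2 : r i < ⌊r i⌋₊ + 1 := Nat.lt_floor_add_one _
      rcases le_total N ⌊r i⌋₊ with h | h
      · have hg : g (r i) = N := min_eq_left h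
        have h' : (N : ℝ) ≤ ⌊r i⌋₊ := by exact_mod_cast h
        rw [hg]
        constructor
        · exact mul_nonneg hq0.le (by linarith)
        · nlinarith
      · have hg : g (r i) = ⌊r i⌋₊ := min_eq_right h
        rw [hg]
        constructor
        · exact mul_nonneg hq0.le (by linarith)
        · have : (r i - ⌊r i⌋₊) * (q - 1) ≤ 1 * (q - 1) :=
            mul_le_mul_of_nonneg_right (by linarith) (by linarith)
          nlinarith
  refine ⟨fun i => g (r i), fun i => min_le_left _ _, ?_⟩
  rw [hasSum_iff_tendsto_nat_of_nonneg (fun i => by positivity)]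
  have hpart : ∀ m, ∑ i ∈ Finset.range m, (q⁻¹) ^ i * (g (r i) : ℝ) = x - r m * (q⁻¹) ^ m := by
    intro m
    induction m with
    | zero => simp [hr0]
    | succ m ih =>
      rw [Finset.sum_range_succ, ih, hrs, pow_succ]
      field_simp
      ring
  simp only [hpart]
  have hz : Filter.Tendsto (fun m => r m * (q⁻¹) ^ m) Filter.atTop (nhds 0) := by
    have hp : Filter.Tendsto (fun m : ℕ => (N * q) * (q⁻¹) ^ m) Filter.atTop (nhds 0) := by
      have := (tendsto_pow_atTop_nhds_zero_of_lt_one (r := q⁻¹) (by positivity)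
        (inv_lt_one_of_one_lt₀ (by linarith))).const_mul (N * q)
      simpa using this
    refine squeeze_zero (fun m => mul_nonneg (hinv m).1 (by positivity)) (fun m => ?_) hp
    refine mul_le_mul_of_nonneg_right ?_ (by positivity)
    have := hinv m
    nlinarith
  simpa using hz.const_sub x

theorem cantor_sum_of_N (k : ℕ) (hk : 2 ≤ k) (u y z : List ℕ) (s : ℕ) (hs : 1 ≤ s)
    (hys : y.length = s) (N : ℕ) (hN : (k : ℝ) ^ s - 1 ≤ N) (x : ℝ)
    (hx0 : 0 ≤ x) (hx : x * ((k : ℝ) ^ s - 1) ≤ N * (k : ℝ) ^ s) :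
    ∃ l : List ℝ, l.length = N ∧ (∀ c ∈ l, c ∈ CantorLike k u y z) ∧
      l.sum = N * digitVal k u + ((k : ℝ)⁻¹) ^ u.length *
        (N * digitVal k y * (1 - ((k : ℝ) ^ s)⁻¹)⁻¹ + (digitVal k z - digitVal k y) * x) := by
  have hk2 : (2 : ℝ) ≤ k := by exact_mod_cast hk
  have hq : (2 : ℝ) ≤ (k : ℝ) ^ s := by
    calc (2 : ℝ) ≤ k := hk2
      _ = (k : ℝ) ^ 1 := (pow_one _).symm
      _ ≤ _ := pow_le_pow_right₀ (by linarith) hs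
  obtain ⟨n, hn, hsum⟩ := greedy_expansion _ hq N hN x hx0 hx
  set q : ℝ := (k : ℝ) ^ s with hqdef
  let f : ℕ → ℕ → List ℕ := fun j i => if j < n i then z else y
  have hgeo : HasSum (fun i : ℕ => (q⁻¹) ^ i) (1 - q⁻¹)⁻¹ :=
    hasSum_geometric_of_lt_one (by positivity) (inv_lt_one_of_one_lt₀ (by linarith))
  have hpow : ∀ i, ((k : ℝ)⁻¹) ^ (y.length * i) = (q⁻¹) ^ i := by
    intro i
    rw [hys, pow_mul, hqdef, inv_pow]
  have hsm : ∀ j, Summable (fun i : ℕ => (q⁻¹) ^ i * digitVal k (f j i)) := by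
    intro j
    refine Summable.of_nonneg_of_le
      (fun i => mul_nonneg (by positivity) (digitVal_nonneg _ _)) (fun i => ?_)
      (hgeo.summable.mul_right (digitVal k y + digitVal k z))
    refine mul_le_mul_of_nonneg_left ?_ (by positivity)
    have h1 := digitVal_nonneg k y
    have h2 := digitVal_nonneg k z
    simp only [f]
    split_ifs <;> linarith
  have hdig : ∀ i, ∑ j ∈ Finset.range N, digitVal k (f j i)
      = N * digitVal k y + (digitVal k z - digitVal k y) * n i := by
    intro i
    have e : ∀ j, digitVal k (f j i)
        = digitVal k y + (if j < n i then (digitVal k z - digitVal k y) else 0) := by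
      intro j
      simp only [f]
      split_ifs <;> ring
    simp only [e]
    rw [Finset.sum_add_distrib, ← Finset.sum_filter]
    have : (Finset.range N).filter (fun j => j < n i) = Finset.range (n i) := by
      ext j
      have := hn i
      simp only [Finset.mem_filter, Finset.mem_range]
      omega
    rw [this]
    simp only [Finset.sum_const, Finset.card_range, nsmul_eq_mul]
    ring
  have htot : ∑ j ∈ Finset.range N, ∑' i, (q⁻¹) ^ i * digitVal k (f j i)
      = N * digitVal k y * (1 - q⁻¹)⁻¹ + (digitVal k z - digitVal k y) * x := by
    have h1 := hasSum_sum (s := Finset.range N) (fun j _ => (hsm j).hasSum)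
    have h2 := (hgeo.mul_left (N * digitVal k y)).add
      (hsum.mul_left (digitVal k z - digitVal k y))
    refine h1.unique ?_
    have e : (fun i => ∑ j ∈ Finset.range N, (q⁻¹) ^ i * digitVal k (f j i))
        = fun i => N * digitVal k y * (q⁻¹) ^ i
          + (digitVal k z - digitVal k y) * ((q⁻¹) ^ i * (n i : ℝ)) := by
      funext i
      rw [← Finset.mul_sum, hdig]
      ring
    rw [e]
    exact h2
  refine ⟨(List.range N).map (fun j => digitVal k u +
        ((k : ℝ)⁻¹) ^ u.length * ∑' i : ℕ, ((k : ℝ)⁻¹) ^ (y.length * i) * digitVal k (f j i)),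
    by simp, ?_, ?_⟩
  · intro c hc
    obtain ⟨j, _, rfl⟩ := List.mem_map.1 hc
    refine ⟨f j, fun i => ?_, rfl⟩
    simp only [f]
    split_ifs
    · exact Or.inr rfl
    · exact Or.inl rfl
  · simp only [hpow]
    have key : ∀ (g : ℕ → ℝ) (m : ℕ), ((List.range m).map g).sum
        = ∑ j ∈ Finset.range m, g j := by
      intro g m
      induction m with
      | zero => simp
      | succ m ih => simp [List.range_succ, Finset.sum_range_succ, ih]
    rw [← htot, key]
    rw [Finset.sum_add_distrib, ← Finset.mul_sum]
    simp

set_option maxHeartbeats 1000000 in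
theorem cantor_main
    (k t s L : ℕ) (hk : 2 ≤ k) (ht : 1 ≤ t)
    (u y z : List ℕ)
    (hu : ∀ d ∈ u, d < k) (hz : ∀ d ∈ z, d < k)
    (hys : y.length = s) (hzs : z.length = s) (hs : 1 ≤ s) (huL : u.length = L)
    (hlt : Nat.ofDigits k y.reverse < Nat.ofDigits k z.reverse)
    (γ : ℝ) (hγ : γ ∈ Set.Icc ((k : ℝ) ^ (L + s + 1)) ((k : ℝ) ^ (L + s + 1 + t))) :
      ∃ l : List ℝ, l ≠ [] ∧ l.length ≤ k ^ (2 * L + 2 * s + t + 1) ∧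
        (∀ x ∈ l, x ∈ CantorLike k u y z) ∧ l.sum = γ := by
  obtain ⟨hγ1, hγ2⟩ := hγ
  have hk2 : (2 : ℝ) ≤ k := by exact_mod_cast hk
  have hU := digitVal_le k hk u hu
  have hZ := digitVal_le k hk z hz
  have hU0 := digitVal_nonneg k u
  have hY0 := digitVal_nonneg k y
  have hgap : digitVal k y * (k : ℝ) ^ s + 1 ≤ digitVal k z * (k : ℝ) ^ s := by
    have h1 := digitVal_mul_pow k hk y
    have h2 := digitVal_mul_pow k hk z
    rw [hys] at h1
    rw [hzs] at h2
    rw [h1, h2]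
    exact_mod_cast hlt
  have hmain := cantor_sum_of_N k hk u y z s hs hys
  rw [huL] at hU hmain
  rw [hzs] at hZ
  set U := digitVal k u
  set a := digitVal k y
  set b := digitVal k z
  have hq : (2 : ℝ) ≤ (k : ℝ) ^ s := by
    calc (2 : ℝ) ≤ k := hk2
      _ = (k : ℝ) ^ 1 := (pow_one _).symm
      _ ≤ _ := pow_le_pow_right₀ (by linarith) hs
  have hP : (1 : ℝ) ≤ (k : ℝ) ^ L := one_le_pow₀ (by linarith)
  have hT : (1 : ℝ) ≤ (k : ℝ) ^ t := one_le_pow₀ (by linarith)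
  have hbound : (k : ℝ) ^ (2 * L + 2 * s + t + 1)
      = (k : ℝ) ^ L * (k : ℝ) ^ L * (k : ℝ) ^ s * (k : ℝ) ^ s * (k : ℝ) ^ t * k := by ring
  have e1 : (k : ℝ) ^ (L + s + 1) = (k : ℝ) ^ L * (k : ℝ) ^ s * k := by ring
  have e2 : (k : ℝ) ^ (L + s + 1 + t) = (k : ℝ) ^ L * (k : ℝ) ^ s * k * (k : ℝ) ^ t := by ring
  rw [e1] at hγ1
  rw [e2] at hγ2
  rw [inv_pow] at hmain
  set q : ℝ := (k : ℝ) ^ s with hqdef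
  set P : ℝ := (k : ℝ) ^ L with hPdef
  set T : ℝ := (k : ℝ) ^ t with hTdef
  have hq1 : 0 < q - 1 := by linarith
  have hP0 : 0 < P := by linarith
  have hinv : (1 - q⁻¹)⁻¹ = q / (q - 1) := by
    field_simp
  rw [hinv] at hmain
  have hba : 0 < b - a := by
    by_contra h
    have : b * q ≤ a * q := mul_le_mul_of_nonneg_right (by linarith) (by linarith)
    linarith
  -- the largest and the smallest element
  obtain ⟨m, hm⟩ : ∃ m, m = U + P⁻¹ * (a * (q / (q - 1))) := ⟨_, rfl⟩
  obtain ⟨d, hd⟩ : ∃ d, d = P⁻¹ * ((b - a) * (q / (q - 1))) := ⟨_, rfl⟩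
  have hm0 : 0 ≤ m := by
    rw [hm]
    have : 0 ≤ q / (q - 1) := div_nonneg (by linarith) hq1.le
    positivity
  have hd1 : 1 ≤ d * P * (q - 1) := by
    have : d * P * (q - 1) = (b - a) * q := by
      rw [hd]
      field_simp
    rw [this]
    linarith
  have hd0 : 0 < d := by
    rw [hd]
    have : 0 < q / (q - 1) := div_pos (by linarith) hq1
    positivity
  have hM1 : m + d ≤ 1 := by
    have h1 : (m + d) * P = U * P + b * q / (q - 1) := by
      rw [hm, hd]
      field_simp
      ring
    have h2 : b * q / (q - 1) ≤ 1 := by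
      rw [div_le_one hq1]
      linarith
    have h3 : (m + d) * P ≤ 1 * P := by linarith
    exact le_of_mul_le_mul_right h3 hP0
  have hMpos : 0 < m + d := by linarith
  have hPqk : 0 < P * q * k := by positivity
  have hγ0 : 0 < γ := by linarith
  obtain ⟨N, hNdef⟩ : ∃ N, N = ⌈γ / (m + d)⌉₊ := ⟨_, rfl⟩
  have hN1 : γ ≤ N * (m + d) := by
    rw [← div_le_iff₀ hMpos, hNdef]
    exact Nat.le_ceil _
  have hN2 : (N - 1) * (m + d) ≤ γ := by
    rw [← le_div_iff₀ hMpos, hNdef]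
    have := Nat.ceil_lt_add_one (a := γ / (m + d)) (by positivity)
    linarith
  have hNγ : γ ≤ N := by
    have : (N : ℝ) * (m + d) ≤ N * 1 := mul_le_mul_of_nonneg_left hM1 (by positivity)
    linarith
  have hqPqk : q ≤ P * q * k := by
    have h1 : 1 ≤ P * k := by nlinarith
    nlinarith
  have hNq : q - 1 ≤ N := by linarith
  have hNd : 1 ≤ N * d := by
    have h1 : P * q * k * d ≤ N * d := mul_le_mul_of_nonneg_right (by linarith) hd0.le
    have h2 : 1 ≤ d * P * q := by nlinarith [mul_pos hd0 hP0]
    nlinarith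
  have hlow : N * m ≤ γ := by linarith
  -- upper bound of N
  have hNup : (N : ℝ) ≤ P * P * q * q * T * k := by
    have h1 : (N - 1) * d ≤ P * q * k * T := by
      have hN1' : (0 : ℝ) ≤ N - 1 := by linarith
      nlinarith [mul_nonneg hN1' hm0]
    have hN1' : (0 : ℝ) ≤ N - 1 := by linarith
    have h2 : (N : ℝ) - 1 ≤ (N - 1) * (d * P * (q - 1)) := le_mul_of_one_le_right hN1' hd1
    have h3 : (N - 1) * d * (P * (q - 1)) ≤ P * q * k * T * (P * (q - 1)) :=
      mul_le_mul_of_nonneg_right h1 (by positivity)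
    have h4 : 1 ≤ P * q * k * T * P := by
      have : 1 ≤ P * q * k := by linarith
      exact one_le_mul_of_one_le_of_one_le (one_le_mul_of_one_le_of_one_le this hT) hP
    have h5 : (N - 1) * d * (P * (q - 1)) = (N - 1) * (d * P * (q - 1)) := by ring
    have h6 : P * q * k * T * (P * (q - 1)) = P * P * q * q * T * k - P * q * k * T * P := by ring
    linarith
  obtain ⟨x, hxdef⟩ : ∃ x, x = (γ - N * m) * P / (b - a) := ⟨_, rfl⟩
  have hx0 : 0 ≤ x := by
    rw [hxdef]
    exact div_nonneg (mul_nonneg (by linarith) hP0.le) hba.le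
  have hx1 : x * (q - 1) ≤ N * q := by
    have h1 : d * P * (q - 1) = (b - a) * q := by
      rw [hd]
      field_simp
    have h2 : (γ - N * m) * (P * (q - 1)) ≤ N * d * (P * (q - 1)) :=
      mul_le_mul_of_nonneg_right (by linarith) (by positivity)
    rw [hxdef, div_mul_eq_mul_div, div_le_iff₀ hba]
    calc (γ - N * m) * P * (q - 1) = (γ - N * m) * (P * (q - 1)) := by ring
      _ ≤ N * d * (P * (q - 1)) := h2
      _ = N * (d * P * (q - 1)) := by ring
      _ = N * q * (b - a) := by rw [h1]; ring
  obtain ⟨l, hl, hmem, hsum⟩ := hmain N hNq x hx0 hx1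
  refine ⟨l, ?_, ?_, hmem, ?_⟩
  · rintro rfl
    simp only [List.length_nil] at hl
    rw [← hl] at hNγ
    simp at hNγ
    linarith
  · rw [hl]
    rw [← hbound] at hNup
    exact_mod_cast hNup
  · have h1 : (b - a) * x = (γ - N * m) * P := by
      rw [hxdef]
      field_simp
    rw [hsum, h1, hm]
    field_simp
    ring

theorem cantorLike_symm (k : ℕ) (u y z : List ℕ) (h : y.length = z.length) :
    CantorLike k u y z = CantorLike k u z y := by
  unfold CantorLike
  rw [h]
  ext x
  simp only [Set.mem_ofPred_eq]
  simp only [or_comm]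

/-- Every real `γ ∈ [k^(L+s+1), k^(L+s+1+t)]` is a sum of at most `k^(2L+2s+t+1)`
elements of `C(u; y, z)`. -/
theorem cantorLike_interval_sum
    (k t s L : ℕ) (hk : 2 ≤ k) (ht : 1 ≤ t)
    (u y z : List ℕ)
    (hu : ∀ d ∈ u, d < k) (hy : ∀ d ∈ y, d < k) (hz : ∀ d ∈ z, d < k)
    (hys : y.length = s) (hzs : z.length = s) (hyz : y ≠ z) (huL : u.length = L) :
    ∀ γ : ℝ, γ ∈ Set.Icc ((k : ℝ) ^ (L + s + 1)) ((k : ℝ) ^ (L + s + 1 + t)) →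
      ∃ l : List ℝ, l ≠ [] ∧ l.length ≤ k ^ (2 * L + 2 * s + t + 1) ∧
        (∀ x ∈ l, x ∈ CantorLike k u y z) ∧ l.sum = γ := by
  intro γ hγ
  have hs : 1 ≤ s := by
    by_contra h
    have h0 : s = 0 := by omega
    rw [h0] at hys hzs
    exact hyz ((List.length_eq_zero_iff.1 hys).trans (List.length_eq_zero_iff.1 hzs).symm)
  have hne : Nat.ofDigits k y.reverse ≠ Nat.ofDigits k z.reverse := by
    intro h
    apply hyz
    have := Nat.ofDigits_inj_of_len_eq (b := k) (by omega)
      (by simp [hys, hzs]) (by simpa using hy) (by simpa using hz) h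
    exact List.reverse_injective this
  rcases lt_or_gt_of_ne hne with h | h
  · exact cantor_main k t s L hk ht u y z hu hz hys hzs hs huL h γ hγ
  · rw [cantorLike_symm k u y z (by omega)]
    exact cantor_main k t s L hk ht u z y hu hy hzs hys hs huL h γ hγ
end

section
/- Let k ≥ 2 be an integer and let y, z be words over {0,1,…,k−1} with |y| = |z| = s and y ≠ z. Write Y = Σ_{j=1}^{s} y_j k^{−j} and Z = Σ_{j=1}^{s} z_j k^{−j}, and suppose Y < Z. Let C = { Σ_{i≥0} k^{−si} V_i : each V_i ∈ {Y, Z} } ⊆ ℝ. Then for every integer m ≥ k^s − 1, the m-fold sumset C + C + ⋯ + C (m copies) equals the closed interval [mα, mβ], where α = (1 − k^{−s})^{−1} Y and β = (1 − k^{−s})^{−1} Z. -/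
/-- The set `C = { Σ_{i≥0} k^{-si} V_i : each V_i ∈ {Y, Z} }` of reals whose base-`k`
expansion is `0.w₁w₂w₃⋯` with each `wᵢ ∈ {y, z}`, where `Y, Z` are the values of
`0.y`, `0.z`. -/
noncomputable def CantorWords (k s : ℕ) (Y Z : ℝ) : Set ℝ :=
  { x : ℝ | ∃ g : ℕ → ℝ, (∀ i, g i = Y ∨ g i = Z) ∧
      x = ∑' i : ℕ, ((k : ℝ)⁻¹) ^ (s * i) * g i }

theorem exists_digits (q : ℝ) (hq0 : 0 < q) (hq1 : q < 1) (m : ℕ) (hm : 1 - q ≤ m * q)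
    (t : ℝ) (ht0 : 0 ≤ t) (ht1 : t * (1 - q) ≤ m) :
    ∃ c : ℕ → ℕ, (∀ i, c i ≤ m) ∧ HasSum (fun i => q ^ i * (c i : ℝ)) t := by
  let d : ℝ → ℕ := fun r => min m ⌊r⌋₊
  let r : ℕ → ℝ := fun n => Nat.rec t (fun _ x => (x - d x) / q) n
  have hr : ∀ n, r (n + 1) = (r n - d (r n)) / q := fun n => rfl
  have inv : ∀ n, 0 ≤ r n ∧ r n * (1 - q) ≤ m := by
    intro n
    induction n with
    | zero => exact ⟨ht0, ht1⟩
    | succ n ih =>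
      obtain ⟨h0, h1⟩ := ih
      rw [hr]
      have hd : (d (r n) : ℝ) ≤ r n :=
        le_trans (by exact_mod_cast min_le_right _ _) (Nat.floor_le h0)
      refine ⟨div_nonneg (by linarith) hq0.le, ?_⟩
      rw [div_mul_eq_mul_div, div_le_iff₀ hq0]
      rcases le_total m ⌊r n⌋₊ with h | h
      · have e : d (r n) = m := min_eq_left h
        rw [e]; nlinarith
      · have e : d (r n) = ⌊r n⌋₊ := min_eq_right h
        rw [e]
        have := Nat.lt_floor_add_one (r n)
        nlinarith
  have part : ∀ n, ∑ i ∈ Finset.range n, q ^ i * (d (r i) : ℝ) = t - q ^ n * r n := by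
    intro n
    induction n with
    | zero => simp [r]
    | succ n ih =>
      rw [Finset.sum_range_succ, ih, hr, pow_succ]
      field_simp
      ring
  refine ⟨fun i => d (r i), fun i => min_le_left _ _, ?_⟩
  rw [hasSum_iff_tendsto_nat_of_nonneg (fun i => by positivity)]
  simp only [part]
  have hz : Filter.Tendsto (fun n => q ^ n * r n) Filter.atTop (nhds 0) := by
    have h2 : Filter.Tendsto (fun n => q ^ n * (m / (1 - q))) Filter.atTop (nhds 0) := by
      simpa using (tendsto_pow_atTop_nhds_zero_of_lt_one hq0.le hq1).mul_const (m / (1 - q) : ℝ)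
    refine squeeze_zero (fun n => mul_nonneg (by positivity) (inv n).1) (fun n => ?_) h2
    have := (le_div_iff₀ (by linarith : (0:ℝ) < 1 - q)).2 (inv n).2
    gcongr
  simpa using hz.const_sub t

theorem sum_ite_digit (m c : ℕ) (hc : c ≤ m) (Y Z : ℝ) :
    ∑ j : Fin m, (if (j : ℕ) < c then Z else Y) = m * Y + c * (Z - Y) := by
  rw [Fin.sum_univ_eq_sum_range (fun j => if j < c then Z else Y) m]
  obtain ⟨e, rfl⟩ := Nat.exists_eq_add_of_le hc
  rw [Finset.sum_range_add]
  rw [Finset.sum_congr rfl (g := fun _ => Z) (fun x hx => by simp [Finset.mem_range.1 hx])]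
  simp
  ring

theorem summable_words (q : ℝ) (hq0 : 0 < q) (hq1 : q < 1) (Y Z : ℝ) (g : ℕ → ℝ)
    (hg : ∀ i, g i = Y ∨ g i = Z) : Summable (fun i => q ^ i * g i) := by
  refine Summable.of_norm_bounded (g := fun i => q ^ i * (|Y| + |Z|))
    ((summable_geometric_of_lt_one hq0.le hq1).mul_right _) (fun i => ?_)
  rw [norm_mul, Real.norm_eq_abs, Real.norm_eq_abs, abs_of_pos (pow_pos hq0 i)]
  gcongr
  rcases hg i with h | h <;> rw [h] <;> linarith [abs_nonneg Y, abs_nonneg Z]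

/-- For `m ≥ k^s - 1`, the `m`-fold sumset of `C` equals the closed interval
`[mα, mβ]`, where `α = (1 - k^{-s})⁻¹ Y` and `β = (1 - k^{-s})⁻¹ Z`. -/
theorem cantorWords_sumset_eq_interval
    (k s : ℕ) (hk : 2 ≤ k) (y z : List ℕ)
    (hy : ∀ d ∈ y, d < k) (hz : ∀ d ∈ z, d < k)
    (hys : y.length = s) (hzs : z.length = s) (hyz : y ≠ z)
    (hYZ : digitVal k y < digitVal k z) :
    ∀ m : ℕ, k ^ s - 1 ≤ m →
      { x : ℝ | ∃ f : Fin m → ℝ,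
          (∀ i, f i ∈ CantorWords k s (digitVal k y) (digitVal k z)) ∧ x = ∑ i, f i }
        = Set.Icc ((m : ℝ) * ((1 - ((k : ℝ)⁻¹) ^ s)⁻¹ * digitVal k y))
            ((m : ℝ) * ((1 - ((k : ℝ)⁻¹) ^ s)⁻¹ * digitVal k z)) := by
  intro m hm
  have hs : s ≠ 0 := by
    rintro rfl
    exact hyz ((List.length_eq_zero_iff.1 hys).trans (List.length_eq_zero_iff.1 hzs).symm)
  generalize digitVal k y = Y at *
  generalize digitVal k z = Z at *
  have hk1 : (1 : ℝ) < k := by exact_mod_cast hk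
  have hk0 : (0 : ℝ) < k := by linarith
  unfold CantorWords
  simp only [pow_mul]
  have hqN : ((k : ℝ)⁻¹) ^ s * (k : ℝ) ^ s = 1 := by
    rw [← mul_pow, inv_mul_cancel₀ hk0.ne', one_pow]
  have hq0 : 0 < ((k : ℝ)⁻¹) ^ s := by positivity
  have hq1 : ((k : ℝ)⁻¹) ^ s < 1 := pow_lt_one₀ (by positivity) (inv_lt_one_of_one_lt₀ hk1) hs
  have hmN : (k : ℝ) ^ s ≤ m + 1 := by
    have : k ^ s ≤ m + 1 := by omega
    exact_mod_cast this
  generalize ((k : ℝ)⁻¹) ^ s = q at *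
  have hmq : 1 - q ≤ m * q := by nlinarith
  have h1q : 0 < 1 - q := by linarith
  have geo : ∀ A : ℝ, HasSum (fun i => q ^ i * A) ((1 - q)⁻¹ * A) := fun A =>
    (hasSum_geometric_of_lt_one hq0.le hq1).mul_right A
  ext x
  simp only [Set.mem_setOf_eq, Set.mem_Icc]
  constructor
  · rintro ⟨f, hf, rfl⟩
    have hb : ∀ i, (1 - q)⁻¹ * Y ≤ f i ∧ f i ≤ (1 - q)⁻¹ * Z := by
      intro i
      obtain ⟨g, hg, e⟩ := hf i
      have hS := (summable_words q hq0 hq1 Y Z g hg).hasSum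
      rw [← e] at hS
      refine ⟨hasSum_le (fun n => ?_) (geo Y) hS, hasSum_le (fun n => ?_) hS (geo Z)⟩ <;>
        refine mul_le_mul_of_nonneg_left ?_ (by positivity) <;>
        rcases hg n with h | h <;> rw [h] <;> linarith
    constructor
    · have := Finset.sum_le_sum (fun i (_ : i ∈ Finset.univ) => (hb i).1)
      simpa using this
    · have := Finset.sum_le_sum (fun i (_ : i ∈ Finset.univ) => (hb i).2)
      simpa using this
  · rintro ⟨hx0, hx1⟩
    have hD : 0 < Z - Y := by linarith
    obtain ⟨c, hc, hsum⟩ := exists_digits q hq0 hq1 m hmq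
      ((x - m * ((1 - q)⁻¹ * Y)) / (Z - Y)) (div_nonneg (by linarith) hD.le) (by
        rw [div_mul_eq_mul_div, div_le_iff₀ hD]
        have h3 : (x - m * ((1 - q)⁻¹ * Y)) * (1 - q)
            ≤ (m * ((1 - q)⁻¹ * Z) - m * ((1 - q)⁻¹ * Y)) * (1 - q) :=
          mul_le_mul_of_nonneg_right (by linarith) h1q.le
        refine h3.trans (le_of_eq ?_)
        field_simp)
    have hg : ∀ j : Fin m, ∀ i, (if (j : ℕ) < c i then Z else Y) = Y ∨
        (if (j : ℕ) < c i then Z else Y) = Z := by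
      intro j i
      split_ifs <;> simp
    refine ⟨fun j => ∑' i, q ^ i * (if (j : ℕ) < c i then Z else Y),
      fun j => ⟨_, hg j, rfl⟩, ?_⟩
    have hA := hasSum_sum (s := Finset.univ) (fun (j : Fin m) _ =>
      (summable_words q hq0 hq1 Y Z _ (hg j)).hasSum)
    simp only [← Finset.mul_sum] at hA
    have hB := (geo (m * Y)).add (hsum.mul_right (Z - Y))
    have hfe : (fun i => q ^ i * ∑ j : Fin m, (if (j : ℕ) < c i then Z else Y))
        = fun i => q ^ i * (m * Y) + q ^ i * (c i : ℝ) * (Z - Y) := by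
      funext i
      rw [sum_ite_digit m (c i) (hc i)]
      ring
    rw [hfe] at hA
    rw [hA.unique hB, div_mul_cancel₀ _ hD.ne']
    ring
end

section
/- Let k ≥ 2 be a natural number and let S be a non-sparse k-automatic subset of ℕ such that a deterministic finite automaton with m states accepts the language of base-k expansions of the elements of S. Let T be the set of all natural numbers that can be written as a sum of at most k^{11m+1} elements of S. Then for each natural number M > k^{7m+1} there exists n ∈ T with |M − n| < k^{12m+1}. In particular, T is (2k^{12m+1})-syndetic. -/
/-- Exact sums of `r` elements. -/
def ExactSum (S : Set ℕ) (r n : ℕ) : Prop :=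
  ∃ l : List ℕ, l.length = r ∧ (∀ x ∈ l, x ∈ S) ∧ l.sum = n

theorem ExactSum.add {S : Set ℕ} {r n r' n' : ℕ} (h : ExactSum S r n) (h' : ExactSum S r' n') :
    ExactSum S (r + r') (n + n') := by
  obtain ⟨l, h1, h2, h3⟩ := h
  obtain ⟨l', h1', hmem2, h3'⟩ := h'
  refine ⟨l ++ l', by simp [h1, h1'], ?_, by simp [h3, h3']⟩
  intro x hx
  exact (List.mem_append.1 hx).elim (fun hxl => h2 x hxl) (fun hxr => hmem2 x hxr)

/-- Numbers with `n` base-`q` digits, all in `{0,1}`. -/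
def Bset (q : ℕ) : ℕ → Set ℕ
  | 0 => {0}
  | n + 1 => {b | ∃ a ∈ Bset q n, b = q * a ∨ b = q * a + 1}

/-- `Y` repeated `n` times in base `q`. -/
def erep (q Y : ℕ) : ℕ → ℕ
  | 0 => 0
  | n + 1 => Y + q * erep q Y n

theorem erep_lt {q Y : ℕ} (hY : Y < q) (n : ℕ) : erep q Y n + 1 ≤ q ^ n := by
  induction n with
  | zero => simp [erep]
  | succ n ih =>
    simp only [erep, pow_succ]
    nlinarith

theorem bset_fun {q : ℕ} (hq : 2 ≤ q) (n : ℕ) : ∀ N, N < q ^ n →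
    ∃ f : ℕ → ℕ, (∀ i, f i ∈ Bset q n) ∧ ∑ i ∈ Finset.range (q - 1), f i = N := by
  induction n with
  | zero =>
    intro N hN
    refine ⟨fun _ => 0, fun i => rfl, ?_⟩
    simp at hN
    simp [hN]
  | succ n ih =>
    intro N hN
    obtain ⟨f, hf, hs⟩ := ih (N / q) (by
      rw [Nat.div_lt_iff_lt_mul (by omega)]; rwa [pow_succ] at hN)
    refine ⟨fun i => q * f i + if i < N % q then 1 else 0, ?_, ?_⟩
    · intro i
      refine ⟨f i, hf i, ?_⟩
      by_cases h : i < N % q <;> simp [h]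
    · rw [Finset.sum_add_distrib, ← Finset.mul_sum, hs]
      have hlt : N % q < q := Nat.mod_lt _ (by omega)
      have : ∑ i ∈ Finset.range (q - 1), (if i < N % q then 1 else 0) = N % q := by
        rw [← Finset.sum_filter]
        have : (Finset.range (q - 1)).filter (fun i => i < N % q) = Finset.range (N % q) := by
          ext i; simp; omega
        rw [this]; simp
      rw [this]
      exact Nat.div_add_mod N q

theorem exactSum_fun {S : Set ℕ} (f : ℕ → ℕ) (hf : ∀ i, f i ∈ S) (r : ℕ) :
    ExactSum S r (∑ i ∈ Finset.range r, f i) := by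
  refine ⟨(List.range r).map f, by simp, ?_, ?_⟩
  · intro x hx
    obtain ⟨i, _, rfl⟩ := List.mem_map.1 hx
    exact hf i
  · rw [Finset.sum_range]
    rw [← Fin.sum_ofFn]
    congr 1
    apply List.ext_getElem <;> simp

theorem exactSum_ap {S : Set ℕ} {q c g n : ℕ} (hq : 2 ≤ q)
    (hS : ∀ a ∈ Bset q n, c + g * a ∈ S) (t : ℕ) : ∀ a, a ≤ t * (q ^ n - 1) →
    ExactSum S (t * (q - 1)) (t * ((q - 1) * c) + g * a) := by
  have hpos : 1 ≤ q ^ n := Nat.one_le_pow _ _ (by omega)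
  have one : ∀ N, N < q ^ n → ExactSum S (q - 1) ((q - 1) * c + g * N) := by
    intro N hN
    obtain ⟨f, hf, hs⟩ := bset_fun hq n N hN
    have := exactSum_fun (fun i => c + g * f i) (fun i => hS _ (hf i)) (q - 1)
    rw [Finset.sum_add_distrib, ← Finset.mul_sum, hs] at this
    simpa using this
  induction t with
  | zero =>
    intro a ha
    simp at ha
    subst ha
    exact ⟨[], by simp, by simp, by simp⟩
  | succ t ih =>
    intro a ha
    have key : ∃ b d, a = b + d ∧ b ≤ t * (q ^ n - 1) ∧ d < q ^ n := by
      rw [Nat.succ_mul] at ha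
      by_cases h : a ≤ t * (q ^ n - 1)
      · exact ⟨a, 0, rfl, h, by omega⟩
      · exact ⟨t * (q ^ n - 1), a - t * (q ^ n - 1), by omega, le_rfl, by omega⟩
    obtain ⟨b, d, rfl, hb, hd⟩ := key
    have := (ih b hb).add (one d hd)
    convert this using 1 <;> ring

theorem arith_main {S : Set ℕ} {q U V K X Y D : ℕ} (hq : 2 ≤ q) (hV : 1 ≤ V)
    (hVK : V < K) (hX : X < U) (hYD : Y + D < q) (hD : 1 ≤ D)
    (hS : ∀ n, ∀ a ∈ Bset q n, X + U * (erep q Y n + D * a) + U * q ^ n * V ∈ S)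
    (M : ℕ) (hM : U * q ^ 3 * K ^ 2 ≤ M) :
    ∃ r n, ExactSum S r n ∧ 1 ≤ r ∧ r ≤ 2 * q ^ 3 * K ∧ n ≤ M ∧ M < n + U * q := by
  have hU : 1 ≤ U := by omega
  set c : ℕ → ℕ := fun n => X + U * erep q Y n + U * q ^ n * V with hc
  have hcU : ∀ n, c n < U * q ^ n * (V + 1) := by
    intro n
    have := erep_lt (q := q) (Y := Y) (by omega) n
    have h2 := Nat.mul_le_mul_left U this
    simp only [hc]
    nlinarith
  have hcL : ∀ n, U * q ^ n * V ≤ c n := fun n => by simp only [hc]; omega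
  have hqp : ∀ n, 1 ≤ q ^ n := fun n => Nat.one_le_pow _ _ (by omega)
  obtain ⟨p, rfl⟩ : ∃ p, q = p + 1 := ⟨q - 1, by omega⟩
  have hp : 1 ≤ p := by omega
  set q := p + 1 with hqdef
  have hq1 : q - 1 = p := by omega
  set A : ℕ → ℕ := fun n => p * c n with hA
  have hcpos : ∀ n, q ^ n ≤ c n := by
    intro n
    refine le_trans ?_ (hcL n)
    calc q ^ n = 1 * q ^ n * 1 := by ring
      _ ≤ U * q ^ n * V := by gcongr
  have hcK : ∀ n, c n ≤ U * q ^ n * K := fun n => (hcU n).le.trans (by gcongr; omega)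
  set t0 := q * K with ht0
  have ht0pos : 1 ≤ t0 := by rw [ht0]; nlinarith
  have hAn : ∀ n, n < t0 * A n := by
    intro n
    calc n < q ^ n := Nat.lt_pow_self (by omega)
      _ = 1 * (1 * q ^ n) := by ring
      _ ≤ t0 * (p * c n) := by gcongr; exact hcpos n
  have h1 : t0 * A 1 ≤ M := by
    refine le_trans ?_ hM
    calc t0 * A 1 ≤ (q * K) * (q * (U * q ^ 1 * K)) := by
          simp only [hA, ht0]; gcongr
          · omega
          · exact hcK 1
      _ = U * q ^ 3 * K ^ 2 := by ring
  have hex : ∃ n, 1 ≤ n ∧ t0 * A n ≤ M ∧ M < t0 * A (n + 1) := by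
    by_contra hcon
    push Not at hcon
    have : ∀ n, t0 * A (n + 1) ≤ M := by
      intro n
      induction n with
      | zero => exact h1
      | succ n ih => exact hcon (n + 1) (by omega) ih
    have h2 := this M
    have h3 := hAn (M + 1)
    omega
  obtain ⟨n, hn, hlo, hhi⟩ := hex
  have hApos : 0 < A n := Nat.mul_pos hp (lt_of_lt_of_le (hqp n) (hcpos n))
  set t := M / A n with ht
  have htt0 : t0 ≤ t := (Nat.le_div_iff_mul_le hApos).2 hlo
  have hmod : A n * t + M % A n = M := Nat.div_add_mod M (A n)
  have hml : M % A n < A n := Nat.mod_lt _ hApos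
  set g := U * D with hg
  have hgpos : 0 < g := Nat.mul_pos hU hD
  set a := (M % A n) / g with ha
  have hamod : g * a + (M % A n) % g = M % A n := Nat.div_add_mod _ g
  have hgl : (M % A n) % g < g := Nat.mod_lt _ hgpos
  have hAt : A n ≤ t * (g * (q ^ n - 1)) := by
    have hqn : q ≤ q ^ n := Nat.le_self_pow (by omega) q
    obtain ⟨Q, hQ⟩ : ∃ Q, q ^ n = Q + 1 := ⟨q ^ n - 1, by have := hqp n; omega⟩
    have hpQ : p * (Q + 1) ≤ q * Q := by
      have : p ≤ Q := by omega
      rw [hqdef]; nlinarith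
    calc A n ≤ p * (U * q ^ n * K) := by simp only [hA]; gcongr; exact hcK n
      _ = (p * (Q + 1)) * (U * K) := by rw [hQ]; ring
      _ ≤ (q * Q) * (U * K) := by gcongr
      _ = t0 * (U * 1 * Q) := by rw [ht0]; ring
      _ ≤ t * (g * (q ^ n - 1)) := by
          rw [hQ, hg, Nat.add_sub_cancel]; gcongr
  have hale : a ≤ t * (q ^ n - 1) := by
    rw [ha]
    apply Nat.div_le_of_le_mul
    calc M % A n ≤ A n := hml.le
      _ ≤ _ := hAt
      _ = _ := by ring
  have hcS : ∀ b ∈ Bset q n, c n + g * b ∈ S := by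
    intro b hb
    have := hS n b hb
    convert this using 1
    simp only [hc, hg]; ring
  have hsum := exactSum_ap hq hcS t a hale
  rw [hq1] at hsum
  refine ⟨_, _, hsum, Nat.mul_pos (by omega) hp, ?_, ?_, ?_⟩
  · have hAA : A (n + 1) ≤ 2 * q * A n := by
      have : c (n + 1) ≤ 2 * q * c n := by
        calc c (n + 1) ≤ U * q ^ (n + 1) * (V + 1) := (hcU _).le
          _ ≤ U * q ^ (n + 1) * (V + V) := by gcongr
          _ = 2 * q * (U * q ^ n * V) := by ring
          _ ≤ 2 * q * c n := by gcongr; exact hcL n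
      calc p * c (n + 1) ≤ p * (2 * q * c n) := by gcongr
        _ = _ := by simp only [hA]; ring
    have htle : t ≤ t0 * (2 * q) := by
      rw [ht]
      apply Nat.div_le_of_le_mul
      calc M ≤ t0 * A (n + 1) := hhi.le
        _ ≤ t0 * (2 * q * A n) := by gcongr
        _ = _ := by ring
    calc t * p ≤ (t0 * (2 * q)) * q := by gcongr; omega
      _ = _ := by rw [ht0]; ring
  · have : t * (p * c n) = A n * t := by simp only [hA]; ring
    rw [this]; omega
  · have : t * (p * c n) = A n * t := by simp only [hA]; ring
    rw [this]
    have : g ≤ U * q := by rw [hg]; gcongr; omega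
    omega

section automaton
variable {k m : ℕ}

theorem short_word (M : DFA (Fin k) (Fin m)) (s : Fin m) :
    ∀ (n : ℕ) (w : List (Fin k)), w.length ≤ n →
      ∃ w', w'.length < m ∧ M.evalFrom s w' = M.evalFrom s w := by
  intro n
  induction n with
  | zero =>
    intro w hw
    exact ⟨w, by have := s.2; omega, rfl⟩
  | succ n ih =>
    intro w hw
    by_cases h : w.length < m
    · exact ⟨w, h, rfl⟩
    · obtain ⟨q, a, b, c, rfl, hl, hb, h1, h2, h3⟩ :=
        M.evalFrom_split (x := w) (s := s) (t := M.evalFrom s w) (by simpa using h) rfl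
      have hbl : 0 < b.length := List.length_pos_iff.2 hb
      obtain ⟨w', hw', he⟩ := ih (a ++ c) (by simp at hw ⊢; omega)
      refine ⟨w', hw', ?_⟩
      rw [he, DFA.evalFrom_of_append, h1, h3]

/-- Two distinct letters at a useful state both leading back to it. -/
def Branch (M : DFA (Fin k) (Fin m)) : Prop :=
  ∃ (p : Fin m) (c d : Fin k) (x w w' z : List (Fin k)), c ≠ d ∧ M.eval x = p ∧
    M.evalFrom p (c :: w) = p ∧ M.evalFrom p (d :: w') = p ∧ M.evalFrom p z ∈ M.accept

/-- Encoding of a word by last visit times. -/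
noncomputable def enc (M : DFA (Fin k) (Fin m)) (L : ℕ) (w : List (Fin k)) :
    Fin (L + 1) × (Fin m → Fin (L + 1) × Option (Fin k)) := by
  classical
  exact (Fin.ofNat (L + 1) w.length, fun s =>
    (Fin.ofNat (L + 1) (Nat.findGreatest (fun j => M.eval (w.take j) = s) L),
      w[Nat.findGreatest (fun j => M.eval (w.take j) = s) L]?))

theorem eval_return (M : DFA (Fin k) (Fin m)) (w : List (Fin k)) (i j : ℕ) (hi : i < w.length)
    (hij : i < j) (hs : M.eval (w.take j) = M.eval (w.take i)) :
    ∃ r, M.evalFrom (M.eval (w.take i)) (w[i] :: r) = M.eval (w.take i) := by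
  refine ⟨(w.drop (i + 1)).take (j - i - 1), ?_⟩
  conv_rhs => rw [← hs]
  have : w.take j = w.take i ++ (w[i] :: (w.drop (i + 1)).take (j - i - 1)) := by
    obtain ⟨e, rfl⟩ : ∃ e, j = i + (e + 1) := ⟨j - i - 1, by omega⟩
    rw [List.take_add, List.drop_eq_getElem_cons hi, List.take_succ_cons]
    congr 3
    omega
  rw [this, DFA.eval, DFA.evalFrom_of_append]

theorem enc_inj (M : DFA (Fin k) (Fin m)) (hB : ¬ Branch M) (L : ℕ) (w w' : List (Fin k))
    (hw : w ∈ M.accepts) (hl : w.length ≤ L) (hl' : w'.length ≤ L)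
    (h : enc M L w = enc M L w') : w = w' := by
  classical
  simp only [enc, Prod.mk.injEq] at h
  obtain ⟨h1, h2⟩ := h
  have ofn : ∀ a b : ℕ, a ≤ L → b ≤ L → Fin.ofNat (L + 1) a = Fin.ofNat (L + 1) b → a = b := by
    intro a b ha hb hab
    have := congrArg Fin.val hab
    simpa [Fin.ofNat, Nat.mod_eq_of_lt (show a < L + 1 by omega),
      Nat.mod_eq_of_lt (show b < L + 1 by omega)] using this
  have hlen := ofn _ _ hl hl' h1
  have main : ∀ i, i ≤ w.length → w.take i = w'.take i := by
    intro i
    induction i with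
    | zero => simp
    | succ i ih =>
      intro hi
      have hi1 : i < w.length := hi
      have hi2 : i < w'.length := by omega
      have ht := ih (by omega)
      rw [List.take_succ_eq_append_getElem hi1, List.take_succ_eq_append_getElem hi2, ht]
      congr 2
      have hs := congrFun h2 (M.eval (w.take i))
      simp only [Prod.mk.injEq] at hs
      obtain ⟨hs1, hs2⟩ := hs
      have hs1 := ofn _ _ (Nat.findGreatest_le _) (Nat.findGreatest_le _) hs1
      rw [← hs1] at hs2
      set j := Nat.findGreatest (fun j => M.eval (w.take j) = M.eval (w.take i)) L with hj
      have hij : i ≤ j := Nat.le_findGreatest (by omega) rfl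
      have hP : M.eval (w.take j) = M.eval (w.take i) :=
        Nat.findGreatest_spec (P := fun j => M.eval (w.take j) = M.eval (w.take i))
          (m := i) (by omega) rfl
      have hP' : M.eval (w'.take j) = M.eval (w.take i) := by
        rw [hs1]
        exact Nat.findGreatest_spec (P := fun j => M.eval (w'.take j) = M.eval (w.take i))
          (m := i) (by omega) (by rw [ht])
      rcases hij.eq_or_lt with hij | hij
      · rw [← hij] at hs2
        simpa [hi1, hi2] using hs2
      · by_contra hne
        apply hB
        obtain ⟨r, hr⟩ := eval_return M w i j hi1 hij hP
        obtain ⟨r', hr'⟩ := eval_return M w' i j hi2 hij (by rw [hP', ht])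
        refine ⟨M.eval (w.take i), w[i], w'[i], w.take i, r, r', w.drop i, hne, rfl, hr, ?_, ?_⟩
        · rw [ht]; exact hr'
        · have : M.eval (w.take i ++ w.drop i) ∈ M.accept := by
            rw [List.take_append_drop]; exact hw
          rwa [DFA.eval, DFA.evalFrom_of_append] at this
  have := main w.length le_rfl
  rw [List.take_length, hlen, List.take_length] at this
  exact this

theorem branch_of_not_sparse (hk : 2 ≤ k) (S : Set ℕ) (hns : ¬ IsSparse S)
    (M : DFA (Fin k) (Fin m))
    (hM : ∀ w : List (Fin k), w ∈ M.accepts ↔ ∃ s ∈ S, w.map Fin.val = Nat.digits k s) :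
    Branch M := by
  by_contra hB
  apply hns
  have hex : ∀ s : ℕ, ∃ w : List (Fin k), w.map Fin.val = Nat.digits k s := by
    intro s
    refine ⟨(Nat.digits k s).pmap (fun a ha => (⟨a, ha⟩ : Fin k))
      (fun a ha => Nat.digits_lt_base (by omega) ha), ?_⟩
    rw [List.map_pmap]
    simp
  choose wd hwd using hex
  have count : ∀ x : ℕ, 1 ≤ x → piCount S x ≤
      (Nat.log 2 x + 2) * ((Nat.log 2 x + 2) * (k + 1)) ^ m := by
    intro x hx
    set L := Nat.log 2 x + 1 with hL
    have hlen : ∀ s, s ≤ x → (wd s).length ≤ L := by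
      intro s hs
      have : (wd s).length = (Nat.digits k s).length := by rw [← hwd s]; simp
      rw [this]
      rw [Nat.digits_length_le_iff (by omega)]
      calc s ≤ x := hs
        _ < 2 ^ L := Nat.lt_pow_succ_log_self (by norm_num) x
        _ ≤ k ^ L := Nat.pow_le_pow_left hk L
    have hinj : Set.InjOn (fun s => enc M L (wd s)) {n | n ∈ S ∧ n ≤ x} := by
      intro s hs s' hs' he
      have := enc_inj M hB L (wd s) (wd s') ((hM _).2 ⟨s, hs.1, hwd s⟩) (hlen s hs.2)
        (hlen s' hs'.2) he
      have h2 : Nat.digits k s = Nat.digits k s' := by rw [← hwd s, ← hwd s', this]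
      exact Nat.digits_inj_iff.1 h2
    have := Set.ncard_le_ncard_of_injOn (t := Set.univ) _ (fun a _ => Set.mem_univ _) hinj
      (Set.finite_univ)
    rw [Set.ncard_univ, Nat.card_eq_fintype_card] at this
    simpa [Fintype.card_prod, piCount] using this
  refine ⟨m + 1, 4 ^ (m + 1) * ((k : ℝ) + 1) ^ m, by positivity, 3, ?_⟩
  intro x hx
  have hx3 : (3 : ℝ) ≤ x := by exact_mod_cast hx
  have hlog1 : 1 ≤ Real.log x := by
    rw [Real.le_log_iff_exp_le (by linarith)]
    linarith [Real.exp_one_lt_d9]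
  have hlog : ((Nat.log 2 x : ℕ) : ℝ) ≤ 2 * Real.log x := by
    have h1 : (2 : ℝ) ^ (Nat.log 2 x) ≤ x := by
      exact_mod_cast Nat.pow_log_le_self 2 (by omega)
    have h2 := Real.log_le_log (by positivity) h1
    rw [Real.log_pow] at h2
    have h3 := Real.log_two_gt_d9
    have h4 : (0 : ℝ) ≤ (Nat.log 2 x : ℕ) := by positivity
    nlinarith
  have h1 : ((Nat.log 2 x : ℕ) : ℝ) + 2 ≤ 4 * Real.log x := by linarith
  have hc : (piCount S x : ℝ) ≤
      ((Nat.log 2 x : ℕ) + 2) * ((((Nat.log 2 x : ℕ) : ℝ) + 2) * (k + 1)) ^ m := by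
    exact_mod_cast count x (by omega)
  calc (piCount S x : ℝ) ≤ _ := hc
    _ ≤ (4 * Real.log x) * ((4 * Real.log x) * (k + 1)) ^ m := by gcongr
    _ = _ := by rw [mul_pow, mul_pow, pow_succ, pow_succ]; ring

/-- value of a word -/
def wval (w : List (Fin k)) : ℕ := Nat.ofDigits k (w.map Fin.val)

theorem wval_append (a b : List (Fin k)) : wval (a ++ b) = wval a + k ^ a.length * wval b := by
  simp [wval, Nat.ofDigits_append]

theorem wval_lt (hk : 2 ≤ k) (a : List (Fin k)) : wval a < k ^ a.length := by
  have := Nat.ofDigits_lt_base_pow_length (b := k) (l := a.map Fin.val) (by omega)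
    (by intro x hx; obtain ⟨i, _, rfl⟩ := List.mem_map.1 hx; exact i.2)
  simpa [wval] using this

theorem wval_words (M : DFA (Fin k) (Fin m)) (p : Fin m) (y z : List (Fin k))
    (hl : y.length = z.length) (hy : M.evalFrom p y = p) (hz : M.evalFrom p z = p)
    (hlt : wval y ≤ wval z) (n : ℕ) : ∀ a ∈ Bset (k ^ y.length) n,
    ∃ w, M.evalFrom p w = p ∧ w.length = n * y.length ∧
      wval w = erep (k ^ y.length) (wval y) n + (wval z - wval y) * a := by
  induction n with
  | zero =>
    intro a ha
    have : a = 0 := ha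
    subst this
    exact ⟨[], rfl, by simp, by simp [wval, erep]⟩
  | succ n ih =>
    rintro b ⟨a, ha, hb⟩
    obtain ⟨w, h1, h2, h3⟩ := ih a ha
    rcases hb with rfl | rfl
    · refine ⟨y ++ w, by rw [DFA.evalFrom_of_append, hy, h1], by simp [h2]; ring, ?_⟩
      rw [wval_append, h3, erep]; ring
    · refine ⟨z ++ w, by rw [DFA.evalFrom_of_append, hz, h1], by simp [h2, hl]; ring, ?_⟩
      obtain ⟨e, he⟩ := Nat.exists_eq_add_of_le hlt
      rw [wval_append, h3, erep, ← hl, he, Nat.add_sub_cancel_left]; ring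

theorem structured (hk : 2 ≤ k) (S : Set ℕ) (hns : ¬ IsSparse S)
    (M : DFA (Fin k) (Fin m))
    (hM : ∀ w : List (Fin k), w ∈ M.accepts ↔ ∃ s ∈ S, w.map Fin.val = Nat.digits k s) :
    1 ≤ m ∧ ∃ (p : Fin m) (u y z v : List (Fin k)), y.length = z.length ∧ 1 ≤ y.length ∧
      u.length ≤ m ∧ y.length ≤ 2 * m ∧ v.length ≤ 2 * m ∧ 1 ≤ v.length ∧
      wval y < wval z ∧ M.eval u = p ∧ M.evalFrom p y = p ∧ M.evalFrom p z = p ∧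
      M.evalFrom p v ∈ M.accept := by
  obtain ⟨p, c, d, x, w, w', z, hcd, hx, hw, hw', hz⟩ := branch_of_not_sparse hk S hns M hM
  refine ⟨by have := p.2; omega, p, ?_⟩
  obtain ⟨u, hu, hu'⟩ := short_word M M.start _ x le_rfl
  obtain ⟨r, hr, hr'⟩ := short_word M (M.step p c) _ w le_rfl
  obtain ⟨r2, hr2, hr2'⟩ := short_word M (M.step p d) _ w' le_rfl
  obtain ⟨v, hv, hv'⟩ := short_word M p _ z le_rfl
  have hw : M.evalFrom p (c :: r) = p := by
    rw [DFA.evalFrom_cons, hr']; exact hw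
  have hw' : M.evalFrom p (d :: r2) = p := by
    rw [DFA.evalFrom_cons, hr2']; exact hw'
  have hp : M.eval u = p := by rw [DFA.eval, hu']; exact hx
  have hya : M.evalFrom p ((c :: r) ++ (d :: r2)) = p := by
    rw [DFA.evalFrom_of_append, hw, hw']
  have hza : M.evalFrom p ((d :: r2) ++ (c :: r)) = p := by
    rw [DFA.evalFrom_of_append, hw', hw]
  have hva : M.evalFrom p ((c :: r) ++ v) ∈ M.accept := by
    rw [DFA.evalFrom_of_append, hw, hv']; exact hz
  have hne : wval ((c :: r) ++ (d :: r2)) ≠ wval ((d :: r2) ++ (c :: r)) := by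
    intro h
    have h2 := congrArg (· % k) h
    simp [wval, Nat.ofDigits_cons, Nat.add_mod, Nat.mod_eq_of_lt c.2,
      Nat.mod_eq_of_lt d.2] at h2
    exact hcd (Fin.ext h2)
  rcases lt_or_gt_of_ne hne with hlt | hlt
  · exact ⟨u, _, _, (c :: r) ++ v, by simp; omega, by simp, hu.le, by simp; omega,
      by simp; omega, by simp, hlt, hp, hya, hza, hva⟩
  · exact ⟨u, _, _, (c :: r) ++ v, by simp; omega, by simp, hu.le, by simp; omega,
      by simp; omega, by simp, hlt, hp, hza, hya, hva⟩

theorem first_part (hk : 2 ≤ k) (S : Set ℕ) (hns : ¬ IsSparse S)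
    (M : DFA (Fin k) (Fin m))
    (hM : ∀ w : List (Fin k), w ∈ M.accepts ↔ ∃ s ∈ S, w.map Fin.val = Nat.digits k s)
    (Mn : ℕ) : ∃ n : ℕ, SumOfAtMost S (k ^ (11 * m + 1)) n ∧
        |(Mn : ℤ) - (n : ℤ)| < (k : ℤ) ^ (12 * m + 1) := by
  obtain ⟨hm, p, u, y, z, v, hyz, hy1, hu, hy, hv, hv1, hlt, hp, hpy, hpz, hpv⟩ :=
    structured hk S hns M hM
  have hmem : ∀ w, M.evalFrom p w = p → wval (u ++ w ++ v) ∈ S ∧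
      (Nat.digits k (wval (u ++ w ++ v))).length = (u ++ w ++ v).length := by
    intro w hw
    have : u ++ w ++ v ∈ M.accepts := by
      show M.eval _ ∈ M.accept
      rw [DFA.eval, DFA.evalFrom_of_append, DFA.evalFrom_of_append]
      change M.evalFrom (M.evalFrom (M.eval u) w) v ∈ _
      rw [hp, hw]; exact hpv
    obtain ⟨s, hs, hd⟩ := (hM _).1 this
    have hsv : wval (u ++ w ++ v) = s := by rw [wval, hd, Nat.ofDigits_digits]
    rw [hsv]
    exact ⟨hs, by rw [← hd]; simp⟩
  have hk1 : 1 ≤ k := by omega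
  have hV : 1 ≤ wval v := by
    by_contra h0
    have h0 : wval v = 0 := by omega
    have h1 := (hmem [] rfl).2
    rw [List.append_nil, wval_append, h0, Nat.mul_zero, Nat.add_zero] at h1
    have h2 := (Nat.digits_length_le_iff (b := k) (by omega) (k := u.length) (wval u)).2
      (wval_lt hk u)
    simp at h1
    omega
  have hq : 2 ≤ k ^ y.length := hk.trans (Nat.le_self_pow (by omega) k)
  have hzl := wval_lt hk z
  rw [← hyz] at hzl
  have hS : ∀ n, ∀ a ∈ Bset (k ^ y.length) n, wval u + k ^ u.length *
      (erep (k ^ y.length) (wval y) n + (wval z - wval y) * a) +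
        k ^ u.length * (k ^ y.length) ^ n * wval v ∈ S := by
    intro n a ha
    obtain ⟨w, h1, h2, h3⟩ := wval_words M p y z hyz hpy hpz hlt.le n a ha
    have := (hmem w h1).1
    convert this using 1
    rw [wval_append, wval_append, h3, List.length_append, h2, pow_add, ← pow_mul,
      mul_comm n]
  by_cases hbig : k ^ u.length * (k ^ y.length) ^ 3 * (k ^ v.length) ^ 2 ≤ Mn
  · obtain ⟨r, n, ⟨l, hl1, hl2, hl3⟩, hr1, hr2, hn1, hn2⟩ := arith_main (S := S) hq hV
      (wval_lt hk v) (wval_lt hk u) (Y := wval y) (D := wval z - wval y) (by omega) (by omega) hS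
      Mn hbig
    refine ⟨n, ⟨l, ?_, ?_, hl2, hl3⟩, ?_⟩
    · rintro rfl
      simp at hl1; omega
    · rw [hl1]
      refine hr2.trans ?_
      calc 2 * (k ^ y.length) ^ 3 * k ^ v.length
          ≤ k * (k ^ y.length) ^ 3 * k ^ v.length := by gcongr
        _ = k ^ (1 + y.length * 3 + v.length) := by rw [pow_add, pow_add, pow_mul, pow_one]
        _ ≤ _ := Nat.pow_le_pow_right hk1 (by omega)
    · have : k ^ u.length * k ^ y.length ≤ k ^ (12 * m + 1) := by
        rw [← pow_add]; exact Nat.pow_le_pow_right hk1 (by omega)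
      zify at *
      rw [abs_lt]
      constructor <;> linarith
  · obtain ⟨hc, -⟩ := hmem [] rfl
    have hcl := wval_lt hk (u ++ [] ++ v)
    refine ⟨wval (u ++ [] ++ v), ⟨[wval (u ++ [] ++ v)], by simp, ?_, ?_, List.sum_singleton⟩, ?_⟩
    · simpa using Nat.one_le_pow _ _ hk1
    · simpa using hc
    · have h1 : k ^ (u ++ [] ++ v).length ≤ k ^ (12 * m + 1) :=
        Nat.pow_le_pow_right hk1 (by simp; omega)
      have h2 : k ^ u.length * (k ^ y.length) ^ 3 * (k ^ v.length) ^ 2 ≤ k ^ (12 * m + 1) := by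
        rw [← pow_mul, ← pow_mul, ← pow_add, ← pow_add]
        exact Nat.pow_le_pow_right hk1 (by omega)
      have h3 : wval (u ++ [] ++ v) < k ^ (12 * m + 1) := by omega
      have h4 : Mn < k ^ (12 * m + 1) := by omega
      zify at h3 h4
      rw [abs_lt]
      constructor <;> linarith [Int.natCast_nonneg Mn, Int.natCast_nonneg (wval (u ++ [] ++ v))]

end automaton

/-- If `S` is a non-sparse `k`-automatic set accepted (via base-`k` expansions) by a DFA
with `m` states, and `T` is the set of sums of at most `k^(11m+1)` elements of `S`, then
every `M > k^(7m+1)` is within distance `k^(12m+1)` of an element of `T`; in particular,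
`T` is `2k^(12m+1)`-syndetic. -/
theorem sums_syndetic
    (k m : ℕ) (hk : 2 ≤ k) (S : Set ℕ) (hns : ¬ IsSparse S)
    (M : DFA (Fin k) (Fin m))
    (hM : ∀ w : List (Fin k), w ∈ M.accepts ↔ ∃ s ∈ S, w.map Fin.val = Nat.digits k s) :
    (∀ Mn : ℕ, k ^ (7 * m + 1) < Mn →
      ∃ n : ℕ, SumOfAtMost S (k ^ (11 * m + 1)) n ∧
        |(Mn : ℤ) - (n : ℤ)| < (k : ℤ) ^ (12 * m + 1))
    ∧ (∀ n : ℕ, SumOfAtMost S (k ^ (11 * m + 1)) n →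
        ∃ i : ℕ, 1 ≤ i ∧ i ≤ 2 * k ^ (12 * m + 1) ∧
          SumOfAtMost S (k ^ (11 * m + 1)) (n + i)) := by
  have h1 := first_part hk S hns M hM
  refine ⟨fun Mn _ => h1 Mn, ?_⟩
  intro n _
  obtain ⟨n', hn', habs⟩ := h1 (n + k ^ (12 * m + 1))
  rw [abs_lt] at habs
  obtain ⟨ha, hb⟩ := habs
  push_cast at ha hb
  have hlt : n < n' := by zify; linarith
  have hle : n' ≤ n + 2 * k ^ (12 * m + 1) := by zify; linarith
  refine ⟨n' - n, by omega, by omega, ?_⟩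
  rwa [Nat.add_sub_cancel' hlt.le]
end
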